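/- (Simultaneous embedding over an algebraically closed base.) Let k be an algebraically closed field. For i = 1, 2 let D_i be a division ring, finite-dimensional over its center K_i, where K_i is a field extension of k that is finitely generated as a field extension of k. Then there exists a division ring E, finite-dimensional over its center, together with injective k-algebra homomorphisms D₁ → E and D₂ → E. -/

import Mathlib

/-- A division algebra over `k`: a division ring, finite-dimensional over its center,
equipped with a `k`-algebra structure. -/
structure FinDimDivisionAlgebraOver (k : Type) [Field k] : Type 1 where
  carrier : Type
  [divisionRing : DivisionRing carrier]
  [algebra : Algebra k carrier]
  [finiteDimensional : FiniteDimensional (Subring.center carrier) carrier]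

attribute [instance] FinDimDivisionAlgebraOver.divisionRing
attribute [instance] FinDimDivisionAlgebraOver.algebra
attribute [instance] FinDimDivisionAlgebraOver.finiteDimensional



namespace CE

/-! ### Hilbert series of upper sets in `ℕ^M` -/

section Hilb

/-- Hilbert series of a set of exponents. -/
noncomputable def hilb {M : ℕ} (J : Set (Fin M → ℕ)) : PowerSeries ℤ :=
  PowerSeries.mk fun j => ((Set.ncard {μ | μ ∈ J ∧ ∑ i, μ i = j} : ℕ) : ℤ)

theorem level_finite {M : ℕ} (J : Set (Fin M → ℕ)) (j : ℕ) :
    {μ | μ ∈ J ∧ ∑ i, μ i = j}.Finite := by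
  apply Set.Finite.subset (Set.finite_Iic (fun _ : Fin M => j))
  rintro μ ⟨_, h⟩ i
  rw [← h]
  exact Finset.single_le_sum (f := μ) (fun _ _ => Nat.zero_le _) (Finset.mem_univ i)

theorem hilb_step {M : ℕ} (J : Set (Fin (M + 1) → ℕ)) :
    hilb J = hilb {ν : Fin M → ℕ | Fin.cons 0 ν ∈ J}
      + PowerSeries.X * hilb {μ : Fin (M+1) → ℕ | μ + (Pi.single 0 1 : Fin (M+1) → ℕ) ∈ J} := by
  ext j
  simp only [map_add, hilb, PowerSeries.coeff_mk]
  have h0 : Set.ncard {μ : Fin (M+1) → ℕ | μ ∈ J ∧ ∑ i, μ i = j}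
      = Set.ncard {ν : Fin M → ℕ | Fin.cons 0 ν ∈ J ∧ ∑ i, ν i = j}
       + Set.ncard {μ : Fin (M+1) → ℕ | (μ ∈ J ∧ ∑ i, μ i = j) ∧ μ 0 ≠ 0} := by
    have e : {μ : Fin (M+1) → ℕ | μ ∈ J ∧ ∑ i, μ i = j} =
        (fun ν : Fin M → ℕ => (Fin.cons 0 ν : Fin (M+1) → ℕ)) ''
            {ν : Fin M → ℕ | Fin.cons 0 ν ∈ J ∧ ∑ i, ν i = j}
        ∪ {μ : Fin (M+1) → ℕ | (μ ∈ J ∧ ∑ i, μ i = j) ∧ μ 0 ≠ 0} := by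
      ext μ
      constructor
      · rintro ⟨h1, h2⟩
        by_cases h : μ 0 = 0
        · left
          have hc : (Fin.cons 0 (Fin.tail μ) : Fin (M+1) → ℕ) = μ := by
            rw [← h]; exact Fin.cons_self_tail μ
          refine ⟨Fin.tail μ, ⟨by rw [hc]; exact h1, ?_⟩, hc⟩
          rw [Fin.sum_univ_succ, h, zero_add] at h2
          exact h2
        · right; exact ⟨⟨h1, h2⟩, h⟩
      · rintro (⟨ν, ⟨h1, h2⟩, rfl⟩ | h)
        · exact ⟨h1, by simpa [Fin.sum_univ_succ] using h2⟩
        · exact h.1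
    rw [e, Set.ncard_union_eq ?_ ?_ ?_]
    · rw [Set.ncard_image_of_injective]
      intro a b h
      exact (Fin.cons_injective2 h).2
    · rw [Set.disjoint_left]
      rintro _ ⟨ν, _, rfl⟩ h
      exact h.2 (by simp)
    · exact (level_finite {ν : Fin M → ℕ | Fin.cons 0 ν ∈ J} j).image _
    · exact (level_finite J j).subset (fun _ h => h.1)
  rw [h0]
  push_cast
  congr 1
  cases j with
  | zero =>
    have : {μ : Fin (M+1) → ℕ | (μ ∈ J ∧ ∑ i, μ i = 0) ∧ μ 0 ≠ 0} = ∅ := by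
      ext μ
      simp only [Set.mem_ofPred_eq, Set.mem_empty_iff_false, iff_false]
      rintro ⟨⟨_, h⟩, h'⟩
      rw [Fin.sum_univ_succ] at h
      omega
    rw [this]
    simp
  | succ j =>
    rw [PowerSeries.coeff_succ_X_mul, PowerSeries.coeff_mk]
    congr 1
    rw [← Set.ncard_image_of_injective {μ : Fin (M+1) → ℕ | μ ∈ {μ : Fin (M+1) → ℕ | μ + (Pi.single 0 1 : Fin (M+1) → ℕ) ∈ J} ∧ ∑ i, μ i = j}
      (add_left_injective (Pi.single 0 1 : Fin (M+1) → ℕ))]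
    congr 1
    ext μ
    constructor
    · rintro ⟨⟨h1, h2⟩, h3⟩
      have e : (μ - (Pi.single 0 1 : Fin (M+1) → ℕ)) + (Pi.single 0 1 : Fin (M+1) → ℕ) = μ := by
        funext i
        by_cases hi : i = 0
        · subst hi; simp; omega
        · simp [hi]
      refine ⟨μ - (Pi.single 0 1 : Fin (M+1) → ℕ), ⟨by simpa [e] using h1, ?_⟩, e⟩
      rw [← e] at h2
      simp only [Pi.add_apply, Finset.sum_add_distrib, Finset.sum_pi_single', Finset.mem_univ, if_true] at h2
      simpa using h2
    · rintro ⟨ν, ⟨h1, h2⟩, rfl⟩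
      refine ⟨⟨h1, ?_⟩, by simp⟩
      simp [Finset.sum_add_distrib, h2]

theorem exists_stable {M : ℕ} (J : Set (Fin (M + 1) → ℕ)) (hJ : IsUpperSet J) :
    ∃ A : ℕ, ∀ μ, μ + (Pi.single 0 (A + 1) : Fin (M+1) → ℕ) ∈ J → μ + (Pi.single 0 A : Fin (M+1) → ℕ) ∈ J := by
  have hw : WellQuasiOrderedLE (Fin (M+1) → ℕ) := by
    infer_instance
  have hfin : {μ | Minimal (· ∈ J) μ}.Finite := by
    apply WellQuasiOrderedLE.finite_of_isAntichain
    exact setOfPred_minimal_antichain _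
  obtain ⟨A, hA⟩ := (hfin.image (fun μ => μ 0)).bddAbove
  refine ⟨A, fun μ h => ?_⟩
  obtain ⟨m, hm, hmin⟩ := exists_minimal_le_of_wellFoundedLT (· ∈ J) _ h
  refine hJ ?_ hmin.prop
  intro i
  have h1 := hm i
  by_cases hi : i = 0
  · subst hi
    have : m 0 ≤ A := hA ⟨m, hmin, rfl⟩
    simp; omega
  · simpa [hi] using h1

open Polynomial in
theorem hilb_poly (M : ℕ) : ∀ (J : Set (Fin M → ℕ)), IsUpperSet J →
    ∃ Q : ℤ[X], (1 - PowerSeries.X) ^ M * hilb J = (Q : PowerSeries ℤ) ∧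
      (J.Nonempty → Q.eval 1 = 1) ∧ (¬ J.Nonempty → Q.eval 1 = 0) := by
  induction M with
  | zero =>
    intro J hJ
    by_cases h : J.Nonempty
    · refine ⟨1, ?_, by simp, by simp [h]⟩
      have : J = Set.univ := by
        obtain ⟨x, hx⟩ := h
        ext y; simp [Subsingleton.elim y x, hx]
      subst this
      ext j
      simp only [hilb, pow_zero, one_mul, PowerSeries.coeff_mk, Polynomial.coe_one, PowerSeries.coeff_one]
      by_cases hj : j = 0
      · subst hj; simp
      · have : {μ : Fin 0 → ℕ | μ ∈ Set.univ ∧ ∑ i, μ i = j} = ∅ := by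
          ext μ; simp; omega
        rw [this]; simp [hj]
    · refine ⟨0, ?_, by simp [h], by simp⟩
      rw [Set.not_nonempty_iff_eq_empty] at h
      subst h
      ext j
      simp [hilb]
  | succ M ih =>
    intro J hJ
    obtain ⟨A, hA⟩ := exists_stable J hJ
    have up0 : ∀ J : Set (Fin (M + 1) → ℕ), IsUpperSet J →
        IsUpperSet {ν : Fin M → ℕ | (Fin.cons 0 ν : Fin (M+1) → ℕ) ∈ J} := by
      intro J hJ a b hab h
      refine hJ ?_ h
      exact Fin.cons_le_cons.2 ⟨le_rfl, hab⟩
    induction A generalizing J with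
    | zero =>
      have hJ' : {μ : Fin (M+1) → ℕ | μ + (Pi.single 0 1 : Fin (M+1) → ℕ) ∈ J} = J := by
        ext μ
        constructor
        · intro h
          have := hA μ (by simpa using h)
          simpa using this
        · intro h
          exact hJ (by simp) h
      have hs := hilb_step J
      rw [hJ'] at hs
      obtain ⟨Q, hQ, h1, h2⟩ := ih _ (up0 J hJ)
      have hn : {ν : Fin M → ℕ | (Fin.cons 0 ν : Fin (M+1) → ℕ) ∈ J}.Nonempty ↔ J.Nonempty := by
        constructor
        · rintro ⟨ν, h⟩; exact ⟨_, h⟩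
        · rintro ⟨μ, h⟩
          have key : ∀ (a : ℕ) (ν : Fin M → ℕ), (Fin.cons a ν : Fin (M+1) → ℕ) ∈ J →
              (Fin.cons 0 ν : Fin (M+1) → ℕ) ∈ J := by
            intro a ν
            induction a with
            | zero => exact id
            | succ a iha =>
              intro h
              apply iha
              have : (Fin.cons a ν : Fin (M+1) → ℕ) + (Pi.single 0 1 : Fin (M+1) → ℕ) ∈ J := by
                convert h using 1
                funext i
                refine Fin.cases ?_ (fun i => ?_) i <;> simp
              rw [← hJ']; exact this
          refine ⟨Fin.tail μ, key (μ 0) _ ?_⟩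
          rw [Fin.cons_self_tail]; exact h
      rw [hn] at h1 h2
      refine ⟨Q, ?_, h1, h2⟩
      rw [← hQ, pow_succ, mul_assoc]
      congr 1
      rw [sub_mul, one_mul, sub_eq_iff_eq_add]
      exact hs
    | succ A ihA =>
      obtain ⟨Q, hQ, -, -⟩ := ih _ (up0 J hJ)
      have hJu : IsUpperSet {μ : Fin (M+1) → ℕ | μ + (Pi.single 0 1 : Fin (M+1) → ℕ) ∈ J} := by
        intro a b hab h
        exact hJ (by gcongr) h
      obtain ⟨Q', hQ', h1, h2⟩ := ihA {μ : Fin (M+1) → ℕ | μ + (Pi.single 0 1 : Fin (M+1) → ℕ) ∈ J} hJu (by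
        intro μ h
        have := hA μ (by
          have h' : _ ∈ J := h
          rw [add_assoc, ← Pi.single_add] at h'
          exact h')
        show _ ∈ J
        rw [add_assoc, ← Pi.single_add]
        exact this)
      have hn : {μ : Fin (M+1) → ℕ | μ + (Pi.single 0 1 : Fin (M+1) → ℕ) ∈ J}.Nonempty ↔ J.Nonempty := by
        constructor
        · rintro ⟨μ, h⟩; exact ⟨_, h⟩
        · rintro ⟨μ, h⟩; exact ⟨μ, hJ (by simp) h⟩
      rw [hn] at h1 h2
      refine ⟨(1 - X) * Q + X * Q', ?_, ?_, ?_⟩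
      · rw [hilb_step J, mul_add, pow_succ]
        push_cast
        rw [← hQ, ← hQ', pow_succ]
        ring
      · intro h; simp [h1 h]
      · intro h; simp [h2 h]

/-- If all the coefficients of the sum of Hilbert series are divisible by `q`, so is the number
of nonempty upper sets. -/
theorem dvd_card_nonempty {M : ℕ} {ι : Type*} [Fintype ι] (J : ι → Set (Fin M → ℕ))
    (hJ : ∀ i, IsUpperSet (J i)) (q : ℕ)
    (h : ∀ j : ℕ, q ∣ ∑ i, Set.ncard {μ | μ ∈ J i ∧ ∑ l, μ l = j}) :
    q ∣ Set.ncard {i | (J i).Nonempty} := by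
  classical
  choose Q hQ h1 h0 using fun i => hilb_poly M (J i) (hJ i)
  have hz : (∑ i, (Q i).map (Int.castRingHom (ZMod q))) = 0 := by
    apply Polynomial.coe_injective
    have hm : PowerSeries.map (Int.castRingHom (ZMod q)) (∑ i, hilb (J i)) = 0 := by
      ext j
      simp only [hilb, PowerSeries.coeff_map, map_sum, PowerSeries.coeff_mk, map_zero]
      have := (ZMod.natCast_eq_zero_iff _ _).2 (h j)
      push_cast at this
      simpa using this
    have e : PowerSeries.map (Int.castRingHom (ZMod q)) ((1 - PowerSeries.X) ^ M * ∑ i, hilb (J i))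
        = ((∑ i, (Q i).map (Int.castRingHom (ZMod q)) : Polynomial (ZMod q)) : PowerSeries (ZMod q)) := by
      rw [Finset.mul_sum]
      simp_rw [hQ]
      rw [map_sum]
      have : ∀ (s : Finset ι) (f : ι → Polynomial (ZMod q)), ((∑ i ∈ s, f i : Polynomial (ZMod q)) : PowerSeries (ZMod q)) = ∑ i ∈ s, (f i : PowerSeries (ZMod q)) := by
        intro s f
        exact map_sum (Polynomial.coeToPowerSeries.ringHom) f s
      rw [this]
      simp [Polynomial.polynomial_map_coe]
    rw [← e, map_mul, hm, mul_zero, Polynomial.coe_zero]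
  have := congrArg (Polynomial.eval 1) hz
  rw [Polynomial.eval_finsetSum] at this
  rw [← ZMod.natCast_eq_zero_iff, Set.ncard_eq_toFinset_card']
  rw [← Polynomial.eval_zero (R := ZMod q) (x := 1), ← this]
  rw [Finset.card_eq_sum_ones, Nat.cast_sum, Set.toFinset_ofPred, Finset.sum_filter]
  refine Finset.sum_congr rfl fun i _ => ?_
  have hv : Polynomial.eval 1 ((Q i).map (Int.castRingHom (ZMod q))) = (((Q i).eval 1 : ℤ) : ZMod q) := by
    have := Polynomial.eval_map_apply (f := Int.castRingHom (ZMod q)) (p := Q i) 1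
    simpa using this
  rw [hv]
  split_ifs with hi
  · simp [h1 i hi]
  · simp [h0 i hi]

end Hilb

end CE

namespace CE

section Lead
variable {K : Type*} [Field K]

theorem lead_fin : ∀ (n : ℕ) (V : Submodule K (Fin n → K)),
    Module.finrank K V = Set.ncard {i | ∃ v ∈ V, v i ≠ 0 ∧ ∀ l, l < i → v l = 0} := by
  intro n
  induction n with
  | zero =>
    intro V
    have : {i : Fin 0 | ∃ v ∈ V, v i ≠ 0 ∧ ∀ l, l < i → v l = 0} = ∅ := by
      ext i; exact i.elim0
    rw [this, Set.ncard_empty]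
    exact Module.finrank_zero_of_subsingleton
  | succ n ih =>
    intro V
    let f : V →ₗ[K] K := (LinearMap.proj (R := K) (φ := fun _ : Fin (n+1) => K) 0).domRestrict V
    let ins : (Fin n → K) →ₗ[K] (Fin (n+1) → K) :=
      { toFun := fun x => Fin.cons 0 x
        map_add' := by
          intro x y; funext i
          refine Fin.cases ?_ (fun i => ?_) i <;> simp
        map_smul' := by
          intro c x; funext i
          refine Fin.cases ?_ (fun i => ?_) i <;> simp }
    have hins : ∀ x, ins x = Fin.cons 0 x := fun _ => rfl
    have hker : Module.finrank K (LinearMap.ker f) = Module.finrank K (V.comap ins) := by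
      have e1 : (LinearMap.ker f).map V.subtype = (V.comap ins).map ins := by
        ext v
        simp only [Submodule.mem_map, LinearMap.mem_ker, Submodule.mem_comap]
        constructor
        · rintro ⟨w, hw, rfl⟩
          refine ⟨Fin.tail w.1, ?_, ?_⟩
          · have : ins (Fin.tail w.1) = w.1 := by
              rw [hins]
              have h0 : w.1 0 = 0 := hw
              rw [← h0]; exact Fin.cons_self_tail _
            rw [this]; exact w.2
          · rw [hins]
            have h0 : w.1 0 = 0 := hw
            rw [← h0]; exact Fin.cons_self_tail _
        · rintro ⟨x, hx, rfl⟩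
          exact ⟨⟨ins x, hx⟩, rfl, rfl⟩
      have hinj : Function.Injective ins := by
        intro a b h
        have h' : (Fin.cons 0 a : Fin (n+1) → K) = Fin.cons 0 b := h
        exact (Fin.cons_injective2 h').2
      rw [(Submodule.equivMapOfInjective V.subtype V.injective_subtype _).finrank_eq,
        (Submodule.equivMapOfInjective ins hinj _).finrank_eq, e1]
    rw [← LinearMap.finrank_range_add_finrank_ker f, hker, ih]
    have hS : {i : Fin (n+1) | ∃ v ∈ V, v i ≠ 0 ∧ ∀ l, l < i → v l = 0}
        = {i : Fin (n+1) | i = 0 ∧ ∃ v ∈ V, v 0 ≠ 0} ∪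
          Fin.succ '' {i | ∃ v ∈ V.comap ins, v i ≠ 0 ∧ ∀ l, l < i → v l = 0} := by
      ext i
      constructor
      · rintro ⟨v, hv, h1, h2⟩
        revert h1 h2
        refine Fin.cases ?_ (fun i => ?_) i
        · intro h1 _
          left; exact ⟨rfl, v, hv, h1⟩
        · intro h1 h2
          right
          have : ins (Fin.tail v) = v := by
            rw [hins]
            have h0 : v 0 = 0 := h2 0 (Fin.succ_pos i)
            rw [← h0]; exact Fin.cons_self_tail _
          refine ⟨i, ⟨Fin.tail v, ?_, h1, fun l hl => h2 l.succ (Fin.succ_lt_succ_iff.2 hl)⟩, rfl⟩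
          rw [Submodule.mem_comap, this]; exact hv
      · rintro (⟨rfl, v, hv, h⟩ | ⟨i, ⟨v, hv, h1, h2⟩, rfl⟩)
        · exact ⟨v, hv, h, fun l hl => absurd hl (Fin.not_lt_zero l)⟩
        · refine ⟨ins v, hv, by simpa [hins] using h1, fun l => ?_⟩
          refine Fin.cases ?_ (fun l => ?_) l
          · intro _; simp [hins]
          · intro hl; simpa [hins] using h2 l (Fin.succ_lt_succ_iff.1 hl)
    rw [hS, Set.ncard_union_eq ?_ (Set.toFinite _) (Set.toFinite _),
      Set.ncard_image_of_injective _ (Fin.succ_injective n)]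
    · congr 1
      by_cases h : ∃ v ∈ V, v 0 ≠ 0
      · have : {i : Fin (n+1) | i = 0 ∧ ∃ v ∈ V, v 0 ≠ 0} = {0} := by
          ext i; simp [h]
        rw [this, Set.ncard_singleton]
        obtain ⟨v, hv, hv0⟩ := h
        have : LinearMap.range f = ⊤ := by
          rw [LinearMap.range_eq_top]
          refine LinearMap.surjective (f := f) ?_
          intro h0
          apply hv0
          exact congrArg (fun g => g ⟨v, hv⟩) h0
        rw [this]; simp
      · have : {i : Fin (n+1) | i = 0 ∧ ∃ v ∈ V, v 0 ≠ 0} = ∅ := by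
          ext i; simp only [Set.mem_ofPred_eq, h, and_false, Set.mem_empty_iff_false]
        rw [this, Set.ncard_empty]
        push Not at h
        have : f = 0 := by
          ext v; exact h v.1 v.2
        rw [this]; simp
    · rw [Set.disjoint_left]
      rintro _ ⟨rfl, _⟩ ⟨i, _, hi⟩
      exact Fin.succ_ne_zero i hi

theorem lead_count {I : Type*} [Fintype I] {L : Type*} [LinearOrder L] (ord : I → L)
    (hord : Function.Injective ord) (V : Submodule K (I → K)) :
    Module.finrank K V = Set.ncard {i | ∃ v ∈ V, v i ≠ 0 ∧ ∀ l, ord l < ord i → v l = 0} := by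
  letI : LinearOrder I := LinearOrder.lift' ord hord
  have hlt : ∀ a b : I, a < b ↔ ord a < ord b := fun a b => Iff.rfl
  let e : Fin (Fintype.card I) ≃o I := Fintype.orderIsoFinOfCardEq I rfl
  let E : (I → K) ≃ₗ[K] (Fin (Fintype.card I) → K) := LinearEquiv.funCongrLeft K K e.toEquiv
  have hE : ∀ v i, E v i = v (e i) := fun _ _ => rfl
  have h := lead_fin (Fintype.card I) (V.map E.toLinearMap)
  rw [LinearEquiv.finrank_map_eq] at h
  rw [h, ← Set.ncard_image_of_injective _ e.injective]
  congr 1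
  ext i
  constructor
  · rintro ⟨i, ⟨_, ⟨v, hv, rfl⟩, h1, h2⟩, rfl⟩
    refine ⟨v, hv, h1, fun l hl => ?_⟩
    have := h2 (e.symm l) (by rw [OrderIso.symm_apply_lt]; exact (hlt _ _).2 hl)
    simpa [hE] using this
  · rintro ⟨v, hv, h1, h2⟩
    refine ⟨e.symm i, ⟨E v, ⟨v, hv, rfl⟩, by simpa [hE] using h1, fun l hl => ?_⟩, by simp⟩
    rw [hE]
    apply h2
    rw [← hlt]
    exact (OrderIso.lt_symm_apply e).1 hl

end Lead
end CE

namespace CE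

section HilbP
open MvPolynomial

theorem dvd_card_nonempty' {τ : Type*} [Fintype τ] {ι : Type*} [Fintype ι]
    (J : ι → Set (τ →₀ ℕ))
    (hJ : ∀ i, IsUpperSet (J i)) (q : ℕ)
    (h : ∀ j : ℕ, q ∣ ∑ i, Set.ncard {μ | μ ∈ J i ∧ μ.degree = j}) :
    q ∣ Set.ncard {i | (J i).Nonempty} := by
  classical
  let ε : τ ≃ Fin (Fintype.card τ) := Fintype.equivFin τ
  let F : (τ →₀ ℕ) ≃ (Fin (Fintype.card τ) → ℕ) :=
    Finsupp.equivFunOnFinite.trans (Equiv.arrowCongr ε (Equiv.refl ℕ))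
  have hF : ∀ μ a, F μ a = μ (ε.symm a) := fun _ _ => rfl
  have hFs : ∀ m t, F.symm m t = m (ε t) := by
    intro m t
    conv_rhs => rw [← F.apply_symm_apply m]
    rw [hF]; simp
  have hdeg : ∀ μ, ∑ a, F μ a = μ.degree := by
    intro μ
    rw [Finsupp.degree_eq_sum]
    simp_rw [hF]
    exact Equiv.sum_comp ε.symm μ
  have key := dvd_card_nonempty (fun i => F.symm ⁻¹' (J i)) (by
    intro i a b hab ha
    refine hJ i ?_ ha
    intro t
    rw [hFs, hFs]; exact hab _) q (by
    intro j
    convert h j using 2 with i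
    rw [← Set.ncard_image_of_injective _ F.symm.injective]
    congr 1
    ext μ
    constructor
    · rintro ⟨m, ⟨h1, h2⟩, rfl⟩
      refine ⟨h1, ?_⟩
      rw [← hdeg]; simpa using h2
    · rintro ⟨h1, h2⟩
      exact ⟨F μ, ⟨by simpa using h1, by rw [hdeg, h2]⟩, by simp⟩)
  convert key using 3 with i
  ext i
  constructor
  · rintro ⟨μ, h⟩; exact ⟨F μ, by simpa using h⟩
  · rintro ⟨m, h⟩; exact ⟨F.symm m, h⟩

variable {Ω : Type*} [Field Ω] {ι : Type*} {τ : Type*}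
  {Ψ : Type*} [Field Ψ] [Algebra (MvPolynomial τ Ω) Ψ]

/-- Degree `j` polynomial vectors in `P`. -/
def Pj (P : Submodule Ψ (ι → Ψ)) (j : ℕ) : Submodule Ω (ι → MvPolynomial τ Ω) where
  carrier := {v | (∀ i, (v i).IsHomogeneous j) ∧ (fun i => algebraMap (MvPolynomial τ Ω) Ψ (v i)) ∈ P}
  add_mem' := by
    rintro a b ⟨ha, ha'⟩ ⟨hb, hb'⟩
    refine ⟨fun i => (ha i).add (hb i), ?_⟩
    convert P.add_mem ha' hb' using 1
    funext i; simp
  zero_mem' := ⟨fun i => isHomogeneous_zero _ _ _, by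
    convert P.zero_mem using 1; funext i; simp⟩
  smul_mem' := by
    rintro c a ⟨ha, ha'⟩
    refine ⟨fun i => ?_, ?_⟩
    · rw [Pi.smul_apply, MvPolynomial.smul_eq_C_mul]
      simpa using (isHomogeneous_C τ c).mul (ha i)
    · convert P.smul_mem (algebraMap (MvPolynomial τ Ω) Ψ (C c)) ha' using 1
      funext i
      simp [MvPolynomial.smul_eq_C_mul]

theorem mem_Pj {P : Submodule Ψ (ι → Ψ)} {j : ℕ} {v : ι → MvPolynomial τ Ω} :
    v ∈ Pj P j ↔ (∀ i, (v i).IsHomogeneous j) ∧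
      (fun i => algebraMap (MvPolynomial τ Ω) Ψ (v i)) ∈ P := Iff.rfl

theorem Pj_inj [Fintype τ] (P : Submodule Ψ (ι → Ψ)) (j : ℕ) :
    ∃ f : Pj (Ω := Ω) (τ := τ) P j →ₗ[Ω] (({x : ι × (τ →₀ ℕ) // x.2.degree = j}) → Ω),
      Function.Injective f ∧ ∀ v x, f v x = coeff x.1.2 (v.1 x.1.1) := by
  refine ⟨{ toFun := fun v x => coeff x.1.2 (v.1 x.1.1), map_add' := ?_, map_smul' := ?_ }, ?_, ?_⟩
  · intro a b; funext x; simp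
  · intro a b; funext x; simp
  · intro a b hab
    ext i μ
    by_cases hμ : μ.degree = j
    · exact congrFun hab ⟨(i, μ), hμ⟩
    · rw [(a.2.1 i).coeff_eq_zero hμ, (b.2.1 i).coeff_eq_zero hμ]
  · intro v x; rfl

theorem finite_pos [Fintype ι] [Fintype τ] (j : ℕ) : Finite {x : ι × (τ →₀ ℕ) // x.2.degree = j} := by
  have : {x : ι × (τ →₀ ℕ) | x.2.degree = j}.Finite := by
    have := (Set.finite_univ (α := ι)).prod (Finsupp.finite_of_degree_eq (σ := τ) j)
    refine this.subset ?_
    intro x hx; exact ⟨trivial, hx⟩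
  exact this

instance Pj_finite [Fintype ι] [Fintype τ] (P : Submodule Ψ (ι → Ψ)) (j : ℕ) :
    Module.Finite Ω (Pj (Ω := Ω) (τ := τ) P j) := by
  obtain ⟨f, hf, -⟩ := Pj_inj (Ω := Ω) (τ := τ) P j
  have := finite_pos (ι := ι) (τ := τ) j
  exact Module.Finite.of_injective f hf

theorem hilbert_dvd [Fintype ι] [Fintype τ] [IsFractionRing (MvPolynomial τ Ω) Ψ]
    (P : Submodule Ψ (ι → Ψ))
    (hgr : ∀ v : ι → MvPolynomial τ Ω, (fun i => algebraMap (MvPolynomial τ Ω) Ψ (v i)) ∈ P →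
      ∀ j, (fun i => algebraMap (MvPolynomial τ Ω) Ψ (homogeneousComponent j (v i))) ∈ P)
    (q : ℕ) (h : ∀ j, q ∣ Module.finrank Ω (Pj (Ω := Ω) (τ := τ) P j)) :
    q ∣ Module.finrank Ψ P := by
  classical
  let e : ι ≃ Fin (Fintype.card ι) := Fintype.equivFin ι
  let ε : τ ≃ Fin (Fintype.card τ) := Fintype.equivFin τ
  let mo : (τ →₀ ℕ) → Lex (Fin (Fintype.card τ) → ℕ) := fun μ => toLex (fun a => μ (ε.symm a))
  have mo_inj : Function.Injective mo := by
    intro a b hab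
    ext t
    have := congrFun (toLex.injective hab) (ε t)
    simpa using this
  have mo_add : ∀ a b, mo (a + b) = mo a + mo b := fun a b => rfl
  let ord : ι × (τ →₀ ℕ) → Fin (Fintype.card ι) ×ₗ Lex (Fin (Fintype.card τ) → ℕ) :=
    fun x => toLex (e x.1, mo x.2)
  have ord_inj : Function.Injective ord := by
    rintro ⟨a, b⟩ ⟨a', b'⟩ hab
    have := toLex.injective hab
    rw [Prod.mk.injEq] at this
    exact Prod.ext (e.injective this.1) (mo_inj this.2)
  have ord_lt : ∀ i μ l ν, ord (l, ν) < ord (i, μ) ↔ e l < e i ∨ (e l = e i ∧ mo ν < mo μ) := by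
    intro i μ l ν
    exact Prod.Lex.toLex_lt_toLex
  let J : ι → Set (τ →₀ ℕ) := fun i => {μ | ∃ j, ∃ v ∈ Pj (Ω := Ω) (τ := τ) P j,
    coeff μ (v i) ≠ 0 ∧ ∀ l ν, ord (l, ν) < ord (i, μ) → coeff ν (v l) = 0}
  have hJup : ∀ i, IsUpperSet (J i) := by
    rintro i μ μ' hle ⟨j, v, hv, h1, h2⟩
    obtain ⟨δ, rfl⟩ := exists_add_of_le hle
    refine ⟨δ.degree + j, fun l => monomial δ 1 * v l, ⟨fun l =>
      (isHomogeneous_monomial _ rfl).mul (hv.1 l), ?_⟩, ?_, ?_⟩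
    · convert P.smul_mem (algebraMap (MvPolynomial τ Ω) Ψ (monomial δ 1)) hv.2 using 1
      funext l
      simp
    · rw [coeff_monomial_mul', if_pos (by simp)]
      simpa using h1
    · intro l ν hlt
      rw [coeff_monomial_mul']
      split_ifs with hδ
      · rw [one_mul]
        apply h2
        obtain ⟨ν, rfl⟩ := exists_add_of_le hδ
        rw [add_tsub_cancel_left]
        rw [ord_lt] at hlt ⊢
        rw [add_comm μ δ, mo_add, mo_add] at hlt
        refine hlt.imp id (fun ⟨a, b⟩ => ⟨a, ?_⟩)
        exact lt_of_add_lt_add_left b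
      · rfl
  have hcount : ∀ j, Module.finrank Ω (Pj (Ω := Ω) (τ := τ) P j)
      = ∑ i, Set.ncard {μ | μ ∈ J i ∧ μ.degree = j} := by
    intro j
    obtain ⟨f, hf, hfv⟩ := Pj_inj (Ω := Ω) (τ := τ) P j
    have := finite_pos (ι := ι) (τ := τ) j
    let _ : Fintype {x : ι × (τ →₀ ℕ) // x.2.degree = j} := Fintype.ofFinite _
    rw [← LinearMap.finrank_range_of_inj hf,
      lead_count (fun x : {x : ι × (τ →₀ ℕ) // x.2.degree = j} => ord x.1)
        (ord_inj.comp Subtype.val_injective)]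
    have hfin : ∀ i, {μ | μ ∈ J i ∧ μ.degree = j}.Finite := fun i =>
      (Finsupp.finite_of_degree_eq (σ := τ) j).subset (fun _ h => h.2)
    rw [← Set.ncard_image_of_injective _ Subtype.val_injective]
    have hset : (Subtype.val '' {i : {x : ι × (τ →₀ ℕ) // x.2.degree = j} | ∃ v ∈ LinearMap.range f, v i ≠ 0 ∧
        ∀ (l : {x : ι × (τ →₀ ℕ) // x.2.degree = j}), ord l.1 < ord i.1 → v l = 0})
        = ((Finset.univ.sigma (fun i => (hfin i).toFinset)).map
            (Equiv.sigmaEquivProd ι (τ →₀ ℕ)).toEmbedding : Finset (ι × (τ →₀ ℕ))) := by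
      ext ⟨i, μ⟩
      simp only [Finset.coe_map, Equiv.coe_toEmbedding, Set.mem_image, Finset.mem_coe,
        Finset.mem_sigma, Finset.mem_univ, true_and, Set.Finite.mem_toFinset]
      constructor
      · rintro ⟨⟨⟨i, μ⟩, hμ⟩, ⟨_, ⟨v, rfl⟩, h1, h2⟩, heq⟩
        simp only [Prod.mk.injEq] at heq
        obtain ⟨rfl, rfl⟩ := heq
        refine ⟨⟨i, μ⟩, ⟨⟨j, v.1, v.2, by simpa [hfv] using h1, ?_⟩, hμ⟩, rfl⟩
        intro l ν hlt
        by_cases hν : ν.degree = j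
        · have := h2 ⟨(l, ν), hν⟩ hlt
          rwa [hfv] at this
        · exact (v.2.1 l).coeff_eq_zero hν
      · rintro ⟨⟨i, μ⟩, ⟨⟨j', v, hv, h1, h2⟩, hμ⟩, heq⟩
        simp only [Equiv.sigmaEquivProd_apply, Prod.mk.injEq] at heq
        obtain ⟨rfl, rfl⟩ := heq
        have hj : j' = j := by
          by_contra hne
          exact h1 ((hv.1 i).coeff_eq_zero (fun h => hne (h.symm.trans hμ)))
        subst hj
        refine ⟨⟨(i, μ), hμ⟩, ⟨f ⟨v, hv⟩, ⟨_, rfl⟩, by rw [hfv]; exact h1, ?_⟩, rfl⟩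
        intro l hl
        rw [hfv]
        exact h2 _ _ hl
    rw [hset, Set.ncard_coe_finset, Finset.card_map, Finset.card_sigma]
    refine Finset.sum_congr rfl fun i _ => ?_
    rw [Set.ncard_eq_toFinset_card _ (hfin i)]
  have hmain := dvd_card_nonempty' J hJup q (fun j => by rw [← hcount j]; exact h j)
  rw [lead_count (fun i => e i) e.injective P]
  convert hmain using 2
  ext i
  constructor
  · rintro ⟨w, hw, h1, h2⟩
    obtain ⟨b, hb⟩ := IsLocalization.exist_integer_multiples_of_finite
      (nonZeroDivisors (MvPolynomial τ Ω)) w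
    choose v hv using hb
    have hb0 : algebraMap (MvPolynomial τ Ω) Ψ b ≠ 0 := by
      have := nonZeroDivisors.ne_zero b.2
      rwa [Ne, IsFractionRing.to_map_eq_zero_iff]
    have hv' : ∀ i, algebraMap (MvPolynomial τ Ω) Ψ (v i) = algebraMap (MvPolynomial τ Ω) Ψ b * w i := by
      intro i; rw [hv, Algebra.smul_def]
    have hvP : (fun i => algebraMap (MvPolynomial τ Ω) Ψ (v i)) ∈ P := by
      convert P.smul_mem (algebraMap (MvPolynomial τ Ω) Ψ b) hw using 1
      funext i; rw [hv']; rfl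
    have hvi : v i ≠ 0 := by
      intro h0
      have := hv' i
      rw [h0, map_zero] at this
      exact mul_ne_zero hb0 h1 this.symm
    have hvl : ∀ l, e l < e i → v l = 0 := by
      intro l hl
      have := hv' l
      rw [h2 l hl, mul_zero] at this
      rwa [IsFractionRing.to_map_eq_zero_iff] at this
    obtain ⟨μ₀, hμ₀⟩ := (MvPolynomial.ne_zero_iff).1 hvi
    set j := μ₀.degree
    have hu : homogeneousComponent j (v i) ≠ 0 := by
      rw [MvPolynomial.ne_zero_iff]
      refine ⟨μ₀, ?_⟩
      rw [coeff_homogeneousComponent, if_pos rfl]; exact hμ₀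
    obtain ⟨μ, hμ, hmin⟩ := Finset.exists_min_image (homogeneousComponent j (v i)).support mo
      (by rwa [MvPolynomial.support_nonempty])
    refine ⟨μ, j, fun l => homogeneousComponent j (v l), ⟨fun l =>
      homogeneousComponent_isHomogeneous _ _, hgr v hvP j⟩, by simpa using hμ, ?_⟩
    intro l ν hlt
    rw [ord_lt] at hlt
    rcases hlt with hlt | ⟨h3, hlt⟩
    · simp [hvl l hlt]
    · have hl := e.injective h3
      subst hl
      by_contra hne
      exact absurd (hmin ν (by simpa using hne)) (not_le.2 hlt)
  · rintro ⟨μ, j, v, hv, h1, h2⟩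
    refine ⟨_, hv.2, ?_, ?_⟩
    · rw [Ne, IsFractionRing.to_map_eq_zero_iff]
      intro h0
      rw [h0] at h1
      simp at h1
    · intro l hl
      have : v l = 0 := by
        ext ν
        rw [coeff_zero]
        exact h2 l ν ((ord_lt _ _ _ _).2 (Or.inl hl))
      simp [this]

end HilbP
end CE

namespace CE
open MvPolynomial

lemma eval₂_smul_hom {R S σ : Type*} [CommSemiring R] [CommSemiring S] (f : R →+* S) (g : σ → S) (a : S)
    {k : ℕ} {p : MvPolynomial σ R} (hp : p.IsHomogeneous k) :
    eval₂ f (fun i => a * g i) p = a ^ k * eval₂ f g p := by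
  rw [eval₂_eq, eval₂_eq, Finset.mul_sum]
  refine Finset.sum_congr rfl fun d hd => ?_
  have h := hp (mem_support_iff.mp hd)
  have h2 : ∑ i ∈ d.support, d i = k := by
    rw [← h]; simp [Finsupp.weight_apply, Finsupp.sum]
  simp only [mul_pow, Finset.prod_mul_distrib, Finset.prod_pow_eq_pow_sum, h2]
  ring

lemma eval₂_weighted {R S σ τ M : Type*} [CommSemiring R] [CommSemiring S] [AddCommMonoid M]
    (f : R →+* S) (w : σ → M) (w' : τ → M) (g : σ → MvPolynomial τ S)
    (hg : ∀ i, IsWeightedHomogeneous w' (g i) (w i))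
    {k : M} {p : MvPolynomial σ R} (hp : IsWeightedHomogeneous w p k) :
    IsWeightedHomogeneous w' (eval₂ (C.comp f) g p) k := by
  rw [eval₂_eq]
  refine IsWeightedHomogeneous.sum _ _ _ fun d hd => ?_
  have h := hp (mem_support_iff.mp hd)
  have h2 : ∑ i ∈ d.support, d i • w i = k := by
    rw [← h]; simp [Finsupp.weight_apply, Finsupp.sum]
  rw [← zero_add k, ← h2]
  refine IsWeightedHomogeneous.mul (isWeightedHomogeneous_C _ _) ?_
  exact IsWeightedHomogeneous.prod _ _ _ fun i _ => (hg i).pow _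

variable {G : Type*} [Group G] {Ω : Type*} [Field Ω]

/-- projective semilinear representation of type `c^t`, degree `d`. -/
def HasRep (s : G →* (Ω ≃+* Ω)) (c : G → G → Ω) (t : ℤ) (d : ℕ) : Prop :=
  ∃ A : G → Matrix (Fin d) (Fin d) Ω, A 1 = 1 ∧
    ∀ σ τ, A σ * (A τ).map (s σ) = (c σ τ) ^ t • A (σ * τ)

variable {s : G →* (Ω ≃+* Ω)} {c : G → G → Ω}

lemma HasRep.of_module {V : Type*} [AddCommGroup V] [Module Ω V] [FiniteDimensional Ω V]
    (t : ℤ) (T : G → V →+ V) (hT : ∀ σ (a : Ω) v, T σ (a • v) = s σ a • T σ v)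
    (h1 : ∀ v, T 1 v = v) (hm : ∀ σ τ v, T σ (T τ v) = (c σ τ) ^ t • T (σ * τ) v) :
    HasRep s c t (Module.finrank Ω V) := by
  let b := Module.finBasis Ω V
  refine ⟨fun σ => Matrix.of fun i j => b.repr (T σ (b j)) i, ?_, ?_⟩
  · ext i j
    simp [h1, Matrix.one_apply, Finsupp.single_apply, eq_comm]
  · intro σ τ
    ext i k
    have e : T σ (T τ (b k)) = ∑ j, s σ (b.repr (T τ (b k)) j) • T σ (b j) := by
      conv_lhs => rw [← b.sum_repr (T τ (b k))]
      rw [map_sum]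
      simp only [hT]
    have := congrArg (fun v => b.repr v i) (e.symm.trans (hm σ τ (b k)))
    simp only [map_sum, map_smul, Finsupp.coe_finsetSum, Finset.sum_apply, Finsupp.smul_apply, smul_eq_mul] at this
    simp only [Matrix.mul_apply, Matrix.of_apply, Matrix.map_apply, Matrix.smul_apply, smul_eq_mul]
    rw [← this]
    exact Finset.sum_congr rfl fun _ _ => mul_comm _ _

lemma HasRep.zero : HasRep s c 0 1 := ⟨fun _ => 1, rfl, fun σ τ => by
  simp⟩

lemma HasRep.mul (hc : ∀ σ τ, c σ τ ≠ 0) {t t' : ℤ} {d e : ℕ} (h : HasRep s c t d) (h' : HasRep s c t' e) :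
    HasRep s c (t + t') (d * e) := by
  obtain ⟨A, hA1, hA⟩ := h
  obtain ⟨B, hB1, hB⟩ := h'
  refine ⟨fun σ => Matrix.reindex finProdFinEquiv finProdFinEquiv (Matrix.kronecker (A σ) (B σ)), ?_, ?_⟩
  · simp [hA1, hB1]
  · intro σ τ
    have : (Matrix.kronecker (A τ) (B τ)).map (s σ) = Matrix.kronecker ((A τ).map (s σ)) ((B τ).map (s σ)) := by
      ext; simp
    have h2 : Matrix.kronecker (A σ) (B σ) * (Matrix.kronecker (A τ) (B τ)).map (s σ)
        = c σ τ ^ (t + t') • Matrix.kronecker (A (σ * τ)) (B (σ * τ)) := by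
      rw [this]
      simp only [Matrix.kronecker]
      rw [← Matrix.mul_kronecker_mul, hA, hB, zpow_add₀ (hc σ τ)]
      ext; simp; ring
    have := congrArg (Matrix.reindex finProdFinEquiv finProdFinEquiv) h2
    simp only [Matrix.reindex_apply] at this ⊢
    rw [← Matrix.submatrix_mul_equiv _ _ _ finProdFinEquiv.symm] at this
    exact this

lemma HasRep.neg (hc : ∀ σ τ, c σ τ ≠ 0) {t : ℤ} {d : ℕ} (h : HasRep s c t d) :
    HasRep s c (-t) d := by
  obtain ⟨A, hA1, hA⟩ := h
  have hinv : ∀ σ, IsUnit (A σ).det := by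
    intro σ
    have h2 := congrArg Matrix.det (hA σ σ⁻¹)
    rw [mul_inv_cancel, hA1, Matrix.det_mul, Matrix.det_smul, Matrix.det_one, mul_one] at h2
    refine isUnit_iff_ne_zero.mpr fun h0 => ?_
    rw [h0, zero_mul] at h2
    exact pow_ne_zero _ (zpow_ne_zero _ (hc _ _)) h2.symm
  refine ⟨fun σ => ((A σ)⁻¹).transpose, by simp [hA1], fun σ τ => ?_⟩
  have hmap : ((A τ)⁻¹).map (s σ) = ((A τ).map (s σ))⁻¹ := by
    symm
    apply Matrix.inv_eq_left_inv
    have := congrArg (fun M : Matrix (Fin d) (Fin d) Ω => M.map (s σ)) (Matrix.nonsing_inv_mul _ (hinv τ))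
    simpa [Matrix.map_mul] using this
  have hcu : c σ τ ^ t ≠ 0 := zpow_ne_zero _ (hc _ _)
  rw [Matrix.transpose_map, ← Matrix.transpose_mul, hmap, ← Matrix.mul_inv_rev, hA, ← Matrix.transpose_smul]
  congr 1
  apply Matrix.inv_eq_left_inv
  rw [zpow_neg, Matrix.smul_mul, Matrix.mul_smul, smul_smul, inv_mul_cancel₀ hcu, one_smul,
    Matrix.nonsing_inv_mul _ (hinv _)]

lemma HasRep.pow (hc : ∀ σ τ, c σ τ ≠ 0) {t : ℤ} {d : ℕ} (h : HasRep s c t d) (k : ℕ) :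
    HasRep s c (k * t) (d ^ k) := by
  induction k with
  | zero => simpa using HasRep.zero
  | succ k ih =>
    rw [pow_succ]; push_cast; rw [add_mul, one_mul]
    exact ih.mul hc h

lemma finrank_homog (d k : ℕ) : Module.Finite Ω (homogeneousSubmodule (Fin d) Ω k) ∧
    Module.finrank Ω (homogeneousSubmodule (Fin d) Ω k) = Nat.multichoose d k := by
  have hfin : {x : Fin d →₀ ℕ | x.degree = k} = ((Finset.univ : Finset (Fin d)).finsuppAntidiag k : Set (Fin d →₀ ℕ)) := by
    ext x
    simp [Finset.mem_finsuppAntidiag, Finsupp.degree_eq_sum]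
  let e := AddMonoidAlgebra.supportedEquivFinsupp (R := Ω) (S := Ω) {x : Fin d →₀ ℕ | x.degree = k}
  have hF : Finite {x : Fin d →₀ ℕ | x.degree = k} := by
    rw [hfin]; exact Finset.finite_toSet _
  rw [homogeneousSubmodule_eq_finsupp_supported]
  refine ⟨Module.Finite.equiv e.symm, ?_⟩
  rw [LinearEquiv.finrank_eq e]
  let _ : Fintype {x : Fin d →₀ ℕ | x.degree = k} := Fintype.ofFinite _
  rw [Module.finrank_finsupp_self, ← Nat.card_eq_fintype_card, hfin]
  rw [Nat.card_coe_set_eq, Set.ncard_coe_finset, Finset.card_finsuppAntidiag_nat_eq_multichoose]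
  simp

lemma HasRep.sym {t : ℤ} {d : ℕ} (h : HasRep s c t d) (k : ℕ) :
    HasRep s c (k * t) (Nat.multichoose d k) := by
  obtain ⟨A, hA1, hA⟩ := h
  let V := homogeneousSubmodule (Fin d) Ω k
  obtain ⟨hf, hr⟩ := finrank_homog (Ω := Ω) d k
  rw [← hr]
  let g : G → Fin d → MvPolynomial (Fin d) Ω := fun σ j => ∑ i, C (A σ i j) * X i
  let F : G → MvPolynomial (Fin d) Ω →+* MvPolynomial (Fin d) Ω := fun σ =>
    eval₂Hom (C.comp (s σ : Ω →+* Ω)) (g σ)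
  have hg : ∀ σ j, (g σ j).IsHomogeneous 1 := fun σ j =>
    IsHomogeneous.sum _ _ _ fun i _ => by simpa using (isHomogeneous_C _ _).mul (isHomogeneous_X _ _)
  have hF : ∀ σ, ∀ p ∈ V, F σ p ∈ V := fun σ p hp =>
    eval₂_weighted (s σ : Ω →+* Ω) (1 : Fin d → ℕ) 1 (g σ) (hg σ) hp
  have hFm : ∀ σ τ, ∀ p ∈ V, F σ (F τ p) = (c σ τ) ^ (k * t) • F (σ * τ) p := by
    intro σ τ p hp
    have e : (F σ).comp (F τ) = eval₂Hom (C.comp (s (σ * τ) : Ω →+* Ω)) (fun j => C (c σ τ ^ t) * g (σ * τ) j) := by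
      apply MvPolynomial.ringHom_ext
      · intro a; simp [F]
      · intro j
        simp only [F, g, RingHom.comp_apply, coe_eval₂Hom, eval₂_X, eval₂_sum, eval₂_mul, eval₂_C]
        simp only [Finset.mul_sum, RingHom.coe_coe]
        rw [Finset.sum_comm]
        refine Finset.sum_congr rfl fun l _ => ?_
        have := congrFun (congrFun (hA σ τ) l) j
        simp only [Matrix.mul_apply, Matrix.map_apply, Matrix.smul_apply, smul_eq_mul] at this
        rw [← mul_assoc, ← C_mul, ← this, map_sum, Finset.sum_mul]
        refine Finset.sum_congr rfl fun i _ => ?_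
        rw [C_mul]; ring
    have := congrArg (fun f => f p) e
    simp only [RingHom.comp_apply] at this
    rw [this, coe_eval₂Hom, eval₂_smul_hom _ _ _ hp, ← map_pow, ← zpow_natCast, ← zpow_mul, mul_comm t, smul_eq_C_mul]
    rfl
  refine HasRep.of_module (V := V) _ (fun σ => ((F σ : MvPolynomial (Fin d) Ω →+ _).comp V.subtype.toAddMonoidHom).codRestrict V.toAddSubgroup (fun p => hF σ p p.2)) ?_ ?_ ?_
  · intro σ a v
    apply Subtype.ext
    change F σ (a • (v : MvPolynomial (Fin d) Ω)) = s σ a • F σ v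
    simp [F, smul_eq_C_mul]
  · intro v
    apply Subtype.ext
    have : F 1 = RingHom.id _ := by
      apply MvPolynomial.ringHom_ext
      · intro a; simp [F]
      · intro j; simp [F, g, hA1, Matrix.one_apply]
    change F 1 (v : MvPolynomial (Fin d) Ω) = v
    simp [this]
  · intro σ τ v
    apply Subtype.ext
    exact hFm σ τ v v.2

lemma HasRep.of_submodule {W : Type*} [AddCommGroup W] [Module Ω W] (V : Submodule Ω W) [FiniteDimensional Ω V]
    (t : ℤ) (T : G → W →+ W) (hV : ∀ σ, ∀ v ∈ V, T σ v ∈ V)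
    (hT : ∀ σ (a : Ω), ∀ v ∈ V, T σ (a • v) = s σ a • T σ v)
    (h1 : ∀ v ∈ V, T 1 v = v) (hm : ∀ σ τ, ∀ v ∈ V, T σ (T τ v) = (c σ τ) ^ t • T (σ * τ) v) :
    HasRep s c t (Module.finrank Ω V) := by
  refine HasRep.of_module (V := V) _ (fun σ => ((T σ).comp V.subtype.toAddMonoidHom).codRestrict V.toAddSubgroup (fun p => hV σ p p.2)) ?_ ?_ ?_
  · intro σ a v
    exact Subtype.ext (hT σ a v v.2)
  · intro v
    exact Subtype.ext (h1 v v.2)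
  · intro σ τ v
    exact Subtype.ext (hm σ τ v v.2)

lemma newton_id (d m : ℕ) : d * ∑ k ∈ Finset.range (m + 1), Nat.multichoose d k = (m + 1) * Nat.multichoose d (m + 1) := by
  rcases Nat.eq_zero_or_pos d with rfl | hd
  · simp
  rw [Nat.sum_range_multichoose, Nat.multichoose_eq, Nat.add_succ_sub_one]
  have := Nat.choose_succ_right_eq (d + m) m
  rw [Nat.add_sub_cancel] at this
  rw [mul_comm, mul_comm (m + 1), this]
  congr 1
  rw [add_comm, Nat.choose_symm_add]

lemma HasRep.newton (hc : ∀ σ τ, c σ τ ≠ 0) {n : ℕ} (hn : ∀ d, HasRep s c 1 d → n ∣ d)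
    {t : ℤ} {d : ℕ} (h : HasRep s c t d) (m : ℕ) :
    ∀ (x : ℤ) (f : ℕ), HasRep s c x f → t * (m + 1) + x = 1 → n ∣ d * f := by
  induction m using Nat.strong_induction_on with
  | _ m ih =>
    intro x f hf hx
    have hid := newton_id d m
    rw [Finset.sum_range_succ', Nat.multichoose_zero_right, mul_add, mul_one] at hid
    have h1 : n ∣ (d * ∑ k ∈ Finset.range m, d.multichoose (k + 1)) * f := by
      rw [Finset.mul_sum, Finset.sum_mul]
      refine Finset.dvd_sum fun k hk => ?_
      rw [mul_assoc]
      have hk := Finset.mem_range.mp hk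
      refine ih (m - (k + 1)) (by omega) _ _ ((h.sym (k + 1)).mul hc hf) ?_
      rw [Nat.cast_sub (by omega)]; push_cast; linarith
    have h2 : n ∣ ((m + 1) * d.multichoose (m + 1)) * f := by
      rw [mul_assoc]
      refine Dvd.dvd.mul_left (hn _ ?_) _
      have := (h.sym (m + 1)).mul hc hf
      rwa [show ((m + 1 : ℕ) : ℤ) * t + x = 1 by push_cast; linarith] at this
    rw [← hid, add_mul] at h2
    exact (Nat.dvd_add_right h1).mp h2

lemma multichoose_prime {p : ℕ} (hp : p.Prime) (v u : ℕ) (hu : ¬ p ∣ u) :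
    ¬ p ∣ Nat.multichoose (p ^ v * u) (p ^ v) := by
  have : Fact p.Prime := ⟨hp⟩
  have hq : 0 < p ^ v := pow_pos hp.pos _
  rw [Nat.multichoose_eq]
  have h := Choose.choose_modEq_choose_mul_prod_range_choose (p := p) (n := p ^ v * u + p ^ v - 1) (k := p ^ v) v
  have h1 : (p ^ v * u + p ^ v - 1) / p ^ v = u := by
    rw [Nat.add_sub_assoc hq, Nat.mul_add_div hq, Nat.div_eq_of_lt (by omega), add_zero]
  rw [h1, Nat.div_self hq, Nat.choose_one_right, Finset.prod_eq_one, Nat.cast_one, mul_one] at h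
  · intro hd
    apply hu
    have := h.dvd
    have h3 : (p : ℤ) ∣ ((p ^ v * u + p ^ v - 1).choose (p ^ v) : ℤ) := by exact_mod_cast hd
    have h4 := (dvd_sub_left h3).mp this
    exact_mod_cast h4
  · intro i hi
    have hi := Finset.mem_range.mp hi
    rw [Nat.pow_div hi.le hp.pos, Nat.mod_eq_zero_of_dvd (dvd_pow_self _ (by omega)), Nat.choose_zero_right]

lemma HasRep.ind (hc : ∀ σ τ, c σ τ ≠ 0) {n : ℕ} (hn0 : n ≠ 0) (h1 : HasRep s c 1 n)
    (hn : ∀ d, HasRep s c 1 d → n ∣ d) {p : ℕ} (hp : p.Prime)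
    {t : ℤ} (hpt : ¬ (p : ℤ) ∣ t) {d : ℕ} (h : HasRep s c t d) : p ^ n.factorization p ∣ d := by
  wlog ht : t < 0 generalizing t
  · exact this (t := -t) (by rwa [dvd_neg]) (h.neg hc) (by
      have : t ≠ 0 := by rintro rfl; exact hpt (dvd_zero _)
      omega)
  set v := n.factorization p with hv
  obtain ⟨u, hu⟩ : p ^ v ∣ n := Nat.ordProj_dvd n p
  have hpu : ¬ p ∣ u := by
    intro ⟨w, hw⟩
    have : p ^ (v + 1) ∣ n := ⟨w, by rw [hu, hw, pow_succ]; ring⟩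
    exact Nat.pow_succ_factorization_not_dvd hn0 hp this
  have hcop : IsCoprime t ((p : ℤ) ^ v) := by
    apply IsCoprime.pow_right
    exact ((Nat.prime_iff_prime_int.mp hp).irreducible.coprime_iff_not_dvd.mpr hpt).symm
  obtain ⟨a, b, hab⟩ := hcop
  have hq : (0 : ℤ) < (p : ℤ) ^ v := by have := hp.pos; positivity
  -- m + 1 = a + q * (|a| + 1)
  have hm : ∃ m s' : ℕ, t * ((m : ℤ) + 1) + (s' : ℤ) * (p : ℤ) ^ v = 1 := by
    have e1 : 1 ≤ a + (p : ℤ) ^ v * (|a| + 1) := by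
      have := neg_abs_le a
      have := abs_nonneg a
      nlinarith
    have e2 : 0 ≤ b - t * (|a| + 1) := by
      by_contra hneg
      push Not at hneg
      have : t * (a + (p : ℤ) ^ v * (|a| + 1)) + (b - t * (|a| + 1)) * (p : ℤ) ^ v = 1 := by linarith
      have : (b - t * (|a| + 1)) * (p : ℤ) ^ v < 0 := mul_neg_of_neg_of_pos hneg hq
      nlinarith
    refine ⟨(a + (p : ℤ) ^ v * (|a| + 1) - 1).toNat, (b - t * (|a| + 1)).toNat, ?_⟩
    rw [Int.toNat_of_nonneg (by linarith), Int.toNat_of_nonneg e2]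
    linarith
  obtain ⟨m, s', hms⟩ := hm
  have he := (h1.sym (p ^ v)).pow hc s'
  have hd := h.newton hc hn m _ _ he (by push_cast; linarith)
  have hd' : p ^ v ∣ d * n.multichoose (p ^ v) ^ s' := (Dvd.intro u hu.symm).trans hd
  refine Nat.Coprime.dvd_of_dvd_mul_right ?_ hd'
  apply Nat.Coprime.pow
  rw [Nat.Prime.coprime_iff_not_dvd hp, hu]
  exact multichoose_prime hp v u hpu

end CE

namespace CE

section
variable (K L : Type*) [Field K] [Field L] [Algebra K L]
/-- Galois group acting by ring automorphisms. -/
def galS : Gal(L/K) →* (L ≃+* L) where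
  toFun σ := σ.toRingEquiv
  map_one' := rfl
  map_mul' _ _ := rfl

@[simp] lemma galS_apply (σ : Gal(L/K)) (x : L) : galS K L σ x = σ x := rfl
end

section
variable {K L : Type*} [Field K] [Field L] [Algebra K L] [FiniteDimensional K L] [IsGalois K L]
  {V : Type*} [AddCommGroup V] [Module L V] [Module K V] [IsScalarTower K L V] [FiniteDimensional L V]

/-- fixed points of a semilinear action -/
def fixedSub (T : Gal(L/K) → V →+ V) (hT : ∀ σ (a : L) v, T σ (a • v) = σ a • T σ v) : Submodule K V where
  carrier := {v | ∀ σ, T σ v = v}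
  add_mem' := fun {a b} ha hb σ => by rw [map_add, ha σ, hb σ]
  zero_mem' := fun σ => map_zero _
  smul_mem' := fun a v hv σ => by
    rw [← algebraMap_smul L a v, hT, hv σ, AlgEquiv.commutes]

lemma finrank_fixed (T : Gal(L/K) → V →+ V) (hT : ∀ σ (a : L) v, T σ (a • v) = σ a • T σ v)
    (hm : ∀ σ τ v, T σ (T τ v) = T (σ * τ) v) (h1 : ∀ v, T 1 v = v) :
    Module.finrank K (fixedSub T hT) = Module.finrank L V := by
  classical
  have : Module.Finite K V := Module.Finite.trans (R := K) L V
  let V0 := fixedSub T hT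
  let b := Module.finBasis K V0
  have avg : ∀ w, ∑ σ, T σ w ∈ V0 := by
    intro w τ
    rw [map_sum]
    simp only [hm]
    exact Fintype.sum_equiv (Equiv.mulLeft τ) _ _ (fun _ => rfl)
  have hli : LinearIndependent L (fun i => (b i : V)) := by
    rw [Fintype.linearIndependent_iff]
    intro a ha i
    have key : ∀ α : L, ∑ i, Algebra.trace K L (α * a i) • b i = 0 := by
      intro α
      apply Subtype.ext
      rw [Submodule.coe_sum, Submodule.coe_zero]
      have : ∑ σ, T σ (α • ∑ i, a i • (b i : V)) = 0 := by rw [ha]; simp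
      rw [← this, Finset.smul_sum]
      simp only [map_sum, smul_smul, hT]
      rw [Finset.sum_comm]
      refine Finset.sum_congr rfl fun i _ => ?_
      have : ∀ σ, T σ (b i : V) = b i := fun σ => (b i).2 σ
      simp only [this]
      rw [← Finset.sum_smul, ← trace_eq_sum_automorphisms, algebraMap_smul]
      rfl
    have k2 : ∀ α, Algebra.trace K L (α * a i) = 0 := fun α =>
      (Fintype.linearIndependent_iff.mp b.linearIndependent) _ (key α) i
    exact (traceForm_nondegenerate K L).2 (a i) (fun α => by simpa [Algebra.traceForm_apply] using k2 α)
  have hspan : ⊤ ≤ Submodule.span L (Set.range (fun i => (b i : V))) := by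
    by_contra hlt
    obtain ⟨f, hf0, hf⟩ := Submodule.exists_le_ker_of_lt_top _ (lt_top_iff_ne_top.mpr (fun h => hlt h.ge))
    apply hf0
    have hV0 : ∀ v ∈ V0, f v = 0 := by
      intro v hv
      apply hf
      have := b.sum_repr ⟨v, hv⟩
      have := congrArg (fun x : V0 => (x : V)) this
      simp only [Submodule.coe_sum, Submodule.coe_smul] at this
      rw [← this]
      refine Submodule.sum_mem _ fun i _ => ?_
      rw [← algebraMap_smul L]
      exact Submodule.smul_mem _ _ (Submodule.subset_span ⟨i, rfl⟩)
    ext w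
    have hw : ∀ α : L, ∑ σ : Gal(L/K), f (T σ w) * σ α = 0 := by
      intro α
      have := hV0 _ (avg (α • w))
      simp only [map_sum, hT, map_smul, smul_eq_mul] at this
      rw [← this]
      exact Finset.sum_congr rfl fun _ _ => mul_comm _ _
    have li : LinearIndependent L (fun (σ : Gal(L/K)) => (σ : L → L)) :=
      LinearIndependent.comp (ι' := Gal(L/K)) (linearIndependent_monoidHom L L) (fun σ => ((σ : L →+* L) : L →* L))
        (fun x y h => by ext a; exact DFunLike.congr_fun h a)
    have := (Fintype.linearIndependent_iff.mp li) (fun σ => f (T σ w)) (by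
      ext α; simpa using hw α) 1
    simpa [h1] using this
  have B := Module.Basis.mk hli hspan
  rw [Module.finrank_eq_card_basis B, Fintype.card_fin]

lemma rep_dvd {D : Type*} [DivisionRing D] [Algebra K D] {n : ℕ} (hn : n ≠ 0) (hD : Module.finrank K D = n ^ 2)
    (ρ : D →ₐ[K] Matrix (Fin n) (Fin n) L) (H : Gal(L/K) → Matrix (Fin n) (Fin n) L)
    (c : Gal(L/K) → Gal(L/K) → L) (hc : ∀ σ τ, c σ τ ≠ 0)
    (hH : ∀ σ x, H σ * (ρ x).map σ = ρ x * H σ) (hH1 : H 1 = 1)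
    (hHm : ∀ σ τ, H σ * (H τ).map σ = c σ τ • H (σ * τ)) (d : ℕ) (h : HasRep (galS K L) c 1 d) : n ∣ d := by
  obtain ⟨B, hB1, hB⟩ := h
  simp only [zpow_one] at hB
  have hinv : ∀ σ, IsUnit (B σ).det := by
    intro σ
    have h2 := congrArg Matrix.det (hB σ σ⁻¹)
    rw [mul_inv_cancel, hB1, Matrix.det_mul, Matrix.det_smul, Matrix.det_one, mul_one] at h2
    refine isUnit_iff_ne_zero.mpr fun h0 => ?_
    rw [h0, zero_mul] at h2
    exact pow_ne_zero _ (hc _ _) h2.symm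
  have hmap : ∀ σ τ, ((B τ)⁻¹).map (galS K L σ) = ((B τ).map (galS K L σ))⁻¹ := by
    intro σ τ
    symm
    apply Matrix.inv_eq_left_inv
    have := congrArg (fun M : Matrix (Fin d) (Fin d) L => M.map (galS K L σ)) (Matrix.nonsing_inv_mul _ (hinv τ))
    simpa only [Matrix.map_mul, Matrix.map_one (galS K L σ) (map_zero _) (map_one _)] using this
  have hmm : ∀ {l m o : ℕ} (σ : Gal(L/K)) (M : Matrix (Fin l) (Fin m) L) (N : Matrix (Fin m) (Fin o) L),
      (M * N).map σ = M.map σ * N.map σ := fun σ M N => Matrix.map_mul (f := (galS K L σ : L →+* L))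
  let T : Gal(L/K) → Matrix (Fin n) (Fin d) L →+ Matrix (Fin n) (Fin d) L := fun σ =>
    { toFun := fun w => H σ * w.map σ * (B σ)⁻¹
      map_zero' := by
        rw [Matrix.map_zero _ (map_zero σ)]; simp
      map_add' := fun w w' => by
        rw [Matrix.map_add _ (map_add σ), Matrix.mul_add, Matrix.add_mul] }
  have Tdef : ∀ σ w, T σ w = H σ * w.map σ * (B σ)⁻¹ := fun _ _ => rfl
  have hT : ∀ σ (a : L) v, T σ (a • v) = σ a • T σ v := by
    intro σ a v
    rw [Tdef, Tdef]
    have : (a • v).map σ = σ a • v.map σ := by ext; simp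
    rw [this]; simp
  have hm : ∀ σ τ v, T σ (T τ v) = T (σ * τ) v := by
    intro σ τ v
    rw [Tdef, Tdef, Tdef, hmm, hmm]
    have e1 : (v.map τ).map σ = v.map (σ * τ) := by ext; simp
    have e2 : ((B τ)⁻¹).map σ * (B σ)⁻¹ = (c σ τ)⁻¹ • (B (σ * τ))⁻¹ := by
      have := hmap σ τ
      change ((B τ)⁻¹).map σ = _ at this
      rw [this, ← Matrix.mul_inv_rev, hB]
      apply Matrix.inv_eq_left_inv
      rw [Matrix.smul_mul, Matrix.mul_smul, smul_smul, inv_mul_cancel₀ (hc _ _), one_smul,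
        Matrix.nonsing_inv_mul _ (hinv _)]
    rw [← Matrix.mul_assoc, ← Matrix.mul_assoc, hHm, Matrix.mul_assoc, e2, e1]
    simp [smul_smul, inv_mul_cancel₀ (hc _ _)]
  have h1 : ∀ v, T 1 v = v := by
    intro v; rw [Tdef, hH1, hB1]
    ext; simp
  have hfr := finrank_fixed T hT hm h1
  rw [Module.finrank_matrix] at hfr
  simp only [Fintype.card_fin, Module.finrank_self, mul_one] at hfr
  have hst : ∀ (x : D), ∀ w ∈ fixedSub T hT, (ρ x * w : Matrix (Fin n) (Fin d) L) ∈ fixedSub T hT := by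
    intro x w hw σ
    have hw := hw σ
    rw [Tdef] at hw ⊢
    rw [hmm, ← Matrix.mul_assoc, hH, Matrix.mul_assoc, Matrix.mul_assoc, ← Matrix.mul_assoc (H σ), hw]
  let _ : Module D (fixedSub T hT) :=
    { smul := fun x w => ⟨ρ x * w.1, hst x w.1 w.2⟩
      one_smul := fun w => Subtype.ext (by change ρ 1 * w.1 = _; rw [map_one, Matrix.one_mul])
      mul_smul := fun x y w => Subtype.ext (by
        change ρ (x * y) * w.1 = ρ x * (ρ y * w.1); rw [map_mul, Matrix.mul_assoc])
      smul_zero := fun x => Subtype.ext (by change ρ x * (0 : Matrix (Fin n) (Fin d) L) = 0; exact Matrix.mul_zero _)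
      smul_add := fun x w w' => Subtype.ext (by
        change ρ x * (w.1 + w'.1) = ρ x * w.1 + ρ x * w'.1; rw [Matrix.mul_add])
      add_smul := fun x y w => Subtype.ext (by
        change ρ (x + y) * w.1 = ρ x * w.1 + ρ y * w.1; rw [map_add, Matrix.add_mul])
      zero_smul := fun w => Subtype.ext (by change ρ 0 * w.1 = 0; rw [map_zero]; exact Matrix.zero_mul _) }
  have : IsScalarTower K D (fixedSub T hT) := ⟨fun a x w => Subtype.ext (by
    change ρ (a • x) * w.1 = a • (ρ x * w.1)
    rw [map_smul, Matrix.smul_mul])⟩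
  have := Module.finrank_mul_finrank K D (fixedSub T hT)
  rw [hfr, hD] at this
  have h3 : n * (n * Module.finrank D (fixedSub T hT)) = n * d := by rw [← this]; ring
  exact ⟨_, (Nat.eq_of_mul_eq_mul_left (Nat.pos_of_ne_zero hn) h3).symm⟩
end
end CE

namespace CE
open scoped TensorProduct

section
variable {K L D : Type*} [Field K] [Field L] [Algebra K L] [DivisionRing D] [Algebra K D]

lemma tens_center (hZ : Subalgebra.center K D = ⊥) (x : L ⊗[K] D) (hx : ∀ y : D, (1 ⊗ₜ y) * x = x * (1 ⊗ₜ y)) :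
    ∃ l : L, x = l ⊗ₜ 1 := by
  classical
  let e := Module.Basis.ofVectorSpace K L
  let Φ := TensorProduct.equivFinsuppOfBasisLeft (N := D) e
  have hl : ∀ (y : D) (x : L ⊗[K] D) i, Φ ((1 ⊗ₜ y) * x) i = y * Φ x i := by
    intro y x i
    induction x with
    | zero => simp
    | tmul a b => simp [Φ]
    | add a b ha hb => simp only [mul_add, map_add, Finsupp.add_apply, ha, hb]
  have hr : ∀ (y : D) (x : L ⊗[K] D) i, Φ (x * (1 ⊗ₜ y)) i = Φ x i * y := by
    intro y x i
    induction x with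
    | zero => simp
    | tmul a b => simp [Φ]
    | add a b ha hb => simp only [add_mul, map_add, Finsupp.add_apply, ha, hb]
  have hc : ∀ i, ∃ a : K, algebraMap K D a = Φ x i := by
    intro i
    have : Φ x i ∈ Subalgebra.center K D := by
      rw [Subalgebra.mem_center_iff]
      intro y
      rw [← hl, ← hr, hx]
    rw [hZ] at this
    exact this
  choose a ha using hc
  refine ⟨∑ i ∈ (Φ x).support, a i • e i, ?_⟩
  rw [TensorProduct.sum_tmul]
  conv_lhs => rw [← Φ.symm_apply_apply x, TensorProduct.equivFinsuppOfBasisLeft_symm_apply, Finsupp.sum]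
  refine Finset.sum_congr rfl fun i _ => ?_
  rw [TensorProduct.smul_tmul, ← ha, Algebra.algebraMap_eq_smul_one]

lemma tens_simple (hZ : Subalgebra.center K D = ⊥) : IsSimpleRing (L ⊗[K] D) := by
  classical
  let e := Module.Basis.ofVectorSpace K L
  let Φ := TensorProduct.equivFinsuppOfBasisLeft (N := D) e
  have hl : ∀ (y : D) (x : L ⊗[K] D) i, Φ ((1 ⊗ₜ y) * x) i = y * Φ x i := by
    intro y x i
    induction x with
    | zero => simp
    | tmul a b => simp [Φ]
    | add a b ha hb => simp only [mul_add, map_add, Finsupp.add_apply, ha, hb]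
  have hr : ∀ (y : D) (x : L ⊗[K] D) i, Φ (x * (1 ⊗ₜ y)) i = Φ x i * y := by
    intro y x i
    induction x with
    | zero => simp
    | tmul a b => simp [Φ]
    | add a b ha hb => simp only [add_mul, map_add, Finsupp.add_apply, ha, hb]
  refine IsSimpleRing.of_eq_bot_or_eq_top fun I => ?_
  by_cases hI : I = ⊥
  · exact Or.inl hI
  right
  have hex : ∃ m : ℕ, ∃ x ∈ I, x ≠ 0 ∧ (Φ x).support.card = m := by
    by_contra hcon
    push Not at hcon
    apply hI
    rw [eq_bot_iff]
    intro x hx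
    by_contra h0
    exact hcon _ x hx (by simpa using h0) rfl
  obtain ⟨x, hxI, hx0, hxm⟩ := Nat.find_spec hex
  have hmin : ∀ y ∈ I, (Φ y).support.card < (Φ x).support.card → y = 0 := by
    intro y hy hlt
    by_contra h0
    exact Nat.find_min hex (hxm ▸ hlt) ⟨y, hy, h0, rfl⟩
  have : ∃ i, Φ x i ≠ 0 := by
    by_contra hcon
    push Not at hcon
    apply hx0
    apply Φ.injective
    rw [map_zero]; ext i; simp [hcon i]
  obtain ⟨i0, hi0⟩ := this
  let z := (1 ⊗ₜ (Φ x i0)⁻¹) * x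
  have hzI : z ∈ I := I.mul_mem_left _ _ hxI
  have hz1 : Φ z i0 = 1 := by rw [hl, inv_mul_cancel₀ hi0]
  have hcomm : ∀ y : D, (1 ⊗ₜ y) * z = z * (1 ⊗ₜ y) := by
    intro y
    rw [← sub_eq_zero]
    apply hmin
    · exact I.sub_mem (I.mul_mem_left _ _ hzI) (I.mul_mem_right _ _ hzI)
    · apply Finset.card_lt_card
      refine ⟨fun i hi => ?_, fun hs => ?_⟩
      · rw [Finsupp.mem_support_iff] at hi ⊢
        intro h0
        apply hi
        rw [map_sub, Finsupp.sub_apply, hl, hr, hl, h0]; simp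
      · have := hs (Finsupp.mem_support_iff.mpr hi0)
        rw [Finsupp.mem_support_iff] at this
        apply this
        rw [map_sub, Finsupp.sub_apply, hl, hr, hz1]; simp
  obtain ⟨l, hlz⟩ := tens_center hZ z hcomm
  have hl0 : l ≠ 0 := by
    rintro rfl
    rw [hlz] at hz1
    simp at hz1
  rw [← TwoSidedIdeal.one_mem_iff]
  have := I.mul_mem_left (l⁻¹ ⊗ₜ 1) _ hzI
  rw [hlz, Algebra.TensorProduct.tmul_mul_tmul, inv_mul_cancel₀ hl0, one_mul] at this
  exact this

lemma split_sepClosed (hZ : Subalgebra.center K D = ⊥) [FiniteDimensional K D] [IsSepClosed L] : ∃ (n : ℕ) (_ : n ≠ 0),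
    Nonempty (L ⊗[K] D ≃ₐ[L] Matrix (Fin n) (Fin n) L) := by
  have := tens_simple (L := L) hZ
  have : IsArtinianRing (L ⊗[K] D) := IsArtinianRing.of_finite L _
  obtain ⟨n, hn, D', _, _, _, ⟨e⟩⟩ := IsSimpleRing.exists_algEquiv_matrix_divisionRing_finite L (L ⊗[K] D)
  refine ⟨n, NeZero.ne n, ?_⟩
  have hcen : Algebra.IsCentral L D' := ⟨fun y hy => by
    rw [Subalgebra.mem_center_iff] at hy
    obtain ⟨l, hl⟩ := tens_center hZ (e.symm (Matrix.scalar (Fin n) y)) (fun z => by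
      apply e.injective
      rw [map_mul, map_mul, e.apply_symm_apply]
      exact (Matrix.scalar_commute y (fun r => (hy r).symm) _).symm)
    rw [e.symm_apply_eq] at hl
    have h2 : l ⊗ₜ (1 : D) = algebraMap L (L ⊗[K] D) l := rfl
    rw [h2, AlgEquiv.commutes] at hl
    have := congrFun (congrFun hl 0) 0
    simp [Matrix.algebraMap_matrix_apply] at this
    exact ⟨l, this.symm⟩⟩
  have htop : (⊥ : Subalgebra L D') = ⊤ := by
    by_contra hne
    obtain ⟨x, hx, hsep⟩ := JacobsonNoether.exists_separable_and_not_isCentral' hne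
    apply hx
    have := IsSepClosed.degree_eq_one_of_irreducible L (minpoly.irreducible (Algebra.IsIntegral.isIntegral (R := L) x)) hsep
    exact minpoly.mem_range_of_degree_eq_one L x this
  have e2 : L ≃ₐ[L] D' := AlgEquiv.ofBijective (Algebra.ofId L D') ⟨(algebraMap L D').injective, fun y => by
    have : y ∈ (⊥ : Subalgebra L D') := htop ▸ Algebra.mem_top
    exact this⟩
  exact ⟨e.trans e2.symm.mapMatrix⟩

lemma tens_bij (hZ : Subalgebra.center K D = ⊥) [FiniteDimensional K D] {n : ℕ} (hD : Module.finrank K D = n ^ 2) (hn : n ≠ 0)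
    (ρ : D →ₐ[K] Matrix (Fin n) (Fin n) L) :
    ∃ e : L ⊗[K] D ≃ₐ[L] Matrix (Fin n) (Fin n) L, ∀ x, e (1 ⊗ₜ x) = ρ x := by
  have := tens_simple (L := L) hZ
  have : Nontrivial (Matrix (Fin n) (Fin n) L) := by
    have : Nonempty (Fin n) := ⟨⟨0, Nat.pos_of_ne_zero hn⟩⟩
    infer_instance
  let f : L ⊗[K] D →ₐ[L] Matrix (Fin n) (Fin n) L :=
    Algebra.TensorProduct.lift (Algebra.ofId L _) ρ (fun l x => Algebra.commutes l _)
  have hinj : Function.Injective f := f.toRingHom.injective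
  have hdim : Module.finrank L (L ⊗[K] D) = Module.finrank L (Matrix (Fin n) (Fin n) L) := by
    rw [Module.finrank_baseChange, hD, Module.finrank_matrix]; simp [pow_two]
  have hsurj : Function.Surjective f := (LinearMap.injective_iff_surjective_of_finrank_eq_finrank (f := f.toLinearMap) hdim).mp hinj
  refine ⟨AlgEquiv.ofBijective f ⟨hinj, hsurj⟩, fun x => ?_⟩
  change f (1 ⊗ₜ x) = ρ x
  exact (Algebra.TensorProduct.lift_tmul _ _ _ _ _).trans (by rw [map_one, one_mul])

lemma comm_scalar (hZ : Subalgebra.center K D = ⊥) [FiniteDimensional K D] {n : ℕ} (hD : Module.finrank K D = n ^ 2) (hn : n ≠ 0)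
    (ρ : D →ₐ[K] Matrix (Fin n) (Fin n) L) (M : Matrix (Fin n) (Fin n) L) (hM : ∀ x, ρ x * M = M * ρ x) :
    ∃ a : L, M = a • 1 := by
  obtain ⟨e, he⟩ := tens_bij hZ hD hn ρ
  obtain ⟨l, hl⟩ := tens_center hZ (e.symm M) (fun y => e.injective (by
    rw [map_mul, map_mul, e.apply_symm_apply, he, hM]))
  refine ⟨l, ?_⟩
  rw [e.symm_apply_eq] at hl
  have h2 : l ⊗ₜ (1 : D) = algebraMap L (L ⊗[K] D) l := rfl
  rw [hl, h2, AlgEquiv.commutes, Algebra.algebraMap_eq_smul_one]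

lemma exists_H (hZ : Subalgebra.center K D = ⊥) [FiniteDimensional K D] {n : ℕ} (hD : Module.finrank K D = n ^ 2) (hn : n ≠ 0)
    (ρ : D →ₐ[K] Matrix (Fin n) (Fin n) L) (σ : Gal(L/K)) :
    ∃ H : Matrix (Fin n) (Fin n) L, IsUnit H.det ∧ ∀ x, H * (ρ x).map σ = ρ x * H := by
  obtain ⟨e, he⟩ := tens_bij hZ hD hn ρ
  obtain ⟨e', he'⟩ := tens_bij hZ hD hn ((σ : L →ₐ[K] L).mapMatrix.comp ρ)
  let f := e'.symm.trans e
  let E : Matrix (Fin n) (Fin n) L ≃ₐ[L] ((Fin n → L) →ₗ[L] (Fin n → L)) := Matrix.toLinAlgEquiv'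
  obtain ⟨T, hT⟩ := AlgEquiv.eq_linearEquivConjAlgEquiv ((E.symm.trans f).trans E)
  refine ⟨E.symm T, ?_, fun x => ?_⟩
  · rw [← Matrix.isUnit_iff_isUnit_det]
    refine IsUnit.of_mul_eq_one (E.symm T.symm) ?_
    · rw [← map_mul, ← map_one E.symm]
      congr 1
      ext; simp
  · have h1 : f ((ρ x).map σ) = ρ x := by
      have : (ρ x).map σ = e' (1 ⊗ₜ x) := by rw [he']; rfl
      simp [f, this, he]
    have h2 := DFunLike.congr_fun hT (E ((ρ x).map σ))
    simp only [AlgEquiv.trans_apply, E.symm_apply_apply, h1] at h2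
    apply E.injective
    rw [map_mul, map_mul, E.apply_symm_apply, h2]
    ext; simp
end

/-- splitting data for a central division algebra -/
structure SplitData (K D : Type) [Field K] [DivisionRing D] [Algebra K D] where
  n : ℕ
  hn : n ≠ 0
  L : Type
  [fL : Field L]
  [aL : Algebra K L]
  [fdL : FiniteDimensional K L]
  [galL : IsGalois K L]
  ρ : D →ₐ[K] Matrix (Fin n) (Fin n) L
  H : Gal(L/K) → Matrix (Fin n) (Fin n) L
  c : Gal(L/K) → Gal(L/K) → L
  hD : Module.finrank K D = n ^ 2
  hc : ∀ σ τ, c σ τ ≠ 0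
  hu : ∀ σ, IsUnit (H σ).det
  hH : ∀ σ x, H σ * (ρ x).map σ = ρ x * H σ
  hH1 : H 1 = 1
  hHm : ∀ σ τ, H σ * (H τ).map σ = c σ τ • H (σ * τ)

attribute [instance] SplitData.fL SplitData.aL SplitData.fdL SplitData.galL

lemma exists_rho {K D : Type} [Field K] [DivisionRing D] [Algebra K D] [FiniteDimensional K D]
    (hZ : Subalgebra.center K D = ⊥) : ∃ (n : ℕ) (_ : n ≠ 0) (L : Type) (_ : Field L) (_ : Algebra K L)
      (_ : FiniteDimensional K L) (_ : IsGalois K L) (_ : D →ₐ[K] Matrix (Fin n) (Fin n) L), Module.finrank K D = n ^ 2 := by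
  obtain ⟨n, hn, ⟨e⟩⟩ := split_sepClosed (L := SeparableClosure K) hZ
  have hD : Module.finrank K D = n ^ 2 := by
    have := e.toLinearEquiv.finrank_eq
    rw [Module.finrank_baseChange, Module.finrank_matrix] at this
    simpa [pow_two] using this
  let ρ : D →ₐ[K] Matrix (Fin n) (Fin n) (SeparableClosure K) :=
    (e.toAlgHom.restrictScalars K).comp Algebra.TensorProduct.includeRight
  let b := Module.finBasis K D
  let S : Set (SeparableClosure K) := Set.range (fun x : Fin (Module.finrank K D) × Fin n × Fin n => ρ (b x.1) x.2.1 x.2.2)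
  have : Finite S := Set.finite_range _
  let L := FiniteGaloisIntermediateField.adjoin K S
  have hmem : ∀ x i j, ρ x i j ∈ L.toIntermediateField := by
    intro x i j
    rw [← b.sum_repr x, map_sum]
    simp only [map_smul, Matrix.sum_apply, Matrix.smul_apply]
    refine sum_mem fun t _ => ?_
    refine IntermediateField.smul_mem _ ?_
    exact FiniteGaloisIntermediateField.subset_adjoin K S ⟨(t, i, j), rfl⟩
  refine ⟨n, hn, L.toIntermediateField, inferInstance, inferInstance, L.finiteDimensional, L.isGalois, ?_, hD⟩
  refine
    { toFun := fun x => Matrix.of fun i j => ⟨ρ x i j, hmem x i j⟩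
      map_one' := ?_
      map_mul' := ?_
      map_zero' := ?_
      map_add' := ?_
      commutes' := ?_ }
  · ext i j; simp [Matrix.one_apply]; split_ifs <;> rfl
  · intro x y; ext i j; simp [Matrix.mul_apply]
  · ext i j; simp
  · intro x y; ext i j; simp
  · intro r; ext i j
    simp only [Matrix.of_apply, AlgHom.commutes, Matrix.algebraMap_matrix_apply]
    split_ifs <;> rfl

theorem exists_splitData {K D : Type} [Field K] [DivisionRing D] [Algebra K D] [FiniteDimensional K D]
    (hZ : Subalgebra.center K D = ⊥) : Nonempty (SplitData K D) := by
  classical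
  obtain ⟨n, hn, L, _, _, _, _, ρ, hD⟩ := exists_rho hZ
  choose H0 hu0 hH0 using exists_H hZ hD hn ρ
  let H : Gal(L/K) → Matrix (Fin n) (Fin n) L := fun σ => if σ = 1 then 1 else H0 σ
  have hu : ∀ σ, IsUnit (H σ).det := by
    intro σ
    by_cases h : σ = 1
    · simp [H, h]
    · simpa [H, h] using hu0 σ
  have hH : ∀ σ x, H σ * (ρ x).map σ = ρ x * H σ := by
    intro σ x
    by_cases h : σ = 1
    · subst h
      simp only [H, if_true, one_mul, mul_one]
      ext; simp
    · simpa [H, h] using hH0 σ x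
  have hmm : ∀ (σ : Gal(L/K)) (M N : Matrix (Fin n) (Fin n) L),
      (M * N).map σ = M.map σ * N.map σ := fun σ M N => Matrix.map_mul (f := (galS K L σ : L →+* L))
  have hex : ∀ σ τ, ∃ a : L, a ≠ 0 ∧ H σ * (H τ).map σ = a • H (σ * τ) := by
    intro σ τ
    obtain ⟨a, ha⟩ := comm_scalar hZ hD hn ρ (H σ * (H τ).map σ * (H (σ * τ))⁻¹) (fun x => by
      have e1 : ρ x * (H σ * (H τ).map σ) = (H σ * (H τ).map σ) * (ρ x).map (σ * τ) := by
        have : (ρ x).map (σ * τ) = ((ρ x).map τ).map σ := by ext; simp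
        rw [this, mul_assoc, ← hmm, hH τ, hmm, ← mul_assoc, ← mul_assoc, hH]
      have e2 : (ρ x).map (σ * τ) * (H (σ * τ))⁻¹ = (H (σ * τ))⁻¹ * ρ x := by
        have h := hH (σ * τ) x
        have h3 := congrArg (fun M => (H (σ * τ))⁻¹ * M * (H (σ * τ))⁻¹) h
        rw [← mul_assoc, Matrix.nonsing_inv_mul _ (hu _), one_mul, mul_assoc, mul_assoc,
          Matrix.mul_nonsing_inv _ (hu _), mul_one] at h3
        exact h3
      rw [← mul_assoc, e1, mul_assoc, e2, mul_assoc _ _ (ρ x)])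
    have h2 : H σ * (H τ).map σ = a • H (σ * τ) := by
      have := congrArg (· * H (σ * τ)) ha
      simpa [mul_assoc, Matrix.nonsing_inv_mul _ (hu (σ * τ))] using this
    refine ⟨a, ?_, h2⟩
    rintro rfl
    have : Nonempty (Fin n) := Fin.pos_iff_nonempty.mp (Nat.pos_of_ne_zero hn)
    have h3 := congrArg Matrix.det h2
    rw [Matrix.det_mul, zero_smul, Matrix.det_zero] at h3
    have h4 : IsUnit ((H τ).map σ).det := by
      have := (hu τ).map (galS K L σ : L →+* L)
      rwa [RingHom.map_det] at this
    exact ((hu σ).mul h4).ne_zero h3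
  choose c hc hcm using hex
  exact ⟨{ n := n, hn := hn, L := L, ρ := ρ, H := H, c := c, hD := hD, hc := hc, hu := hu, hH := hH, hH1 := by simp [H], hHm := hcm }⟩

theorem SplitData.hasRep {K D : Type} [Field K] [DivisionRing D] [Algebra K D] (S : SplitData K D) :
    HasRep (galS K S.L) S.c 1 S.n := ⟨S.H, S.hH1, fun σ τ => by rw [zpow_one]; exact S.hHm σ τ⟩

theorem SplitData.dvd {K D : Type} [Field K] [DivisionRing D] [Algebra K D] (S : SplitData K D) {p : ℕ} (hp : p.Prime)
    {t : ℤ} (hpt : ¬ (p : ℤ) ∣ t) {d : ℕ} (h : HasRep (galS K S.L) S.c t d) : p ^ S.n.factorization p ∣ d :=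
  HasRep.ind S.hc S.hn S.hasRep (fun d h => rep_dvd S.hn S.hD S.ρ S.H S.c S.hc S.hH S.hH1 S.hHm d h) hp hpt h

end CE

namespace CE
open scoped TensorProduct

section
variable {k : Type*} [Field k] [IsAlgClosed k]

lemma exists_point {A : Type*} [CommRing A] [Nontrivial A] [Algebra k A] [Algebra.FiniteType k A] :
    Nonempty (A →ₐ[k] k) := by
  obtain ⟨m, hm⟩ := Ideal.exists_maximal A
  let _ : Field (A ⧸ m) := Ideal.Quotient.field m
  have : Algebra.FiniteType k (A ⧸ m) := inferInstance
  have : Module.Finite k (A ⧸ m) := finite_of_finite_type_of_isJacobsonRing k (A ⧸ m)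
  have hb : Function.Bijective (Algebra.ofId k (A ⧸ m)) := IsAlgClosed.algebraMap_bijective_of_isIntegral
  exact ⟨((AlgEquiv.ofBijective (Algebra.ofId k (A ⧸ m)) hb).symm : (A ⧸ m) →ₐ[k] k).comp (Ideal.Quotient.mkₐ k m)⟩

lemma spec1 {L : Type*} [Field L] [Algebra k L] (S : Finset L) :
    ∃ A : Subalgebra k L, (∀ x ∈ S, x ∈ A) ∧ ∃ χ : A →ₐ[k] k, ∀ a : A, (a : L) ∈ S → a ≠ 0 → χ a ≠ 0 := by
  classical
  let S' : Finset L := S ∪ S.image (·⁻¹)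
  let A := Algebra.adjoin k (S' : Set L)
  have : Algebra.FiniteType k A := ⟨(Subalgebra.fg_top _).mpr ⟨S', rfl⟩⟩
  obtain ⟨χ⟩ := exists_point (k := k) (A := A)
  refine ⟨A, fun x hx => Algebra.subset_adjoin (by simp [S', hx]), χ, fun a ha h0 h => ?_⟩
  have hinv : (a : L)⁻¹ ∈ A := Algebra.subset_adjoin (by simp [S', ha])
  have : a * ⟨(a : L)⁻¹, hinv⟩ = 1 := Subtype.ext (by
    simp; exact mul_inv_cancel₀ (fun h => h0 (Subtype.ext h)))
  have := congrArg χ this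
  rw [map_mul, h, zero_mul, map_one] at this
  exact zero_ne_one this

variable {K L : Type*} [Field K] [Field L] [Algebra k K] [Algebra k L]

/-- evaluation map -/
noncomputable def evπ {A : Subalgebra k L} (χ : A →ₐ[k] k) : K ⊗[k] A →ₐ[k] K :=
  Algebra.TensorProduct.lift (AlgHom.id k K) ((Algebra.ofId k K).comp χ) (fun _ _ => Commute.all _ _)

lemma evπ_tmul {A : Subalgebra k L} (χ : A →ₐ[k] k) (x : K) (a : A) : evπ χ (x ⊗ₜ a) = χ a • x := by
  rw [evπ, Algebra.TensorProduct.lift_tmul, Algebra.smul_def, mul_comm]; rfl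

variable (K) in
/-- inclusion map -/
noncomputable def incj (A : Subalgebra k L) : K ⊗[k] A →ₐ[k] K ⊗[k] L :=
  Algebra.TensorProduct.map (AlgHom.id k K) A.val

lemma incj_inj (A : Subalgebra k L) : Function.Injective (incj K A) :=
  Module.Flat.lTensor_preserves_injective_linearMap (M := K) A.val.toLinearMap Subtype.val_injective

lemma spec2 {ι : Type*} [Finite ι] (f : ι → K ⊗[k] L) :
    ∃ (A : Subalgebra k L) (χ : A →ₐ[k] k), ∀ i, ∃ y : K ⊗[k] A, incj K A y = f i ∧ (f i ≠ 0 → evπ χ y ≠ 0) := by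
  classical
  have := Fintype.ofFinite ι
  let e := Module.Basis.ofVectorSpace k K
  let Φ := TensorProduct.equivFinsuppOfBasisLeft (N := L) e
  let S : Finset L := Finset.univ.biUnion fun i => (Φ (f i)).support.image (Φ (f i))
  obtain ⟨A, hSA, χ, hχ⟩ := spec1 (k := k) S
  refine ⟨A, χ, fun i => ?_⟩
  have hS : ∀ j ∈ (Φ (f i)).support, Φ (f i) j ∈ S := fun j hj =>
    Finset.mem_biUnion.mpr ⟨i, Finset.mem_univ _, Finset.mem_image.mpr ⟨j, hj, rfl⟩⟩
  let a : (Φ (f i)).support → A := fun j => ⟨Φ (f i) j, hSA _ (hS j j.2)⟩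
  refine ⟨∑ j : (Φ (f i)).support, e (j : Module.Basis.ofVectorSpaceIndex k K) ⊗ₜ a j, ?_, fun h0 h => ?_⟩
  · rw [map_sum]
    conv_rhs => rw [← Φ.symm_apply_apply (f i), TensorProduct.equivFinsuppOfBasisLeft_symm_apply, Finsupp.sum,
      ← Finset.sum_coe_sort]
    refine Finset.sum_congr rfl fun j _ => ?_
    simp [incj, a]
  · rw [map_sum] at h
    simp only [evπ_tmul] at h
    have hli := e.linearIndependent.comp (fun j : (Φ (f i)).support => (j : Module.Basis.ofVectorSpaceIndex k K)) Subtype.val_injective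
    have hz := Fintype.linearIndependent_iff.mp hli _ h
    apply h0
    apply Φ.injective
    rw [map_zero]
    ext j
    by_contra hj
    have hj' : j ∈ (Φ (f i)).support := Finsupp.mem_support_iff.mpr hj
    exact hχ (a ⟨j, hj'⟩) (hS j hj') (fun h => hj (congrArg Subtype.val h)) (hz ⟨j, hj'⟩)

lemma tens_domain : IsDomain (K ⊗[k] L) := by
  have : Nontrivial (K ⊗[k] L) := inferInstance
  refine @NoZeroDivisors.to_isDomain _ _ _ ⟨fun {x y} hxy => ?_⟩
  by_contra hcon
  push Not at hcon
  obtain ⟨A, χ, h⟩ := spec2 (k := k) (fun b : Bool => if b then x else y)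
  obtain ⟨x', hx, hx0⟩ := h true
  obtain ⟨y', hy, hy0⟩ := h false
  simp only [if_true, Bool.false_eq_true, if_false] at hx hx0 hy hy0
  have : x' * y' = 0 := incj_inj A (by rw [map_mul, hx, hy, hxy, map_zero])
  have := congrArg (evπ χ) this
  rw [map_mul, map_zero] at this
  exact mul_ne_zero (hx0 hcon.1) (hy0 hcon.2) this

/-- action on the first factor -/
noncomputable def act1 (L : Type*) [CommRing L] [Algebra k L] (σ : K ≃ₐ[k] K) : K ⊗[k] L →ₐ[k] K ⊗[k] L :=
  Algebra.TensorProduct.map (σ : K →ₐ[k] K) (AlgHom.id k L)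

@[simp] lemma act1_tmul {L : Type*} [CommRing L] [Algebra k L] (σ : K ≃ₐ[k] K) (x : K) (y : L) :
    act1 L σ (x ⊗ₜ y) = σ x ⊗ₜ y := rfl

lemma incj_act1 (A : Subalgebra k L) (σ : K ≃ₐ[k] K) (y : K ⊗[k] A) :
    incj K A (act1 A σ y) = act1 L σ (incj K A y) := by
  induction y with
  | zero => simp
  | tmul a b => simp [incj]
  | add a b ha hb => simp only [map_add, ha, hb]

lemma evπ_act1 {A : Subalgebra k L} (χ : A →ₐ[k] k) (σ : K ≃ₐ[k] K) (y : K ⊗[k] A) :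
    evπ χ (act1 A σ y) = σ (evπ χ y) := by
  induction y with
  | zero => simp
  | tmul a b => simp [evπ_tmul]
  | add a b ha hb => simp only [map_add, ha, hb]

theorem HasRep.spec {G : Type} [Group G] [Finite G] {Ω : Type*} [Field Ω] (θ : K ⊗[k] L →+* Ω)
    (hθ : Function.Injective θ)
    (hfrac : ∀ (ι : Type) [Finite ι] (f : ι → Ω), ∃ b ≠ 0, ∃ a : ι → K ⊗[k] L, ∀ i, θ b * f i = θ (a i))
    (s : G →* (Ω ≃+* Ω)) (sK : G →* (K ≃+* K)) (sK' : G → (K ≃ₐ[k] K)) (hsK : ∀ σ x, sK σ x = sK' σ x)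
    (hs : ∀ σ x, s σ (θ x) = θ (act1 L (sK' σ) x))
    (c : G → G → K) {t : ℤ} {d : ℕ}
    (h : HasRep s (fun σ τ => θ (c σ τ ⊗ₜ 1)) t d) : HasRep sK c t d := by
  obtain ⟨M, hM1, hM⟩ := h
  obtain ⟨b, hb0, a, ha⟩ := hfrac (G × Fin d × Fin d) (fun x => M x.1 x.2.1 x.2.2)
  obtain ⟨A, χ, hy⟩ := spec2 (fun o : Option (G × Fin d × Fin d) => o.elim b a)
  obtain ⟨yb, hyb, hyb0⟩ := hy none
  choose ya hya _ using fun x => hy (some x)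
  simp only [Option.elim_none] at hyb hyb0
  simp only [Option.elim_some] at hya
  have hθc : ∀ x : K, ∀ n : ℤ, θ (x ⊗ₜ 1) ^ n = θ ((x ^ n) ⊗ₜ 1) := by
    intro x n
    exact (map_zpow₀ (θ.comp (Algebra.TensorProduct.includeLeftRingHom)) x n).symm
  have hθb : θ b ≠ 0 := fun h => hb0 (hθ (by rw [h, map_zero]))
  have hpb : evπ χ yb ≠ 0 := hyb0 hb0
  have key : ∀ σ τ i l, ∑ j, ya (σ, i, j) * act1 A (sK' σ) (ya (τ, j, l)) =
      (((c σ τ) ^ t : K) ⊗ₜ[k] (1 : A)) * ya (σ * τ, i, l) * act1 A (sK' σ) yb := by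
    intro σ τ i l
    apply incj_inj A
    apply hθ
    have hA := congrFun (congrFun (hM σ τ) i) l
    rw [Matrix.mul_apply, Matrix.smul_apply, smul_eq_mul, hθc] at hA
    have e1 : incj K A (((c σ τ) ^ t : K) ⊗ₜ[k] (1 : A)) = ((c σ τ) ^ t : K) ⊗ₜ[k] (1 : L) := by simp [incj]
    simp only [map_sum, map_mul, hya, hyb, incj_act1, e1, ← ha, ← hs]
    have hA2 := congrArg (fun z => θ b * s σ (θ b) * z) hA
    simp only [Finset.mul_sum, Matrix.map_apply] at hA2
    calc _ = _ := Finset.sum_congr rfl fun j _ => by ring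
      _ = _ := hA2
      _ = _ := by ring
  have key1 : ∀ i j, ya (1, i, j) = (1 : Matrix (Fin d) (Fin d) (K ⊗[k] A)) i j * yb := by
    intro i j
    apply incj_inj A
    apply hθ
    rw [hya, map_mul, hyb, ← ha, hM1]
    by_cases hij : i = j
    · subst hij; simp
    · simp [Matrix.one_apply, hij]
  refine ⟨fun σ => Matrix.of fun i j => evπ χ (ya (σ, i, j)) / evπ χ yb, ?_, ?_⟩
  · ext i j
    change evπ χ (ya (1, i, j)) / evπ χ yb = _
    rw [key1]
    by_cases hij : i = j
    · subst hij; simp [hpb]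
    · simp [Matrix.one_apply, hij]
  · intro σ τ
    ext i l
    have h1 := congrArg (evπ χ) (key σ τ i l)
    simp only [map_sum, map_mul, evπ_act1, evπ_tmul, map_one, one_smul] at h1
    have hpb' : sK' σ (evπ χ yb) ≠ 0 := by simpa using hpb
    simp only [Matrix.mul_apply, Matrix.map_apply, Matrix.of_apply, Matrix.smul_apply, smul_eq_mul, hsK, map_div₀]
    have h2 : ∀ j, evπ χ (ya (σ, i, j)) / evπ χ yb * (sK' σ (evπ χ (ya (τ, j, l))) / sK' σ (evπ χ yb)) =
        (evπ χ (ya (σ, i, j)) * sK' σ (evπ χ (ya (τ, j, l)))) * (evπ χ yb * sK' σ (evπ χ yb))⁻¹ := by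
      intro j; field_simp
    simp only [h2]
    rw [← Finset.sum_mul, h1]
    field_simp
end
end CE

namespace CE
open MvPolynomial

section
variable {Ω ι : Type} [Field Ω] [Fintype ι] [DecidableEq ι]

variable (Ω ι) in
/-- The generic matrix. -/
noncomputable def gm : Matrix ι ι (MvPolynomial (ι × ι) Ω) := Matrix.of fun i l => X (i, l)

/-- constant matrices -/
noncomputable def mC (A : Matrix ι ι Ω) : Matrix ι ι (MvPolynomial (ι × ι) Ω) := A.map C

lemma mC_mul (A B : Matrix ι ι Ω) : mC (A * B) = mC A * mC B := Matrix.map_mul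

lemma mC_one : mC (1 : Matrix ι ι Ω) = 1 := Matrix.map_one _ C.map_zero C.map_one

/-- The substitution `g ↦ A g B`, semilinear with respect to `s`. -/
noncomputable def phi (s : Ω →+* Ω) (A B : Matrix ι ι Ω) : MvPolynomial (ι × ι) Ω →+* MvPolynomial (ι × ι) Ω :=
  eval₂Hom (C.comp s) fun p => (mC A * gm Ω ι * mC B) p.1 p.2

@[simp] lemma phi_C (s : Ω →+* Ω) (A B : Matrix ι ι Ω) (a : Ω) : phi s A B (C a) = C (s a) := by
  simp [phi]

@[simp] lemma phi_X (s : Ω →+* Ω) (A B : Matrix ι ι Ω) (p : ι × ι) :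
    phi s A B (X p) = (mC A * gm Ω ι * mC B) p.1 p.2 := by
  simp [phi]

lemma phi_gm (s : Ω →+* Ω) (A B : Matrix ι ι Ω) :
    (gm Ω ι).map (phi s A B) = mC A * gm Ω ι * mC B := by
  ext1 i l
  simp [gm]

lemma phi_mapC (s : Ω →+* Ω) (A B M : Matrix ι ι Ω) :
    (mC M).map (phi s A B) = mC (M.map s) := by
  ext1 i l
  simp [mC]

lemma phi_comp (s s' : Ω →+* Ω) (A B A' B' : Matrix ι ι Ω) :
    (phi s A B).comp (phi s' A' B') = phi (s.comp s') (A'.map s * A) (B * B'.map s) := by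
  apply MvPolynomial.ringHom_ext
  · intro r; simp
  · intro p
    rw [RingHom.comp_apply, phi_X, phi_X]
    have : ((mC A' * gm Ω ι * mC B').map (phi s A B)) =
       (mC (A'.map s * A) * gm Ω ι * mC (B * B'.map s)) := by
      rw [Matrix.map_mul, Matrix.map_mul, phi_mapC, phi_mapC, phi_gm, mC_mul, mC_mul]
      simp only [Matrix.mul_assoc]
    exact congrFun (congrFun this p.1) p.2

lemma phi_id : phi (RingHom.id Ω) (1 : Matrix ι ι Ω) 1 = RingHom.id _ := by
  apply MvPolynomial.ringHom_ext
  · intro r; simp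
  · intro p
    rw [phi_X, mC_one]
    simp [gm]

variable (Ω ι) in
/-- Twisted automorphism data. -/
structure Tw where
  s : Ω ≃+* Ω
  A : Matrix ι ι Ω
  A' : Matrix ι ι Ω
  B : Matrix ι ι Ω
  B' : Matrix ι ι Ω
  hA : A * A' = 1
  hB : B * B' = 1

/-- The substitution attached to a twisted automorphism. -/
noncomputable def Tw.φ (α : Tw Ω ι) : MvPolynomial (ι × ι) Ω →+* MvPolynomial (ι × ι) Ω :=
  phi (α.s : Ω →+* Ω) α.A α.B

lemma Tw.φ_inj (α : Tw Ω ι) : Function.Injective α.φ := by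
  have hB := mul_eq_one_comm.mp α.hB
  have h : (phi (α.s.symm : Ω →+* Ω) (α.A'.map α.s.symm) (α.B'.map α.s.symm)).comp α.φ = RingHom.id _ := by
    rw [Tw.φ, phi_comp, ← phi_id]
    congr 1
    · ext x; simp
    · have := congrArg (fun M => M.map (α.s.symm : Ω →+* Ω)) α.hA
      simpa [Matrix.map_mul] using this
    · have := congrArg (fun M => M.map (α.s.symm : Ω →+* Ω)) hB
      simpa [Matrix.map_mul] using this
  exact Function.LeftInverse.injective (g := phi (α.s.symm : Ω →+* Ω) (α.A'.map α.s.symm) (α.B'.map α.s.symm))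
    (fun x => RingHom.congr_fun h x)

/-- The extension to the fraction field. -/
noncomputable def Tw.φΨ (α : Tw Ω ι) :
    FractionRing (MvPolynomial (ι × ι) Ω) →+* FractionRing (MvPolynomial (ι × ι) Ω) :=
  IsFractionRing.lift (A := MvPolynomial (ι × ι) Ω) (g := (algebraMap _ (FractionRing (MvPolynomial (ι × ι) Ω))).comp α.φ)
    ((IsFractionRing.injective _ _).comp α.φ_inj)

lemma Tw.φΨ_algebraMap (α : Tw Ω ι) (x : MvPolynomial (ι × ι) Ω) :
    α.φΨ (algebraMap _ _ x) = algebraMap _ _ (α.φ x) :=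
  IsFractionRing.lift_algebraMap _ _

variable (Ω ι) in
/-- The constants. -/
noncomputable def cΨ : Ω →+* FractionRing (MvPolynomial (ι × ι) Ω) :=
  (algebraMap (MvPolynomial (ι × ι) Ω) _).comp C

lemma Tw.φΨ_c (α : Tw Ω ι) (x : Ω) : α.φΨ (cΨ Ω ι x) = cΨ Ω ι (α.s x) := by
  rw [cΨ, RingHom.comp_apply, Tw.φΨ_algebraMap, Tw.φ, phi_C]; rfl

lemma Tw.φΨ_cM (α : Tw Ω ι) (M : Matrix ι ι Ω) : (M.map (cΨ Ω ι)).map α.φΨ = (M.map α.s).map (cΨ Ω ι) := by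
  ext i l; simp [Tw.φΨ_c]

variable (Ω ι) in
/-- The generic matrix in the fraction field. -/
noncomputable def gΨ : Matrix ι ι (FractionRing (MvPolynomial (ι × ι) Ω)) := (gm Ω ι).map (algebraMap _ _)

lemma Tw.φΨ_g (α : Tw Ω ι) : (gΨ Ω ι).map α.φΨ = α.A.map (cΨ Ω ι) * gΨ Ω ι * α.B.map (cΨ Ω ι) := by
  have h := congrArg (fun M => M.map (algebraMap (MvPolynomial (ι × ι) Ω) (FractionRing (MvPolynomial (ι × ι) Ω))))
    (phi_gm (α.s : Ω →+* Ω) α.A α.B)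
  simp only [Matrix.map_mul] at h
  calc (gΨ Ω ι).map α.φΨ = ((gm Ω ι).map α.φ).map (algebraMap _ _) := by
        ext i l; simp [gΨ, Tw.φΨ_algebraMap]
    _ = _ := h

lemma gΨ_unit : IsUnit (gΨ Ω ι).det := by
  rw [isUnit_iff_ne_zero, gΨ]
  have h := Matrix.det_mvPolynomialX_ne_zero ι Ω
  have h2 : (gm Ω ι) = Matrix.mvPolynomialX ι ι Ω := rfl
  rw [← h2] at h
  intro h0
  apply h
  apply IsFractionRing.injective (MvPolynomial (ι × ι) Ω) (FractionRing (MvPolynomial (ι × ι) Ω))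
  rw [RingHom.map_det, map_zero]
  exact h0

/-- semilinear operator -/
noncomputable def Tw.TΨ (α : Tw Ω ι) (v : ι → FractionRing (MvPolynomial (ι × ι) Ω)) :
    ι → FractionRing (MvPolynomial (ι × ι) Ω) :=
  Matrix.mulVec (α.A'.map (cΨ Ω ι)) (fun i => α.φΨ (v i))

end
end CE

namespace CE
open MvPolynomial

lemma descent_indep {Ψ V I Γ : Type*} [Field Ψ] [AddCommGroup V] [Module Ψ V] (φ : Γ → Ψ →+* Ψ) (T : Γ → V →+ V)
    (hT : ∀ γ c v, T γ (c • v) = φ γ c • T γ v) (f : I → V) (hf : ∀ γ i, T γ (f i) = f i)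
    (h0 : ∀ l : I →₀ Ψ, (∀ γ i, φ γ (l i) = l i) → Finsupp.linearCombination Ψ f l = 0 → l = 0) :
    LinearIndependent Ψ f := by
  classical
  rw [linearIndependent_iff]
  suffices H : ∀ (n : ℕ) (l : I →₀ Ψ), l.support.card = n → Finsupp.linearCombination Ψ f l = 0 → l = 0 from
    fun l hl => H _ l rfl hl
  intro n
  induction n using Nat.strong_induction_on with
  | _ n ih =>
    intro l hn hl
    by_contra hne
    obtain ⟨i0, hi0⟩ := Finsupp.support_nonempty_iff.mpr hne
    have hi0' : l i0 ≠ 0 := Finsupp.mem_support_iff.mp hi0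
    let l' : I →₀ Ψ := (l i0)⁻¹ • l
    have hl' : Finsupp.linearCombination Ψ f l' = 0 := by rw [map_smul, hl, smul_zero]
    have hl'0 : l' i0 = 1 := by simp [l', hi0']
    have hsub : ∀ i, l i = 0 → l' i = 0 := fun i hi => by simp [l', hi]
    have hfix : ∀ γ i, φ γ (l' i) = l' i := by
      intro γ
      let m : I →₀ Ψ := l'.mapRange (φ γ) (map_zero _) - l'
      have hm : Finsupp.linearCombination Ψ f m = 0 := by
        rw [map_sub, hl', sub_zero, Finsupp.linearCombination_apply, Finsupp.sum_mapRange_index (by simp)]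
        have := congrArg (T γ) hl'
        rw [Finsupp.linearCombination_apply, Finsupp.sum, map_sum, map_zero] at this
        simp only [hT, hf] at this
        exact this
      have hmi : ∀ i, m i = φ γ (l' i) - l' i := fun i => by simp [m]
      have hs : m.support ⊂ l.support := by
        refine Finset.ssubset_iff_subset_ne.mpr ⟨fun i hi => ?_, fun h => ?_⟩
        · rw [Finsupp.mem_support_iff] at hi ⊢
          intro h
          apply hi
          rw [hmi, hsub i h]; simp
        · rw [← h, Finsupp.mem_support_iff, hmi, hl'0] at hi0
          simp at hi0
      have := ih _ (hn ▸ Finset.card_lt_card hs) m rfl hm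
      intro i
      have h3 := hmi i
      rw [this] at h3
      exact (sub_eq_zero.mp h3.symm)
    have := h0 l' hfix hl'
    rw [this] at hl'0
    simp at hl'0

section
variable {Ω ι : Type} [Field Ω] [Fintype ι] [DecidableEq ι]

/-- The ring `E`. -/
noncomputable def EE (k : Type) [Field k] [Algebra k Ω] (𝒯 : Set (Tw Ω ι))
    (hk : ∀ α ∈ 𝒯, ∀ a : k, α.s (algebraMap k Ω a) = algebraMap k Ω a) :
    Subalgebra k (Matrix ι ι (FractionRing (MvPolynomial (ι × ι) Ω))) where
  carrier := {f | ∀ α ∈ 𝒯, f.map α.φΨ * α.A.map (cΨ Ω ι) = α.A.map (cΨ Ω ι) * f}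
  mul_mem' := by
    intro f g hf hg α hα
    rw [Matrix.map_mul, Matrix.mul_assoc, hg α hα, ← Matrix.mul_assoc, hf α hα, Matrix.mul_assoc]
  add_mem' := by
    intro f g hf hg α hα
    rw [Matrix.map_add _ (map_add _), Matrix.add_mul, hg α hα, hf α hα, Matrix.mul_add]
  algebraMap_mem' := by
    intro r α hα
    have h1 : algebraMap k (FractionRing (MvPolynomial (ι × ι) Ω)) r = cΨ Ω ι (algebraMap k Ω r) := by
      rw [IsScalarTower.algebraMap_apply k (MvPolynomial (ι × ι) Ω) (FractionRing (MvPolynomial (ι × ι) Ω)), IsScalarTower.algebraMap_apply k Ω (MvPolynomial (ι × ι) Ω)]; rfl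
    have h2 : (algebraMap k (Matrix ι ι (FractionRing (MvPolynomial (ι × ι) Ω))) r).map α.φΨ =
        algebraMap k (Matrix ι ι (FractionRing (MvPolynomial (ι × ι) Ω))) r := by
      ext i j
      rw [Matrix.map_apply, Matrix.algebraMap_matrix_apply]
      split_ifs
      · rw [h1, Tw.φΨ_c, hk α hα]
      · simp
    rw [h2]
    exact Algebra.commutes _ _

theorem E_exists (k : Type) [Field k] [Algebra k Ω] [Nonempty ι] (𝒯 : Set (Tw Ω ι))
    (hk : ∀ α ∈ 𝒯, ∀ a : k, α.s (algebraMap k Ω a) = algebraMap k Ω a)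
    (main : ∀ P : Submodule (FractionRing (MvPolynomial (ι × ι) Ω)) (ι → FractionRing (MvPolynomial (ι × ι) Ω)),
      (∀ α ∈ 𝒯, ∀ v ∈ P, α.TΨ v ∈ P) →
      Fintype.card ι ∣ Module.finrank (FractionRing (MvPolynomial (ι × ι) Ω)) P)
    (D₁ D₂ : Type) [DivisionRing D₁] [DivisionRing D₂] [Algebra k D₁] [Algebra k D₂]
    (r₁ : D₁ →ₐ[k] Matrix ι ι Ω) (r₂ : D₂ →ₐ[k] Matrix ι ι Ω)
    (h1 : ∀ α ∈ 𝒯, ∀ x, (r₁ x).map α.s * α.A = α.A * r₁ x)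
    (h2 : ∀ α ∈ 𝒯, ∀ y, α.B * (r₂ y).map α.s = r₂ y * α.B) :
    ∃ (E : Type) (_ : DivisionRing E) (_ : Algebra k E), FiniteDimensional (Subring.center E) E ∧
      Nonempty (D₁ →ₐ[k] E) ∧ Nonempty (D₂ →ₐ[k] E) := by
  classical
  have hAA : ∀ α : Tw Ω ι, α.A.map (cΨ Ω ι) * α.A'.map (cΨ Ω ι) = 1 := fun α => by
    rw [← Matrix.map_mul, α.hA]; simp
  have hAA' : ∀ α : Tw Ω ι, α.A'.map (cΨ Ω ι) * α.A.map (cΨ Ω ι) = 1 := fun α => mul_eq_one_comm.mp (hAA α)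
  let E := EE k 𝒯 hk
  have hmem : ∀ f, f ∈ E ↔ ∀ α ∈ 𝒯, f.map α.φΨ * α.A.map (cΨ Ω ι) = α.A.map (cΨ Ω ι) * f := fun f => Iff.rfl
  have hdiv : ∀ f : E, IsUnit f ∨ f = 0 := by
    rintro ⟨f, hf⟩
    by_cases h0 : f = 0
    · right; exact Subtype.ext h0
    left
    have hker := main (LinearMap.ker (Matrix.mulVecLin f)) (by
      intro α hα v hv
      rw [LinearMap.mem_ker, Matrix.mulVecLin_apply] at hv ⊢
      have e1 : Matrix.mulVec (f.map α.φΨ) (fun i => α.φΨ (v i)) = 0 := by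
        funext i
        have := congrArg α.φΨ (congrFun hv i)
        simpa [Matrix.mulVec, dotProduct] using this
      have e2 : f * α.A'.map (cΨ Ω ι) = α.A'.map (cΨ Ω ι) * f.map α.φΨ := by
        calc f * α.A'.map (cΨ Ω ι) = α.A'.map (cΨ Ω ι) * (α.A.map (cΨ Ω ι) * f) * α.A'.map (cΨ Ω ι) := by
              rw [← Matrix.mul_assoc, hAA', Matrix.one_mul]
          _ = _ := by
              rw [← (hmem f).mp hf α hα, Matrix.mul_assoc, Matrix.mul_assoc, hAA, Matrix.mul_one]
      rw [Tw.TΨ, Matrix.mulVec_mulVec, e2, ← Matrix.mulVec_mulVec, e1, Matrix.mulVec_zero])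
    have hbot : LinearMap.ker (Matrix.mulVecLin f) = ⊥ := by
      by_contra hne
      have hpos : 0 < Module.finrank (FractionRing (MvPolynomial (ι × ι) Ω)) (LinearMap.ker (Matrix.mulVecLin f)) := by
        rw [Nat.pos_iff_ne_zero]
        intro h
        exact hne (Submodule.finrank_eq_zero.mp h)
      have hle := Nat.le_of_dvd hpos hker
      have htop : LinearMap.ker (Matrix.mulVecLin f) = ⊤ := by
        apply Submodule.eq_top_of_finrank_eq
        apply le_antisymm (Submodule.finrank_le _)
        rw [Module.finrank_fintype_fun_eq_card]
        exact hle
      apply h0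
      ext i j
      have := LinearMap.ker_eq_top.mp htop
      have := congrFun (LinearMap.congr_fun this (Pi.single j 1)) i
      simpa using this
    have hu : IsUnit f := by
      rw [← Matrix.mulVec_injective_iff_isUnit]
      exact LinearMap.ker_eq_bot.mp hbot
    obtain ⟨u, hu⟩ := hu
    have hinv : (↑u⁻¹ : Matrix ι ι (FractionRing (MvPolynomial (ι × ι) Ω))) ∈ E := by
      rw [hmem]
      intro α hα
      have e1 := (hmem f).mp hf α hα
      rw [← hu] at e1
      have e2 : (↑u⁻¹ : Matrix ι ι (FractionRing (MvPolynomial (ι × ι) Ω))).map α.φΨ *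
          (↑u : Matrix ι ι (FractionRing (MvPolynomial (ι × ι) Ω))).map α.φΨ = 1 := by
        rw [← Matrix.map_mul, Units.inv_mul]; simp
      calc _ = (↑u⁻¹ : Matrix ι ι (FractionRing (MvPolynomial (ι × ι) Ω))).map α.φΨ * (α.A.map (cΨ Ω ι) * ↑u) * ↑u⁻¹ := by
            rw [Matrix.mul_assoc, Matrix.mul_assoc, Units.mul_inv, Matrix.mul_one]
        _ = _ := by rw [← e1, ← Matrix.mul_assoc, e2, Matrix.one_mul]
    exact ⟨⟨⟨f, hf⟩, ⟨_, hinv⟩, Subtype.ext (by simp [← hu]), Subtype.ext (by simp [← hu])⟩, rfl⟩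
  let dE : DivisionRing E := DivisionRing.ofIsUnitOrEqZero hdiv
  -- embeddings
  have hcm : ∀ a : k, cΨ Ω ι (algebraMap k Ω a) = algebraMap k (FractionRing (MvPolynomial (ι × ι) Ω)) a := by
    intro r
    rw [IsScalarTower.algebraMap_apply k (MvPolynomial (ι × ι) Ω) (FractionRing (MvPolynomial (ι × ι) Ω)), IsScalarTower.algebraMap_apply k Ω (MvPolynomial (ι × ι) Ω)]; rfl
  let cA : Ω →ₐ[k] FractionRing (MvPolynomial (ι × ι) Ω) := { cΨ Ω ι with commutes' := hcm }
  let F₁ : D₁ →ₐ[k] Matrix ι ι (FractionRing (MvPolynomial (ι × ι) Ω)) := cA.mapMatrix.comp r₁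
  let F₂ : D₂ →ₐ[k] Matrix ι ι (FractionRing (MvPolynomial (ι × ι) Ω)) := cA.mapMatrix.comp r₂
  have hF₁ : ∀ x, F₁ x = (r₁ x).map (cΨ Ω ι) := fun x => rfl
  have hF₂ : ∀ x, F₂ x = (r₂ x).map (cΨ Ω ι) := fun x => rfl
  have hg1 : gΨ Ω ι * (gΨ Ω ι)⁻¹ = 1 := Matrix.mul_nonsing_inv _ gΨ_unit
  have hg2 : (gΨ Ω ι)⁻¹ * gΨ Ω ι = 1 := Matrix.nonsing_inv_mul _ gΨ_unit
  let F₃ : D₂ →ₐ[k] Matrix ι ι (FractionRing (MvPolynomial (ι × ι) Ω)) :=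
    AlgHom.ofLinearMap ((LinearMap.mulLeft k (gΨ Ω ι)).comp ((LinearMap.mulRight k (gΨ Ω ι)⁻¹).comp F₂.toLinearMap))
      (by simp [hg1]) (by
        intro x y
        change gΨ Ω ι * (F₂ (x * y) * (gΨ Ω ι)⁻¹) = (gΨ Ω ι * (F₂ x * (gΨ Ω ι)⁻¹)) * (gΨ Ω ι * (F₂ y * (gΨ Ω ι)⁻¹))
        rw [map_mul]
        calc _ = gΨ Ω ι * (F₂ x * ((gΨ Ω ι)⁻¹ * gΨ Ω ι) * F₂ y * (gΨ Ω ι)⁻¹) := by rw [hg2, Matrix.mul_one]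
          _ = _ := by simp only [Matrix.mul_assoc])
  have hF₃ : ∀ y, F₃ y = gΨ Ω ι * (F₂ y * (gΨ Ω ι)⁻¹) := fun y => rfl
  refine ⟨E, dE, inferInstance, ?_, ⟨F₁.codRestrict E ?_⟩, ⟨F₃.codRestrict E ?_⟩⟩
  · let b := Module.Basis.ofVectorSpace (Subring.center E) E
    let T : 𝒯 → Matrix ι ι (FractionRing (MvPolynomial (ι × ι) Ω)) →+ Matrix ι ι (FractionRing (MvPolynomial (ι × ι) Ω)) :=
      fun α => ⟨⟨fun f => α.1.A'.map (cΨ Ω ι) * f.map α.1.φΨ * α.1.A.map (cΨ Ω ι), by simp⟩, fun f g => by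
        simp only
        rw [Matrix.map_add _ (map_add _), Matrix.mul_add, Matrix.add_mul]⟩
    have hT : ∀ α f, T α f = α.1.A'.map (cΨ Ω ι) * f.map α.1.φΨ * α.1.A.map (cΨ Ω ι) := fun _ _ => rfl
    have hli : LinearIndependent (FractionRing (MvPolynomial (ι × ι) Ω))
        (fun i => (b i : Matrix ι ι (FractionRing (MvPolynomial (ι × ι) Ω)))) := by
      apply descent_indep (fun α : 𝒯 => α.1.φΨ) T
      · intro α c v
        rw [hT, hT]
        have : (c • v).map α.1.φΨ = α.1.φΨ c • v.map α.1.φΨ := by ext i j; simp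
        rw [this, Matrix.mul_smul, Matrix.smul_mul]
      · intro α i
        rw [hT, Matrix.mul_assoc, (hmem _).mp (b i).2 α.1 α.2, ← Matrix.mul_assoc, hAA', Matrix.one_mul]
      · intro l hl hsum
        have hzE : ∀ i, algebraMap _ (Matrix ι ι (FractionRing (MvPolynomial (ι × ι) Ω))) (l i) ∈ E := by
          intro i
          rw [hmem]
          intro α hα
          have : (algebraMap _ (Matrix ι ι (FractionRing (MvPolynomial (ι × ι) Ω))) (l i)).map α.φΨ =
              algebraMap _ (Matrix ι ι (FractionRing (MvPolynomial (ι × ι) Ω))) (l i) := by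
            ext a c
            rw [Matrix.map_apply, Matrix.algebraMap_matrix_apply]
            split_ifs
            · exact hl ⟨α, hα⟩ i
            · simp
          rw [this]
          exact Algebra.commutes _ _
        have hzC : ∀ i, (⟨_, hzE i⟩ : E) ∈ Subring.center E := by
          intro i
          rw [Subring.mem_center_iff]
          intro g
          apply Subtype.ext
          exact (Algebra.commutes (l i) (g : Matrix ι ι (FractionRing (MvPolynomial (ι × ι) Ω)))).symm
        let m : Module.Basis.ofVectorSpaceIndex (Subring.center E) E →₀ Subring.center E :=
          Finsupp.onFinset l.support (fun i => ⟨⟨_, hzE i⟩, hzC i⟩) (by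
            intro i hi
            rw [Finsupp.mem_support_iff]
            intro h
            apply hi
            apply Subtype.ext
            apply Subtype.ext
            change algebraMap _ (Matrix ι ι (FractionRing (MvPolynomial (ι × ι) Ω))) (l i) = 0
            rw [h, map_zero])
        have hm0 : m = 0 := by
          apply linearIndependent_iff.mp b.linearIndependent
          rw [Finsupp.linearCombination_apply, Finsupp.onFinset_sum _ (by simp)]
          apply Subtype.ext
          rw [Finsupp.linearCombination_apply, Finsupp.sum] at hsum
          rw [AddSubmonoidClass.coe_finsetSum]
          refine Eq.trans (Finset.sum_congr rfl fun i _ => ?_) hsum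
          exact (Algebra.smul_def _ _).symm
        ext1 i
        have h3 := congrArg (fun z : Subring.center E => ((z : E) : Matrix ι ι (FractionRing (MvPolynomial (ι × ι) Ω))))
          (DFunLike.congr_fun hm0 i)
        change algebraMap _ (Matrix ι ι (FractionRing (MvPolynomial (ι × ι) Ω))) (l i) = 0 at h3
        exact (map_eq_zero_iff _ (algebraMap (FractionRing (MvPolynomial (ι × ι) Ω))
          (Matrix ι ι (FractionRing (MvPolynomial (ι × ι) Ω)))).injective).mp h3
    have : Finite (Module.Basis.ofVectorSpaceIndex (Subring.center E) E) := hli.finite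
    exact Module.Finite.of_basis b
  · intro x
    rw [hmem]
    intro α hα
    rw [hF₁, Tw.φΨ_cM, ← Matrix.map_mul, h1 α hα, Matrix.map_mul]
  · intro y
    rw [hmem]
    intro α hα
    have e0 : F₃ y * gΨ Ω ι = gΨ Ω ι * F₂ y := by
      rw [hF₃, Matrix.mul_assoc, Matrix.mul_assoc, hg2, Matrix.mul_one]
    have e1 := congrArg (fun M => M.map α.φΨ) e0
    simp only [Matrix.map_mul] at e1
    rw [Tw.φΨ_g, hF₂, Tw.φΨ_cM] at e1
    have e2 : α.B.map (cΨ Ω ι) * ((r₂ y).map α.s).map (cΨ Ω ι) = (r₂ y).map (cΨ Ω ι) * α.B.map (cΨ Ω ι) := by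
      rw [← Matrix.map_mul, h2 α hα, Matrix.map_mul]
    have hBB : α.B.map (cΨ Ω ι) * α.B'.map (cΨ Ω ι) = 1 := by
      rw [← Matrix.map_mul, α.hB]; simp
    calc (F₃ y).map α.φΨ * α.A.map (cΨ Ω ι) =
        (F₃ y).map α.φΨ * (α.A.map (cΨ Ω ι) * gΨ Ω ι * α.B.map (cΨ Ω ι)) * (α.B'.map (cΨ Ω ι) * (gΨ Ω ι)⁻¹) := by
          simp only [Matrix.mul_assoc]
          rw [← Matrix.mul_assoc (α.B.map _), hBB, Matrix.one_mul, hg1, Matrix.mul_one]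
      _ = α.A.map (cΨ Ω ι) * gΨ Ω ι * (r₂ y).map (cΨ Ω ι) * (α.B.map (cΨ Ω ι) * α.B'.map (cΨ Ω ι)) * (gΨ Ω ι)⁻¹ := by
          rw [e1, Matrix.mul_assoc (α.A.map (cΨ Ω ι) * gΨ Ω ι), e2]
          simp only [Matrix.mul_assoc]
      _ = _ := by
          rw [hBB, Matrix.mul_one, hF₃, hF₂]
          simp only [Matrix.mul_assoc]
end
end CE

namespace CE
open MvPolynomial

lemma weight_mem {Ω M α : Type*} [Field Ω] [Infinite Ω] [AddCommGroup M] [Module Ω M] (P : Submodule Ω M)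
    (F : Finset α) (lab : α → ℕ) (e : α → M)
    (h : ∀ s : Ω, s ≠ 0 → ∑ a ∈ F, s ^ lab a • e a ∈ P) (Q : ℕ → Prop) [DecidablePred Q] :
    ∑ a ∈ F with Q (lab a), e a ∈ P := by
  classical
  by_contra hcon
  obtain ⟨f, hf0, hfP⟩ := Submodule.exists_le_ker_of_notMem hcon
  let p : Polynomial Ω := ∑ a ∈ F, Polynomial.monomial (lab a) (f (e a))
  have hp : ∀ s : Ω, s ≠ 0 → p.eval s = 0 := by
    intro s hs
    have := hfP (h s hs)
    rw [LinearMap.mem_ker, map_sum] at this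
    simp only [map_smul, smul_eq_mul] at this
    rw [← this]
    simp only [p, Polynomial.eval_finsetSum, Polynomial.eval_monomial]
    exact Finset.sum_congr rfl fun a _ => mul_comm _ _
  have hp0 : p = 0 := by
    apply Polynomial.eq_zero_of_infinite_isRoot
    apply Set.Infinite.mono (s := {(0 : Ω)}ᶜ)
    · intro s hs
      exact hp s hs
    · exact (Set.finite_singleton _).infinite_compl
  apply hf0
  rw [map_sum]
  have hc : ∀ n, ∑ a ∈ F with lab a = n, f (e a) = 0 := by
    intro n
    have := congrArg (fun r => r.coeff n) hp0
    simp only [p, Polynomial.finsetSum_coeff, Polynomial.coeff_monomial, Polynomial.coeff_zero] at this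
    rw [Finset.sum_filter]
    exact this
  rw [← Finset.sum_fiberwise_of_maps_to (t := F.image lab) (g := lab)
    (fun a ha => Finset.mem_image_of_mem _ (Finset.mem_filter.mp ha).1)]
  apply Finset.sum_eq_zero
  intro n _
  rw [Finset.filter_filter]
  by_cases hQ : Q n
  · rw [← hc n]
    refine Finset.sum_congr (Finset.filter_congr fun a _ => ?_) fun _ _ => rfl
    constructor
    · exact fun h => h.2
    · exact fun h => ⟨h ▸ hQ, h⟩
  · rw [Finset.filter_false_of_mem, Finset.sum_empty]
    rintro a _ ⟨h1, h2⟩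
    exact hQ (h2 ▸ h1)

section
variable {Ω τ : Type*} [Field Ω]

/-- rescaling of variables -/
noncomputable def rescale (w : τ → ℕ) (s : Ω) : MvPolynomial τ Ω →+* MvPolynomial τ Ω :=
  eval₂Hom C (fun p => C (s ^ w p) * X p)

lemma rescale_eq (w : τ → ℕ) (s : Ω) (f : MvPolynomial τ Ω) :
    rescale w s f = ∑ μ ∈ f.support, s ^ (Finsupp.weight w μ) • monomial μ (coeff μ f) := by
  conv_lhs => rw [f.as_sum, map_sum]
  refine Finset.sum_congr rfl fun μ _ => ?_
  rw [rescale, eval₂Hom_monomial, monomial_eq (s := μ), smul_eq_C_mul]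
  simp only [mul_pow, ← C_pow, ← pow_mul]
  rw [Finsupp.prod_mul, Finsupp.weight_apply, Finsupp.sum]
  have : (μ.prod fun a c => C (σ := τ) (s ^ (w a * c))) = C (s ^ ∑ a ∈ μ.support, μ a • w a) := by
    rw [Finsupp.prod, ← map_prod, ← Finset.prod_pow_eq_pow_sum]
    simp [mul_comm]
  rw [this]
  ring

lemma grad_mem [Infinite Ω] {ι : Type*} [Fintype ι] [DecidableEq ι] (P : Submodule Ω (ι → MvPolynomial τ Ω)) (w₀ : ι → ℕ) (w : τ → ℕ)
    (v : ι → MvPolynomial τ Ω)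
    (h : ∀ s : Ω, s ≠ 0 → (fun i => s ^ w₀ i • rescale w s (v i)) ∈ P) (Q : ℕ → Prop) [DecidablePred Q] :
    (fun i => ∑ μ ∈ (v i).support with Q (w₀ i + Finsupp.weight w μ), monomial μ (coeff μ (v i))) ∈ P := by
  have key : ∀ (R : ℕ → Prop) [DecidablePred R] (g : ℕ → Ω),
      ∑ a ∈ Finset.univ.sigma (fun i => (v i).support) with R (w₀ a.1 + Finsupp.weight w a.2),
        g (w₀ a.1 + Finsupp.weight w a.2) • (Pi.single a.1 (monomial a.2 (coeff a.2 (v a.1))) : ι → MvPolynomial τ Ω) =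
      (fun i => ∑ μ ∈ (v i).support with R (w₀ i + Finsupp.weight w μ),
        g (w₀ i + Finsupp.weight w μ) • monomial μ (coeff μ (v i))) := by
    intro R _ g
    ext1 i
    rw [Finset.sum_filter, Finset.sum_sigma, Finset.sum_apply, Finset.sum_eq_single i, Finset.sum_apply, Finset.sum_filter]
    · refine Finset.sum_congr rfl fun μ _ => ?_
      split_ifs <;> simp
    · intro i' _ hne
      rw [Finset.sum_apply]
      apply Finset.sum_eq_zero
      intro μ _
      split_ifs <;> simp [hne.symm]
    · simp
  have := weight_mem P (Finset.univ.sigma (fun i => (v i).support)) (fun a => w₀ a.1 + Finsupp.weight w a.2)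
    (fun a => (Pi.single a.1 (monomial a.2 (coeff a.2 (v a.1))) : ι → MvPolynomial τ Ω)) (by
      intro s hs
      have h2 := h s hs
      have k := key (fun _ => True) (fun n => s ^ n)
      simp only [Finset.filter_true] at k
      rw [k]
      convert h2 using 2 with i
      rw [rescale_eq, Finset.smul_sum]
      simp only [smul_smul, pow_add]) Q
  have k := key Q (fun _ => 1)
  simp only [one_smul] at k
  rw [k] at this
  exact this

variable {ι : Type*}
/-- vectors of given label -/
def Lab {q : ℕ} (w₀ : ι → ZMod q) (w : τ → ZMod q) (l : ZMod q) : Submodule Ω (ι → MvPolynomial τ Ω) where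
  carrier := {v | ∀ i, IsWeightedHomogeneous w (v i) (l - w₀ i)}
  add_mem' := fun hv hu i => (hv i).add (hu i)
  zero_mem' := fun i => isWeightedHomogeneous_zero _ _ _
  smul_mem' := fun c v hv i => (weightedHomogeneousSubmodule Ω w (l - w₀ i)).smul_mem c (hv i)

/-- projection -/
noncomputable def prL {q : ℕ} (w₀ : ι → ZMod q) (w : τ → ZMod q) (l : ZMod q) :
    (ι → MvPolynomial τ Ω) →ₗ[Ω] (ι → MvPolynomial τ Ω) where
  toFun := fun v i => weightedHomogeneousComponent w (l - w₀ i) (v i)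
  map_add' := fun v u => by ext1 i; simp
  map_smul' := fun c v => by ext1 i; simp

lemma prL_apply {q : ℕ} (w₀ : ι → ZMod q) (w : τ → ZMod q) (l : ZMod q) (v : ι → MvPolynomial τ Ω) (i : ι) :
    prL w₀ w l v i = weightedHomogeneousComponent w (l - w₀ i) (v i) := rfl

lemma prL_mem {q : ℕ} (w₀ : ι → ZMod q) (w : τ → ZMod q) (l : ZMod q) (v : ι → MvPolynomial τ Ω) :
    prL w₀ w l v ∈ Lab w₀ w l := fun i => weightedHomogeneousComponent_isWeightedHomogeneous _ _

lemma prL_same {q : ℕ} (w₀ : ι → ZMod q) (w : τ → ZMod q) (l : ZMod q) (v : ι → MvPolynomial τ Ω)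
    (hv : v ∈ Lab w₀ w l) : prL w₀ w l v = v := by
  ext1 i
  ext1 μ
  rw [prL_apply, coeff_weightedHomogeneousComponent]
  split_ifs with h
  · rfl
  · by_contra h2
    exact h (hv i (fun h3 => h2 h3.symm))

lemma prL_ne {q : ℕ} (w₀ : ι → ZMod q) (w : τ → ZMod q) (l l' : ZMod q) (hl : l' ≠ l) (v : ι → MvPolynomial τ Ω)
    (hv : v ∈ Lab w₀ w l') : prL w₀ w l v = 0 := by
  ext1 i
  ext1 μ
  rw [prL_apply, coeff_weightedHomogeneousComponent]
  split_ifs with h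
  · by_contra h2
    exact hl (sub_left_injective ((hv i h2).symm.trans h))
  · simp

theorem label_split (V : Submodule Ω (ι → MvPolynomial τ Ω)) [FiniteDimensional Ω V] (q : ℕ) [NeZero q]
    (w₀ : ι → ZMod q) (w : τ → ZMod q) (hpr : ∀ v ∈ V, ∀ l, prL w₀ w l v ∈ V)
    (Sh : (ι → MvPolynomial τ Ω) →ₗ[Ω] (ι → MvPolynomial τ Ω)) (hSh : Function.Injective Sh)
    (u : ZMod q) (hu : IsUnit u) (hV : ∀ v ∈ V, Sh v ∈ V)
    (hlab : ∀ l, ∀ v ∈ V, v ∈ Lab w₀ w l → Sh v ∈ Lab w₀ w (l + u)) :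
    Module.finrank Ω V = q * Module.finrank Ω (V ⊓ Lab w₀ w 0 : Submodule Ω (ι → MvPolynomial τ Ω)) := by
  classical
  have hfd : ∀ l, FiniteDimensional Ω (V ⊓ Lab w₀ w l : Submodule Ω (ι → MvPolynomial τ Ω)) := fun l =>
    Submodule.finiteDimensional_of_le inf_le_left
  have hle : ∀ l, Module.finrank Ω (V ⊓ Lab w₀ w l : Submodule Ω (ι → MvPolynomial τ Ω)) ≤
      Module.finrank Ω (V ⊓ Lab w₀ w (l + u) : Submodule Ω (ι → MvPolynomial τ Ω)) := by
    intro l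
    let f : (V ⊓ Lab w₀ w l : Submodule Ω (ι → MvPolynomial τ Ω)) →ₗ[Ω]
        (V ⊓ Lab w₀ w (l + u) : Submodule Ω (ι → MvPolynomial τ Ω)) :=
      Sh.restrict (fun v hv => ⟨hV v hv.1, hlab l v hv.1 hv.2⟩)
    exact LinearMap.finrank_le_finrank_of_injective (f := f) (fun x y hxy =>
      Subtype.ext (hSh (congrArg Subtype.val hxy)))
  have hle2 : ∀ l (n : ℕ), Module.finrank Ω (V ⊓ Lab w₀ w l : Submodule Ω (ι → MvPolynomial τ Ω)) ≤
      Module.finrank Ω (V ⊓ Lab w₀ w (l + n * u) : Submodule Ω (ι → MvPolynomial τ Ω)) := by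
    intro l n
    induction n with
    | zero => rw [Nat.cast_zero, zero_mul, add_zero]
    | succ n ih =>
      refine ih.trans ((hle _).trans_eq ?_)
      rw [Nat.cast_succ, add_mul, one_mul, add_assoc]
  have hle3 : ∀ l l', Module.finrank Ω (V ⊓ Lab w₀ w l : Submodule Ω (ι → MvPolynomial τ Ω)) ≤
      Module.finrank Ω (V ⊓ Lab w₀ w l' : Submodule Ω (ι → MvPolynomial τ Ω)) := by
    intro l l'
    obtain ⟨u', rfl⟩ := hu
    have := hle2 l ((l' - l) * (↑u'⁻¹ : ZMod q)).val
    rw [ZMod.natCast_zmod_val, mul_assoc, Units.inv_mul, mul_one, add_sub_cancel] at this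
    exact this
  let Φ : V →ₗ[Ω] (∀ l : ZMod q, (V ⊓ Lab w₀ w l : Submodule Ω (ι → MvPolynomial τ Ω))) :=
    LinearMap.pi fun l => ((prL w₀ w l).comp V.subtype).codRestrict _ (fun v => ⟨hpr _ v.2 l, prL_mem _ _ _ _⟩)
  have hΦ : ∀ v l, ((Φ v l : (V ⊓ Lab w₀ w l : Submodule Ω (ι → MvPolynomial τ Ω))) : ι → MvPolynomial τ Ω) = prL w₀ w l v := fun _ _ => rfl
  have hb : Function.Bijective Φ := by
    constructor
    · rw [injective_iff_map_eq_zero]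
      intro v hv
      apply Subtype.ext
      ext1 i
      ext1 μ
      have := congrArg (fun x => coeff μ (x i)) (hΦ v (w₀ i + Finsupp.weight w μ))
      rw [hv] at this
      simp only [prL_apply, coeff_weightedHomogeneousComponent, add_sub_cancel_left, if_true] at this
      exact this.symm
    · intro x
      refine ⟨∑ l, ⟨_, (x l).2.1⟩, ?_⟩
      funext l
      apply Subtype.ext
      rw [hΦ, AddSubmonoidClass.coe_finsetSum, map_sum, Finset.sum_eq_single l]
      · exact prL_same _ _ _ _ (x l).2.2
      · intro l' _ hne
        exact prL_ne _ _ _ _ hne _ (x l').2.2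
      · simp
  rw [(LinearEquiv.ofBijective Φ hb).finrank_eq, Module.finrank_pi_fintype,
    Finset.sum_congr rfl (fun l _ => le_antisymm (hle3 l 0) (hle3 0 l)), Finset.sum_const, Finset.card_univ, ZMod.card, smul_eq_mul]

end
end CE

namespace CE
open MvPolynomial

section
variable {Ω ι : Type} [Field Ω] [Fintype ι] [DecidableEq ι]

/-- semilinear operator on polynomial vectors -/
noncomputable def Tw.T (α : Tw Ω ι) : (ι → MvPolynomial (ι × ι) Ω) →+ (ι → MvPolynomial (ι × ι) Ω) where
  toFun := fun v => Matrix.mulVec (mC α.A') (fun i => α.φ (v i))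
  map_zero' := by
    simp only [Pi.zero_apply, map_zero]
    exact Matrix.mulVec_zero _
  map_add' := fun v u => by
    simp only [Pi.add_apply, map_add]
    exact Matrix.mulVec_add _ _ _

lemma Tw.T_apply (α : Tw Ω ι) (v : ι → MvPolynomial (ι × ι) Ω) (i : ι) :
    α.T v i = ∑ i', C (α.A' i i') * α.φ (v i') := rfl

lemma Tw.emb_T (α : Tw Ω ι) (v : ι → MvPolynomial (ι × ι) Ω) :
    (fun i => algebraMap _ (FractionRing (MvPolynomial (ι × ι) Ω)) (α.T v i)) =
    α.TΨ (fun i => algebraMap _ _ (v i)) := by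
  funext i
  rw [Tw.T_apply, map_sum]
  refine Finset.sum_congr rfl fun i' _ => ?_
  rw [map_mul, ← Tw.φΨ_algebraMap]
  rfl

lemma Tw.T_weighted (α : Tw Ω ι) {M : Type*} [AddCommMonoid M] (w : ι × ι → M) (κ : ι → M)
    (hA' : ∀ i i', α.A' i i' ≠ 0 → κ i = κ i')
    (hAB : ∀ i i' l' l, α.A i i' ≠ 0 → α.B l' l ≠ 0 → w (i', l') = w (i, l))
    (v : ι → MvPolynomial (ι × ι) Ω) (hv : ∀ i, IsWeightedHomogeneous w (v i) (κ i)) (i : ι) :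
    IsWeightedHomogeneous w (α.T v i) (κ i) := by
  have hφ : ∀ i, IsWeightedHomogeneous w (α.φ (v i)) (κ i) := by
    intro i
    refine eval₂_weighted _ w w _ ?_ (hv i)
    rintro ⟨a, b⟩
    rw [Matrix.mul_apply]
    refine IsWeightedHomogeneous.sum _ _ _ fun l' _ => ?_
    rw [Matrix.mul_apply, Finset.sum_mul]
    refine IsWeightedHomogeneous.sum _ _ _ fun i' _ => ?_
    by_cases h1 : α.A a i' = 0
    · simp [mC, h1, isWeightedHomogeneous_zero]
    by_cases h2 : α.B l' b = 0
    · simp [mC, h2, isWeightedHomogeneous_zero]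
    have := ((isWeightedHomogeneous_C w (α.A a i')).mul (isWeightedHomogeneous_X Ω w (i', l'))).mul
      (isWeightedHomogeneous_C w (α.B l' b))
    rw [zero_add, add_zero, hAB a i' l' b h1 h2] at this
    exact this
  rw [Tw.T_apply]
  refine IsWeightedHomogeneous.sum _ _ _ fun i' _ => ?_
  by_cases h : α.A' i i' = 0
  · simp [h, isWeightedHomogeneous_zero]
  · rw [hA' i i' h, ← zero_add (κ i')]
    exact (isWeightedHomogeneous_C w _).mul (hφ i')

lemma phi_smul (s : Ω →+* Ω) (a b : Ω) (A B : Matrix ι ι Ω) {j : ℕ} {p : MvPolynomial (ι × ι) Ω} (hp : p.IsHomogeneous j) :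
    phi s (a • A) (b • B) p = C ((a * b) ^ j) * phi s A B p := by
  rw [phi, phi, coe_eval₂Hom, coe_eval₂Hom, C_pow, ← eval₂_smul_hom _ _ _ hp]
  congr 1
  funext q
  have h1 : ∀ (a : Ω) (A : Matrix ι ι Ω), mC (a • A) = (C a : MvPolynomial (ι × ι) Ω) • mC A := by
    intro a A; ext1 i l; simp [mC]
  rw [h1, h1, Matrix.smul_mul, Matrix.smul_mul, Matrix.mul_smul, smul_smul, Matrix.smul_apply, smul_eq_mul, C_mul]

lemma Tw.T_comp (α β γ : Tw Ω ι) (hs : ∀ x, γ.s x = α.s (β.s x)) (a b c : Ω)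
    (h1 : α.A' * β.A'.map α.s = a • γ.A') (h2 : β.A.map α.s * α.A = b • γ.A)
    (h3 : α.B * β.B.map α.s = c • γ.B) (j : ℕ)
    (v : ι → MvPolynomial (ι × ι) Ω) (hv : ∀ i, (v i).IsHomogeneous j) :
    α.T (β.T v) = (a * (b * c) ^ j) • γ.T v := by
  have hφ : ∀ i, α.φ (β.φ (v i)) = C ((b * c) ^ j) * γ.φ (v i) := by
    intro i
    have := RingHom.congr_fun (phi_comp (α.s : Ω →+* Ω) (β.s : Ω →+* Ω) α.A α.B β.A β.B) (v i)
    rw [RingHom.comp_apply] at this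
    refine this.trans ?_
    rw [Tw.φ, ← phi_smul _ _ _ _ _ (hv i), ← h2, ← h3]
    congr 1
    congr 1
    ext x
    exact (hs x).symm
  funext i
  rw [Tw.T_apply, Pi.smul_apply, Tw.T_apply]
  calc _ = ∑ i', C (α.A' i i') * ∑ l, C (α.s (β.A' i' l)) * (C ((b * c) ^ j) * γ.φ (v l)) := by
        refine Finset.sum_congr rfl fun i' _ => ?_
        rw [Tw.T_apply, map_sum]
        congr 1
        refine Finset.sum_congr rfl fun l _ => ?_
        rw [map_mul, hφ, Tw.φ, phi_C]
        rfl
    _ = ∑ l, C ((α.A' * β.A'.map α.s) i l) * (C ((b * c) ^ j) * γ.φ (v l)) := by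
        simp only [Matrix.mul_apply, map_sum, Finset.mul_sum, Finset.sum_mul, C_mul, Matrix.map_apply]
        rw [Finset.sum_comm]
        simp only [mul_assoc]
    _ = _ := by
        rw [h1, Finset.smul_sum]
        refine Finset.sum_congr rfl fun l _ => ?_
        rw [smul_eq_C_mul, Matrix.smul_apply, smul_eq_mul, C_mul, C_mul]
        ring

end
end CE

namespace CE
open MvPolynomial

section
variable {Ω ι : Type} [Field Ω] [Fintype ι] [DecidableEq ι]

/-- polynomial vectors in `P` -/
def Pp (P : Submodule (FractionRing (MvPolynomial (ι × ι) Ω)) (ι → FractionRing (MvPolynomial (ι × ι) Ω))) :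
    Submodule Ω (ι → MvPolynomial (ι × ι) Ω) where
  carrier := {v | (fun i => algebraMap (MvPolynomial (ι × ι) Ω) (FractionRing (MvPolynomial (ι × ι) Ω)) (v i)) ∈ P}
  add_mem' := by
    intro a b ha hb
    change (fun i => algebraMap (MvPolynomial (ι × ι) Ω) (FractionRing (MvPolynomial (ι × ι) Ω)) ((a + b) i)) ∈ P
    convert P.add_mem ha hb using 1
    funext i; simp
  zero_mem' := by
    change (fun i => algebraMap (MvPolynomial (ι × ι) Ω) (FractionRing (MvPolynomial (ι × ι) Ω)) ((0 : ι → MvPolynomial (ι × ι) Ω) i)) ∈ P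
    convert P.zero_mem using 1; funext i; simp
  smul_mem' := by
    intro c a ha
    change (fun i => algebraMap (MvPolynomial (ι × ι) Ω) (FractionRing (MvPolynomial (ι × ι) Ω)) ((c • a) i)) ∈ P
    convert P.smul_mem (algebraMap (MvPolynomial (ι × ι) Ω) _ (C c)) ha using 1
    funext i
    rw [Pi.smul_apply, Pi.smul_apply, smul_eq_C_mul, map_mul, smul_eq_mul]

theorem side {G : Type} [Group G] [Infinite Ω]
    (P : Submodule (FractionRing (MvPolynomial (ι × ι) Ω)) (ι → FractionRing (MvPolynomial (ι × ι) Ω))) (j : ℕ)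
    (q : ℕ) [NeZero q] (w₀ : ι → ℕ) (w : ι × ι → ℕ)
    (htor : ∀ s : Ω, s ≠ 0 → ∀ v ∈ Pp P, (fun i => s ^ w₀ i • rescale w s (v i)) ∈ Pp P)
    (e₀ : Equiv.Perm ι) (e₁ : Equiv.Perm (ι × ι)) (hsh : ∀ v ∈ Pp P, (fun i => rename e₁ (v (e₀ i))) ∈ Pp P)
    (u₀ u₁ : ZMod q) (he₀ : ∀ i, (w₀ i : ZMod q) = w₀ (e₀ i) + u₀) (he₁ : ∀ p, (w (e₁ p) : ZMod q) = w p + u₁)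
    (hu : IsUnit (u₀ + j * u₁))
    (α : G → Tw Ω ι) (hα : ∀ σ, ∀ v ∈ Pp P, (α σ).T v ∈ Pp P)
    (hA' : ∀ σ i i', (α σ).A' i i' ≠ 0 → w₀ i = w₀ i')
    (hAB : ∀ σ i i' l' l, (α σ).A i i' ≠ 0 → (α σ).B l' l ≠ 0 → w (i', l') = w (i, l))
    (s : G →* (Ω ≃+* Ω)) (hs : ∀ σ, (α σ).s = s σ) (c : G → G → Ω) (hc : ∀ σ τ, c σ τ ≠ 0)
    (h1 : (α 1).A = 1 ∧ (α 1).A' = 1 ∧ (α 1).B = 1)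
    (x y z : ℤ) (hx : ∀ σ τ, (α σ).A' * (α τ).A'.map (s σ) = (c σ τ) ^ x • (α (σ * τ)).A')
    (hy : ∀ σ τ, (α τ).A.map (s σ) * (α σ).A = (c σ τ) ^ y • (α (σ * τ)).A)
    (hz : ∀ σ τ, (α σ).B * (α τ).B.map (s σ) = (c σ τ) ^ z • (α (σ * τ)).B) :
    ∃ d, HasRep s c (x + (y + z) * j) d ∧ Module.finrank Ω (Pj (τ := ι × ι) (Ω := Ω) P j) = q * d := by
  classical
  have hPj : ∀ v, v ∈ Pj (τ := ι × ι) (Ω := Ω) P j ↔ (∀ i, (v i).IsHomogeneous j) ∧ v ∈ Pp P := fun v => Iff.rfl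
  let w₀' : ι → ZMod q := fun i => w₀ i
  let w' : ι × ι → ZMod q := fun i => w i
  have hww : ∀ μ : ι × ι →₀ ℕ, Finsupp.weight w' μ = ((Finsupp.weight w μ : ℕ) : ZMod q) := by
    intro μ
    rw [Finsupp.weight_apply, Finsupp.weight_apply, Finsupp.sum, Finsupp.sum, Nat.cast_sum]
    simp [w']
  refine ⟨_, ?_, label_split (Pj (τ := ι × ι) (Ω := Ω) P j) q w₀' w' ?_
    (LinearMap.pi fun i => (rename e₁).toLinearMap.comp (LinearMap.proj (e₀ i))) ?_ (u₀ + j * u₁) hu ?_ ?_⟩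
  · refine HasRep.of_submodule (Pj (τ := ι × ι) (Ω := Ω) P j ⊓ Lab w₀' w' 0) _ (fun σ => (α σ).T) ?_ ?_ ?_ ?_
    · rintro σ v ⟨hv1, hv2⟩
      rw [SetLike.mem_coe, hPj] at hv1
      refine ⟨⟨?_, hα σ v hv1.2⟩, ?_⟩
      · exact (α σ).T_weighted 1 (fun _ => j) (fun _ _ _ => rfl) (fun _ _ _ _ _ _ => rfl) v hv1.1
      · refine (α σ).T_weighted w' (fun i => 0 - w₀' i) (fun i i' h => ?_) (fun i i' l' l h h' => ?_) v hv2
        · simp only [w₀', hA' σ i i' h]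
        · simp only [w', hAB σ i i' l' l h h']
    · intro σ a v _
      funext i
      rw [Tw.T_apply, Pi.smul_apply, Tw.T_apply, Finset.smul_sum]
      refine Finset.sum_congr rfl fun i' _ => ?_
      rw [Pi.smul_apply, smul_eq_C_mul, smul_eq_C_mul, map_mul, Tw.φ, phi_C, ← hs]
      simp only [RingEquiv.coe_toRingHom]
      ring
    · rintro v ⟨hv1, hv2⟩
      have hφ : (α 1).φ = RingHom.id _ := by
        rw [Tw.φ, hs, h1.1, h1.2.2, ← phi_id, map_one]
        rfl
      funext i
      rw [Tw.T_apply, hφ, h1.2.1, Finset.sum_eq_single i]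
      · simp
      · intro b _ hb; simp [hb.symm]
      · simp
    · rintro σ τ v ⟨hv1, hv2⟩
      rw [(α σ).T_comp (α τ) (α (σ * τ)) (by intro x; rw [hs, hs, hs, map_mul]; rfl) (c σ τ ^ x) (c σ τ ^ y) (c σ τ ^ z)
        (by rw [hs]; exact hx σ τ) (by rw [hs]; exact hy σ τ) (by rw [hs]; exact hz σ τ) j v hv1.1]
      congr 1
      rw [← zpow_add₀ (hc σ τ), ← zpow_natCast, ← zpow_mul, ← zpow_add₀ (hc σ τ)]
  · intro v hv l
    rw [hPj] at hv ⊢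
    have heq : prL w₀' w' l v = fun i => ∑ μ ∈ (v i).support with ((w₀ i + Finsupp.weight w μ : ℕ) : ZMod q) = l,
        monomial μ (coeff μ (v i)) := by
      funext i
      rw [prL_apply, weightedHomogeneousComponent_apply]
      refine Finset.sum_congr (Finset.filter_congr fun μ _ => ?_) fun _ _ => rfl
      rw [hww, Nat.cast_add, eq_sub_iff_add_eq, add_comm]
    constructor
    · intro i
      intro μ hμ
      apply hv.1 i
      rw [prL_apply, coeff_weightedHomogeneousComponent] at hμ
      split_ifs at hμ with h
      · exact hμ
      · exact absurd rfl hμ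
    · rw [heq]
      exact grad_mem (Pp P) w₀ w v (fun s hs => htor s hs v hv.2) (fun n => (n : ZMod q) = l)
  · intro v v' h
    funext i
    have := congrFun h (e₀.symm i)
    simp only [LinearMap.pi_apply, LinearMap.comp_apply, LinearMap.proj_apply, Equiv.apply_symm_apply] at this
    exact rename_injective _ e₁.injective this
  · intro v hv
    rw [hPj] at hv ⊢
    exact ⟨fun i => (hv.1 _).rename_isHomogeneous, hsh v hv.2⟩
  · intro l v hv hl i
    rw [hPj] at hv
    intro μ hμ
    obtain ⟨ν, rfl, hν⟩ := coeff_rename_ne_zero _ _ _ hμ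
    have a1 := hl (e₀ i) hν
    have a2 := hv.1 (e₀ i) hν
    have a3 : Finsupp.weight w' (ν.mapDomain e₁) = Finsupp.weight w' ν + j * u₁ := by
      rw [Finsupp.weight_apply, Finsupp.weight_apply, Finsupp.sum_mapDomain_index (by simp) (by intros; simp [add_mul])]
      have : ∀ p, w' (e₁ p) = w' p + u₁ := he₁
      simp only [this, smul_add]
      rw [Finsupp.sum_add]
      congr 1
      rw [← a2, Finsupp.weight_apply, Finsupp.sum, Finsupp.sum]
      simp [Finset.sum_mul]
    rw [a3, a1]
    have : w₀' i = w₀' (e₀ i) + u₀ := he₀ i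
    rw [this]; ring
end
end CE

namespace CE
open MvPolynomial

section
variable {Ω ι : Type} [Field Ω] [Fintype ι] [DecidableEq ι]

/-- diagonal twist -/
noncomputable def twDiag (a b : ι → Ω) (ha : ∀ i, a i ≠ 0) (hb : ∀ i, b i ≠ 0) : Tw Ω ι where
  s := 1
  A := Matrix.diagonal a
  A' := Matrix.diagonal fun i => (a i)⁻¹
  B := Matrix.diagonal b
  B' := Matrix.diagonal fun i => (b i)⁻¹
  hA := by
    rw [Matrix.diagonal_mul_diagonal, ← Matrix.diagonal_one]; congr 1; funext i; exact mul_inv_cancel₀ (ha i)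
  hB := by
    rw [Matrix.diagonal_mul_diagonal, ← Matrix.diagonal_one]; congr 1; funext i; exact mul_inv_cancel₀ (hb i)

lemma twDiag_T (a b : ι → Ω) (ha : ∀ i, a i ≠ 0) (hb : ∀ i, b i ≠ 0) (w : ι × ι → ℕ) (s : Ω)
    (h : ∀ i l, a i * b l = s ^ w (i, l)) (v : ι → MvPolynomial (ι × ι) Ω) (i : ι) :
    (twDiag a b ha hb).T v i = (a i)⁻¹ • rescale w s (v i) := by
  have hφ : (twDiag a b ha hb).φ = rescale w s := by
    apply MvPolynomial.ringHom_ext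
    · intro r
      rw [Tw.φ, phi_C, rescale]
      simp [twDiag]
    · rintro ⟨p1, p2⟩
      have h1 : ∀ a : ι → Ω, mC (Matrix.diagonal a) = Matrix.diagonal fun i => (C (a i) : MvPolynomial (ι × ι) Ω) := by
        intro a
        rw [mC, Matrix.diagonal_map (map_zero _)]
      rw [Tw.φ, phi_X, rescale, coe_eval₂Hom, eval₂_X, ← h]
      simp only [twDiag, h1, Matrix.mul_diagonal, Matrix.diagonal_mul, C_mul]
      simp only [gm, Matrix.of_apply]
      ring
  rw [Tw.T_apply, hφ, Finset.sum_eq_single i]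
  · rw [smul_eq_C_mul]; simp [twDiag]
  · intro l _ hl
    simp [twDiag, Matrix.diagonal_apply_ne _ hl.symm]
  · simp

/-- permutation matrix -/
def pM (Ω : Type) [Field Ω] (π : Equiv.Perm ι) : Matrix ι ι Ω := Matrix.of fun i l => if π i = l then 1 else 0

lemma pM_mul (π : Equiv.Perm ι) (M : Matrix ι ι Ω) (i l : ι) : (pM Ω π * M) i l = M (π i) l := by
  simp [pM, Matrix.mul_apply]

lemma mul_pM (π : Equiv.Perm ι) (M : Matrix ι ι Ω) (i l : ι) : (M * pM Ω π) i l = M i (π.symm l) := by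
  simp only [pM, Matrix.mul_apply, Matrix.of_apply]
  rw [Finset.sum_eq_single (π.symm l)]
  · simp
  · intro b _ hb
    rw [if_neg, mul_zero]
    rintro rfl; simp at hb
  · simp

lemma pM_inv (π : Equiv.Perm ι) : pM Ω π * pM Ω π.symm = 1 := by
  ext i l
  rw [pM_mul]; simp [pM, Matrix.one_apply]

/-- permutation twist -/
noncomputable def twPerm (Ω : Type) [Field Ω] (π₁ π₂ : Equiv.Perm ι) : Tw Ω ι where
  s := 1
  A := pM Ω π₁
  A' := pM Ω π₁.symm
  B := pM Ω π₂.symm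
  B' := pM Ω π₂
  hA := pM_inv _
  hB := by simpa using pM_inv (Ω := Ω) π₂.symm

lemma twPerm_T (π₁ π₂ : Equiv.Perm ι) (v : ι → MvPolynomial (ι × ι) Ω) (i : ι) :
    (twPerm Ω π₁ π₂).T v i = rename (π₁.prodCongr π₂) (v (π₁.symm i)) := by
  have hφ : (twPerm Ω π₁ π₂).φ = (rename (π₁.prodCongr π₂) : MvPolynomial (ι × ι) Ω →ₐ[Ω] _).toRingHom := by
    apply MvPolynomial.ringHom_ext
    · intro r
      rw [Tw.φ, phi_C]
      simp [twPerm]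
    · rintro ⟨p1, p2⟩
      rw [Tw.φ, phi_X]
      simp only [twPerm, Matrix.mul_apply, mC, Matrix.map_apply, pM, Matrix.of_apply, gm]
      rw [Finset.sum_eq_single (π₂ p2), Finset.sum_eq_single (π₁ p1)]
      · simp
      · intro b _ hb; simp [hb.symm]
      · simp
      · intro b _ hb
        rw [if_neg, map_zero, mul_zero]
        rintro rfl; simp at hb
      · simp
  rw [Tw.T_apply, hφ, Finset.sum_eq_single (π₁.symm i)]
  · simp [twPerm, pM]
  · intro l _ hl
    simp [twPerm, pM, hl.symm]
  · simp

lemma comm_diag (R : Matrix ι ι Ω) (a : ι → Ω) (h : ∀ i l, R i l ≠ 0 → a i = a l) :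
    R * Matrix.diagonal a = Matrix.diagonal a * R := by
  ext i l
  rw [Matrix.mul_diagonal, Matrix.diagonal_mul, mul_comm]
  by_cases h0 : R i l = 0
  · simp [h0]
  · rw [h i l h0]

lemma comm_pM (R : Matrix ι ι Ω) (π : Equiv.Perm ι) (h : ∀ i l, R (π i) (π l) = R i l) :
    R * pM Ω π = pM Ω π * R := by
  ext i l
  rw [mul_pM, pM_mul, ← h]; simp

end

lemma exists_shift (n q : ℕ) [NeZero n] (h : q ∣ n) :
    ∃ π : Equiv.Perm (Fin n), ∀ i, ((π i : ℕ) : ZMod q) = (i : ℕ) + 1 := by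
  refine ⟨Equiv.addRight (Fin.ofNat n 1), fun i => ?_⟩
  have : ((Equiv.addRight (Fin.ofNat n 1) i : Fin n) : ℕ) = ((i : ℕ) + 1) % n := by
    simp [Fin.val_add]
  rw [this]
  have h2 : (((i : ℕ) + 1 : ℕ) : ZMod q) = ((((i : ℕ) + 1) % n : ℕ) : ZMod q) := by
    rw [ZMod.natCast_eq_natCast_iff]
    exact ((Nat.mod_modEq _ n).of_dvd h).symm
  rw [← h2]; push_cast; rfl

lemma isUnit_zmod {p : ℕ} (hp : p.Prime) (v : ℕ) (m : ℤ) (h : ¬ (p : ℤ) ∣ m) : IsUnit (m : ZMod (p ^ v)) := by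
  rw [ZMod.coe_int_isUnit_iff_isCoprime]
  push_cast
  exact ((Nat.prime_iff_prime_int.mp hp).coprime_iff_not_dvd.mpr h).pow_left

end CE

namespace CE
open MvPolynomial
open scoped Kronecker

lemma kron_map {a b c d R S : Type*} [CommRing R] [CommRing S] (f : R →+* S) (M : Matrix a b R) (N : Matrix c d R) :
    (M ⊗ₖ N).map f = M.map f ⊗ₖ N.map f := by
  ext ⟨i, i'⟩ ⟨l, l'⟩; simp

/-- first representation -/
noncomputable def rep₁ {k K D L Ω : Type} [Field k] [Field K] [Field L] [Field Ω] [DivisionRing D] [Algebra k K] [Algebra K D]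
    [Algebra k D] [IsScalarTower k K D] [Algebra K L] [Algebra k Ω] {n : ℕ} (m : ℕ)
    (ρ : D →ₐ[K] Matrix (Fin n) (Fin n) L) (j : L →+* Ω)
    (hj : ∀ a : k, j (algebraMap K L (algebraMap k K a)) = algebraMap k Ω a) :
    D →ₐ[k] Matrix (Fin n × Fin m) (Fin n × Fin m) Ω where
  toFun x := (ρ x).map j ⊗ₖ 1
  map_one' := by simp
  map_mul' x y := by
    rw [map_mul, Matrix.map_mul, ← Matrix.mul_kronecker_mul, Matrix.one_mul]
  map_zero' := by simp
  map_add' x y := by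
    rw [map_add, Matrix.map_add _ (map_add _), Matrix.add_kronecker]
  commutes' a := by
    rw [IsScalarTower.algebraMap_apply k K D, AlgHom.commutes]
    ext ⟨i, i'⟩ ⟨l, l'⟩
    simp only [Matrix.kroneckerMap_apply, Matrix.map_apply, Matrix.algebraMap_matrix_apply, Matrix.one_apply, Prod.mk.injEq]
    by_cases h1 : i = l <;> by_cases h2 : i' = l' <;> simp [h1, h2, hj]

/-- second representation -/
noncomputable def rep₂ {k K D L Ω : Type} [Field k] [Field K] [Field L] [Field Ω] [DivisionRing D] [Algebra k K] [Algebra K D]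
    [Algebra k D] [IsScalarTower k K D] [Algebra K L] [Algebra k Ω] {n : ℕ} (m : ℕ)
    (ρ : D →ₐ[K] Matrix (Fin n) (Fin n) L) (j : L →+* Ω)
    (hj : ∀ a : k, j (algebraMap K L (algebraMap k K a)) = algebraMap k Ω a) :
    D →ₐ[k] Matrix (Fin m × Fin n) (Fin m × Fin n) Ω where
  toFun x := 1 ⊗ₖ (ρ x).map j
  map_one' := by simp
  map_mul' x y := by
    rw [map_mul, Matrix.map_mul, ← Matrix.mul_kronecker_mul, Matrix.one_mul]
  map_zero' := by simp
  map_add' x y := by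
    rw [map_add, Matrix.map_add _ (map_add _), Matrix.kronecker_add]
  commutes' a := by
    rw [IsScalarTower.algebraMap_apply k K D, AlgHom.commutes]
    ext ⟨i, i'⟩ ⟨l, l'⟩
    simp only [Matrix.kroneckerMap_apply, Matrix.map_apply, Matrix.algebraMap_matrix_apply, Matrix.one_apply, Prod.mk.injEq]
    by_cases h1 : i = l <;> by_cases h2 : i' = l' <;> simp [h1, h2, hj]

lemma kr1_ne {n m : ℕ} {Ω : Type} [Field Ω] (M : Matrix (Fin n) (Fin n) Ω) (i l : Fin n × Fin m)
    (h : (M ⊗ₖ (1 : Matrix (Fin m) (Fin m) Ω)) i l ≠ 0) : i.2 = l.2 := by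
  by_contra h2
  apply h
  simp [Matrix.kroneckerMap_apply, h2]

lemma kr2_ne {n m : ℕ} {Ω : Type} [Field Ω] (M : Matrix (Fin n) (Fin n) Ω) (i l : Fin m × Fin n)
    (h : ((1 : Matrix (Fin m) (Fin m) Ω) ⊗ₖ M) i l ≠ 0) : i.1 = l.1 := by
  by_contra h2
  apply h
  simp [Matrix.kroneckerMap_apply, h2]

lemma kr1_perm {n m : ℕ} {Ω : Type} [Field Ω] (M : Matrix (Fin n) (Fin n) Ω) (π : Equiv.Perm (Fin m)) (i l : Fin n × Fin m) :
    (M ⊗ₖ (1 : Matrix (Fin m) (Fin m) Ω)) ((Equiv.refl _).prodCongr π i) ((Equiv.refl _).prodCongr π l) =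
      (M ⊗ₖ (1 : Matrix (Fin m) (Fin m) Ω)) i l := by
  simp [Matrix.kroneckerMap_apply, Matrix.one_apply]

lemma kr2_perm {n m : ℕ} {Ω : Type} [Field Ω] (M : Matrix (Fin n) (Fin n) Ω) (π : Equiv.Perm (Fin m)) (i l : Fin m × Fin n) :
    ((1 : Matrix (Fin m) (Fin m) Ω) ⊗ₖ M) (π.prodCongr (Equiv.refl _) i) (π.prodCongr (Equiv.refl _) l) =
      ((1 : Matrix (Fin m) (Fin m) Ω) ⊗ₖ M) i l := by
  simp [Matrix.kroneckerMap_apply, Matrix.one_apply]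

end CE

namespace CE
open MvPolynomial
open scoped Kronecker

section
variable {K D Ω : Type} [Field K] [DivisionRing D] [Algebra K D] [Field Ω] (S : SplitData K D) (j : S.L →+* Ω)

lemma H_inv (σ : Gal(S.L/K)) : S.H σ * (S.H σ)⁻¹ = 1 := Matrix.mul_nonsing_inv _ (S.hu σ)
lemma H_inv' (σ : Gal(S.L/K)) : (S.H σ)⁻¹ * S.H σ = 1 := Matrix.nonsing_inv_mul _ (S.hu σ)

/-- twist, first side -/
noncomputable def tw1 (m : ℕ) (s : Gal(S.L/K) → (Ω ≃+* Ω)) (σ : Gal(S.L/K)) : Tw Ω (Fin S.n × Fin m) where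
  s := s σ
  A := ((S.H σ)⁻¹).map j ⊗ₖ 1
  A' := (S.H σ).map j ⊗ₖ 1
  B := 1
  B' := 1
  hA := by
    rw [← Matrix.mul_kronecker_mul, Matrix.one_mul, ← Matrix.map_mul, H_inv']; simp
  hB := Matrix.one_mul _

/-- twist, second side -/
noncomputable def tw2 (m : ℕ) (s : Gal(S.L/K) → (Ω ≃+* Ω)) (σ : Gal(S.L/K)) : Tw Ω (Fin m × Fin S.n) where
  s := s σ
  A := 1
  A' := 1
  B := 1 ⊗ₖ (S.H σ).map j
  B' := 1 ⊗ₖ ((S.H σ)⁻¹).map j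
  hA := Matrix.one_mul _
  hB := by
    rw [← Matrix.mul_kronecker_mul, Matrix.one_mul, ← Matrix.map_mul, H_inv]; simp

variable (s : Gal(S.L/K) →* (Ω ≃+* Ω))

lemma map_js (hs : ∀ σ x, s σ (j x) = j (σ x)) (M : Matrix (Fin S.n) (Fin S.n) S.L) (σ : Gal(S.L/K)) : (M.map j).map (s σ) = (M.map σ).map j := by
  ext a b; simp [hs]

lemma rel1 (hs : ∀ σ x, s σ (j x) = j (σ x)) (σ : Gal(S.L/K)) (x : D) : ((S.ρ x).map j).map (s σ) * ((S.H σ)⁻¹).map j = ((S.H σ)⁻¹).map j * (S.ρ x).map j := by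
  rw [map_js S j s hs, ← Matrix.map_mul, ← Matrix.map_mul]
  congr 1
  calc _ = (S.H σ)⁻¹ * (S.H σ * (S.ρ x).map σ) * (S.H σ)⁻¹ := by
        rw [← Matrix.mul_assoc, H_inv', Matrix.one_mul]
    _ = _ := by rw [S.hH, Matrix.mul_assoc, Matrix.mul_assoc, H_inv, Matrix.mul_one]

lemma rel2 (hs : ∀ σ x, s σ (j x) = j (σ x)) (σ : Gal(S.L/K)) (x : D) : (S.H σ).map j * ((S.ρ x).map j).map (s σ) = (S.ρ x).map j * (S.H σ).map j := by
  rw [map_js S j s hs, ← Matrix.map_mul, ← Matrix.map_mul, S.hH]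

lemma rel3 (hs : ∀ σ x, s σ (j x) = j (σ x)) (σ τ : Gal(S.L/K)) : (S.H σ).map j * ((S.H τ).map j).map (s σ) = j (S.c σ τ) • (S.H (σ * τ)).map j := by
  rw [map_js S j s hs, ← Matrix.map_mul, S.hHm]
  ext a b; simp

lemma rel4 (hs : ∀ σ x, s σ (j x) = j (σ x)) (σ τ : Gal(S.L/K)) : (((S.H τ)⁻¹).map j).map (s σ) * ((S.H σ)⁻¹).map j =
    (j (S.c σ τ))⁻¹ • ((S.H (σ * τ))⁻¹).map j := by
  have hc : j (S.c σ τ) ≠ 0 := by simpa using S.hc σ τ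
  have h1 : (S.H (σ * τ)).map j * ((S.H (σ * τ))⁻¹).map j = 1 := by rw [← Matrix.map_mul, H_inv]; simp
  have h2 : ((S.H σ).map j * ((S.H τ).map j).map (s σ)) * ((((S.H τ)⁻¹).map j).map (s σ) * ((S.H σ)⁻¹).map j) = 1 := by
    have e1 : ((S.H τ).map j).map (s σ) * (((S.H τ)⁻¹).map j).map (s σ) = 1 := by
      have := congrArg (fun M => (M.map j).map (s σ : Ω →+* Ω)) (H_inv S τ)
      simpa [Matrix.map_mul] using this
    have e2 : (S.H σ).map j * ((S.H σ)⁻¹).map j = 1 := by rw [← Matrix.map_mul, H_inv]; simp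
    rw [Matrix.mul_assoc, ← Matrix.mul_assoc (((S.H τ).map j).map (s σ)), e1, Matrix.one_mul, e2]
  rw [rel3 S j s hs] at h2
  have h3 : ((j (S.c σ τ)) • (S.H (σ * τ)).map j) * ((j (S.c σ τ))⁻¹ • ((S.H (σ * τ))⁻¹).map j) = 1 := by
    rw [Matrix.smul_mul, Matrix.mul_smul, smul_smul, mul_inv_cancel₀ hc, one_smul, h1]
  calc _ = (((j (S.c σ τ))⁻¹ • ((S.H (σ * τ))⁻¹).map j) * ((j (S.c σ τ)) • (S.H (σ * τ)).map j)) * _ := by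
        rw [mul_eq_one_comm.mp h3, Matrix.one_mul]
    _ = _ := by rw [Matrix.mul_assoc, h2, Matrix.mul_one]
end

theorem final_core (k : Type) [Field k] (K₁ K₂ : Type) [Field K₁] [Field K₂] [Algebra k K₁] [Algebra k K₂]
    (D₁ D₂ : Type) [DivisionRing D₁] [DivisionRing D₂] [Algebra K₁ D₁] [Algebra K₂ D₂]
    [Algebra k D₁] [Algebra k D₂] [IsScalarTower k K₁ D₁] [IsScalarTower k K₂ D₂]
    (S₁ : SplitData K₁ D₁) (S₂ : SplitData K₂ D₂)
    (Ω : Type) [Field Ω] [Algebra k Ω] [Infinite Ω] (j₁ : S₁.L →+* Ω) (j₂ : S₂.L →+* Ω)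
    (hj₁ : ∀ a : k, j₁ (algebraMap K₁ S₁.L (algebraMap k K₁ a)) = algebraMap k Ω a)
    (hj₂ : ∀ a : k, j₂ (algebraMap K₂ S₂.L (algebraMap k K₂ a)) = algebraMap k Ω a)
    (s₁ : Gal(S₁.L/K₁) →* (Ω ≃+* Ω)) (s₂ : Gal(S₂.L/K₂) →* (Ω ≃+* Ω))
    (h₁₁ : ∀ σ x, s₁ σ (j₁ x) = j₁ (σ x)) (h₁₂ : ∀ σ x, s₁ σ (j₂ x) = j₂ x)
    (h₂₁ : ∀ σ x, s₂ σ (j₁ x) = j₁ x) (h₂₂ : ∀ σ x, s₂ σ (j₂ x) = j₂ (σ x))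
    (hd₁ : ∀ t d, HasRep s₁ (fun σ τ => j₁ (S₁.c σ τ)) t d → HasRep (galS K₁ S₁.L) S₁.c t d)
    (hd₂ : ∀ t d, HasRep s₂ (fun σ τ => j₂ (S₂.c σ τ)) t d → HasRep (galS K₂ S₂.L) S₂.c t d) :
    ∃ (E : Type) (_ : DivisionRing E) (_ : Algebra k E), FiniteDimensional (Subring.center E) E ∧
      Nonempty (D₁ →ₐ[k] E) ∧ Nonempty (D₂ →ₐ[k] E) := by
  classical
  have : NeZero S₁.n := ⟨S₁.hn⟩
  have : NeZero S₂.n := ⟨S₂.hn⟩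
  let r₁ := rep₁ (k := k) S₂.n S₁.ρ j₁ hj₁
  let r₂ := rep₂ (k := k) S₁.n S₂.ρ j₂ hj₂
  have hr₁ : ∀ x, r₁ x = (S₁.ρ x).map j₁ ⊗ₖ 1 := fun _ => rfl
  have hr₂ : ∀ x, r₂ x = 1 ⊗ₖ (S₂.ρ x).map j₂ := fun _ => rfl
  let 𝒯 : Set (Tw Ω (Fin S₁.n × Fin S₂.n)) := {α | (∀ a : k, α.s (algebraMap k Ω a) = algebraMap k Ω a) ∧
    (∀ x, (r₁ x).map α.s * α.A = α.A * r₁ x) ∧ (∀ y, α.B * (r₂ y).map α.s = r₂ y * α.B)}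
  have hone : ∀ M : Matrix (Fin S₁.n × Fin S₂.n) (Fin S₁.n × Fin S₂.n) Ω, M.map (1 : Ω ≃+* Ω) = M := by
    intro M; ext a b; rfl
  have hdiag : ∀ a b ha hb, (∀ i l : Fin S₁.n × Fin S₂.n, i.2 = l.2 → a i = a l) →
      (∀ i l : Fin S₁.n × Fin S₂.n, i.1 = l.1 → b i = b l) → twDiag (Ω := Ω) a b ha hb ∈ 𝒯 := by
    intro a b ha hb h1 h2
    refine ⟨fun _ => rfl, fun x => ?_, fun y => ?_⟩
    · change (r₁ x).map (1 : Ω ≃+* Ω) * Matrix.diagonal a = Matrix.diagonal a * r₁ x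
      rw [hone]
      exact comm_diag _ _ fun i l h => h1 i l (kr1_ne _ i l h)
    · change Matrix.diagonal b * (r₂ y).map (1 : Ω ≃+* Ω) = r₂ y * Matrix.diagonal b
      rw [hone]
      exact (comm_diag _ _ fun i l h => h2 i l (kr2_ne _ i l h)).symm
  have hperm : ∀ (π₁ : Equiv.Perm (Fin S₂.n)) (π₂ : Equiv.Perm (Fin S₁.n)),
      twPerm Ω ((Equiv.refl (Fin S₁.n)).prodCongr π₁) (π₂.prodCongr (Equiv.refl (Fin S₂.n))) ∈ 𝒯 := by
    intro π₁ π₂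
    refine ⟨fun _ => rfl, fun x => ?_, fun y => ?_⟩
    · change (r₁ x).map (1 : Ω ≃+* Ω) * pM Ω _ = pM Ω _ * r₁ x
      rw [hone]
      exact comm_pM _ _ fun i l => kr1_perm _ _ i l
    · change pM Ω _ * (r₂ y).map (1 : Ω ≃+* Ω) = r₂ y * pM Ω _
      rw [hone]
      exact (comm_pM _ _ fun i l => kr2_perm _ π₂.symm i l).symm
  have htw1 : ∀ σ, tw1 S₁ j₁ S₂.n s₁ σ ∈ 𝒯 := by
    intro σ
    refine ⟨fun a => ?_, fun x => ?_, fun y => ?_⟩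
    · change s₁ σ _ = _
      rw [← hj₁, h₁₁, AlgEquiv.commutes]
    · change (r₁ x).map (s₁ σ : Ω →+* Ω) * (((S₁.H σ)⁻¹).map j₁ ⊗ₖ 1) = (((S₁.H σ)⁻¹).map j₁ ⊗ₖ 1) * r₁ x
      rw [hr₁, kron_map, ← Matrix.mul_kronecker_mul, ← Matrix.mul_kronecker_mul, ← rel1 S₁ j₁ s₁ h₁₁]
      simp
    · change 1 * (r₂ y).map (s₁ σ : Ω →+* Ω) = r₂ y * 1
      rw [hr₂, kron_map, Matrix.one_mul, Matrix.mul_one]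
      congr 1
      · simp
      · ext a b; simp [h₁₂]
  have htw2 : ∀ σ, tw2 S₂ j₂ S₁.n s₂ σ ∈ 𝒯 := by
    intro σ
    refine ⟨fun a => ?_, fun x => ?_, fun y => ?_⟩
    · change s₂ σ _ = _
      rw [← hj₂, h₂₂, AlgEquiv.commutes]
    · change (r₁ x).map (s₂ σ : Ω →+* Ω) * 1 = 1 * r₁ x
      rw [hr₁, kron_map, Matrix.one_mul, Matrix.mul_one]
      congr 1
      · ext a b; simp [h₂₁]
      · simp
    · change (1 ⊗ₖ (S₂.H σ).map j₂) * (r₂ y).map (s₂ σ : Ω →+* Ω) = r₂ y * (1 ⊗ₖ (S₂.H σ).map j₂)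
      rw [hr₂, kron_map, ← Matrix.mul_kronecker_mul, ← Matrix.mul_kronecker_mul, ← rel2 S₂ j₂ s₂ h₂₂]
      simp
  refine E_exists k 𝒯 (fun α hα => hα.1) ?_ D₁ D₂ r₁ r₂ (fun α hα => hα.2.1) (fun α hα => hα.2.2)
  intro P hP
  have hT : ∀ α ∈ 𝒯, ∀ v ∈ Pp P, α.T v ∈ Pp P := by
    intro α hα v hv
    change (fun i => algebraMap _ _ (α.T v i)) ∈ P
    rw [α.emb_T]
    exact hP α hα _ hv
  refine hilbert_dvd (Ω := Ω) (τ := (Fin S₁.n × Fin S₂.n) × (Fin S₁.n × Fin S₂.n)) P ?_ _ ?_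
  · intro v hv j
    have := grad_mem (Pp P) (fun _ => 0) (fun _ => 1) v (by
      intro s hs
      have h := hT _ (hdiag (fun _ => 1) (fun _ => s) (fun _ => one_ne_zero) (fun _ => hs) (fun _ _ _ => rfl) (fun _ _ _ => rfl)) v hv
      convert h using 1
      funext i
      rw [twDiag_T _ _ _ _ (fun _ => 1) s (by simp)]
      simp) (fun n => n = j)
    have h2 : (fun i => homogeneousComponent j (v i)) ∈ Pp P := by
      convert this using 1
      funext i
      rw [homogeneousComponent, weightedHomogeneousComponent_apply]
      refine Finset.sum_congr (Finset.filter_congr fun μ _ => ?_) fun _ _ => rfl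
      rw [zero_add]; rfl
    exact h2
  intro j
  rw [Nat.dvd_iff_prime_pow_dvd_dvd]
  intro p e hp he
  have hcard : Fintype.card (Fin S₁.n × Fin S₂.n) = S₁.n * S₂.n := by simp
  rw [hcard, hp.pow_dvd_iff_le_factorization (Nat.mul_ne_zero S₁.hn S₂.hn), Nat.factorization_mul S₁.hn S₂.hn,
    Finsupp.add_apply] at he
  refine (pow_dvd_pow p he).trans ?_
  rw [pow_add]
  have : NeZero (p ^ S₁.n.factorization p) := ⟨pow_ne_zero _ hp.ne_zero⟩
  have : NeZero (p ^ S₂.n.factorization p) := ⟨pow_ne_zero _ hp.ne_zero⟩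
  by_cases hpj : (p : ℤ) ∣ j
  · have hpj' : ¬ (p : ℤ) ∣ 1 - j := fun h => by
      have h1 := dvd_add h hpj
      rw [sub_add_cancel] at h1
      exact hp.one_lt.ne' (by exact_mod_cast Int.eq_one_of_dvd_one (by positivity) h1)
    obtain ⟨π, hπ⟩ := exists_shift S₂.n (p ^ S₂.n.factorization p) (Nat.ordProj_dvd _ _)
    obtain ⟨d, hd, hfin⟩ := side P j (p ^ S₂.n.factorization p) (fun i => S₂.n - (i.2 : ℕ)) (fun q => (q.1.2 : ℕ))
      (by
        intro s hs v hv
        have h := hT _ (hdiag (fun i => s ^ (i.2 : ℕ)) (fun _ => 1) (fun _ => pow_ne_zero _ hs) (fun _ => one_ne_zero)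
          (fun i l h => by simp only [h]) (fun _ _ _ => rfl)) v hv
        convert (Pp P).smul_mem (s ^ S₂.n) h using 1
        funext i
        rw [Pi.smul_apply, twDiag_T _ _ _ _ (fun q => (q.1.2 : ℕ)) s (by simp), smul_smul]
        congr 1
        rw [pow_sub₀ _ hs i.2.2.le])
      ((Equiv.refl (Fin S₁.n)).prodCongr π).symm
      (((Equiv.refl (Fin S₁.n)).prodCongr π).prodCongr ((Equiv.refl (Fin S₁.n)).prodCongr (Equiv.refl (Fin S₂.n))))
      (by
        intro v hv
        have h := hT _ (hperm π (Equiv.refl _)) v hv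
        convert h using 1
        funext i
        rw [twPerm_T])
      (-1) 1
      (by
        rintro ⟨i, l⟩
        have h1 := hπ (π.symm l)
        rw [Equiv.apply_symm_apply] at h1
        simp only [Equiv.prodCongr_symm, Equiv.prodCongr_apply, Prod.map_apply]
        rw [Nat.cast_sub l.2.le, Nat.cast_sub (π.symm l).2.le, h1]
        ring)
      (by
        rintro ⟨⟨i, l⟩, q⟩
        exact hπ l)
      (by
        have := isUnit_zmod hp (S₂.n.factorization p) (1 - j) hpj'
        rw [← IsUnit.neg_iff]
        convert this using 1
        push_cast; ring)
      (tw1 S₁ j₁ S₂.n s₁) (fun σ v hv => hT _ (htw1 σ) v hv)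
      (by
        intro σ i i' h
        have := kr1_ne _ i i' h
        simp only [this])
      (by
        intro σ i i' l' l h h'
        have := kr1_ne _ i i' h
        simp only [this])
      s₁ (fun _ => rfl) (fun σ τ => j₁ (S₁.c σ τ)) (fun σ τ => by simpa using S₁.hc σ τ)
      ⟨by simp [tw1, S₁.hH1], by simp [tw1, S₁.hH1], rfl⟩ 1 (-1) 0
      (by
        intro σ τ
        change ((S₁.H σ).map j₁ ⊗ₖ 1) * ((S₁.H τ).map j₁ ⊗ₖ 1).map (s₁ σ : Ω →+* Ω) = _ • ((S₁.H (σ * τ)).map j₁ ⊗ₖ 1)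
        rw [kron_map, ← Matrix.mul_kronecker_mul]
        erw [rel3 S₁ j₁ s₁ h₁₁]
        rw [zpow_one, Matrix.smul_kronecker]
        simp)
      (by
        intro σ τ
        change (((S₁.H τ)⁻¹).map j₁ ⊗ₖ 1).map (s₁ σ : Ω →+* Ω) * (((S₁.H σ)⁻¹).map j₁ ⊗ₖ 1) = _ • (((S₁.H (σ * τ))⁻¹).map j₁ ⊗ₖ 1)
        rw [kron_map, ← Matrix.mul_kronecker_mul]
        erw [rel4 S₁ j₁ s₁ h₁₁]
        rw [zpow_neg_one, Matrix.smul_kronecker]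
        simp)
      (by
        intro σ τ
        simp [tw1])
    rw [hfin, mul_comm]
    refine mul_dvd_mul_left _ (S₁.dvd hp (t := 1 - j) hpj' (hd₁ _ _ ?_))
    convert hd using 1
    ring
  · obtain ⟨π, hπ⟩ := exists_shift S₁.n (p ^ S₁.n.factorization p) (Nat.ordProj_dvd _ _)
    obtain ⟨d, hd, hfin⟩ := side P j (p ^ S₁.n.factorization p) (fun i => 0) (fun q => (q.2.1 : ℕ))
      (by
        intro s hs v hv
        have h := hT _ (hdiag (fun _ => 1) (fun i => s ^ (i.1 : ℕ)) (fun _ => one_ne_zero) (fun _ => pow_ne_zero _ hs)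
          (fun _ _ _ => rfl) (fun i l h => by simp only [h])) v hv
        convert h using 1
        funext i
        rw [twDiag_T _ _ _ _ (fun q => (q.2.1 : ℕ)) s (by simp)]
        simp)
      (Equiv.refl _)
      (((Equiv.refl (Fin S₁.n)).prodCongr (Equiv.refl (Fin S₂.n))).prodCongr (π.prodCongr (Equiv.refl (Fin S₂.n))))
      (by
        intro v hv
        have h := hT _ (hperm (Equiv.refl _) π) v hv
        convert h using 1
        funext i
        rw [twPerm_T]
        rfl)
      0 1
      (by intro i; simp)
      (by
        rintro ⟨q, ⟨i, l⟩⟩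
        exact hπ i)
      (by
        have := isUnit_zmod hp (S₁.n.factorization p) j hpj
        convert this using 1
        push_cast; ring)
      (tw2 S₂ j₂ S₁.n s₂) (fun σ v hv => hT _ (htw2 σ) v hv)
      (fun _ _ _ _ => rfl)
      (by
        intro σ i i' l' l h h'
        have := kr2_ne _ l' l h'
        simp only [this])
      s₂ (fun _ => rfl) (fun σ τ => j₂ (S₂.c σ τ)) (fun σ τ => by simpa using S₂.hc σ τ)
      ⟨rfl, rfl, by simp [tw2, S₂.hH1]⟩ 0 0 1
      (by
        intro σ τ
        simp [tw2])
      (by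
        intro σ τ
        simp [tw2])
      (by
        intro σ τ
        change (1 ⊗ₖ (S₂.H σ).map j₂) * (1 ⊗ₖ (S₂.H τ).map j₂).map (s₂ σ : Ω →+* Ω) = _ • (1 ⊗ₖ (S₂.H (σ * τ)).map j₂)
        rw [kron_map, ← Matrix.mul_kronecker_mul]
        erw [rel3 S₂ j₂ s₂ h₂₂]
        rw [zpow_one, Matrix.kronecker_smul]
        simp)
    rw [hfin]
    refine mul_dvd_mul_left _ (S₂.dvd hp (t := j) hpj (hd₂ _ _ ?_))
    convert hd using 1
    ring
end CE

namespace CE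
open TensorProduct

section
variable {k : Type} [Field k] 
  {K L : Type} [Field K] [Field L] [Algebra K L] [Algebra k K] [Algebra k L] [IsScalarTower k K L]

/-- Galois group acting on the left tensor factor. -/
noncomputable def actHom1 (M : Type) [Field M] [Algebra k M] :
    Gal(L/K) →* (L ⊗[k] M ≃+* L ⊗[k] M) where
  toFun σ := (Algebra.TensorProduct.congr (σ.restrictScalars k) (AlgEquiv.refl (R := k) (A₁ := M))).toRingEquiv
  map_one' := by
    ext x
    induction x with
    | zero => simp
    | tmul a b => rfl
    | add a b ha hb => rw [map_add, ha, hb, map_add]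
  map_mul' σ τ := by
    ext x
    induction x with
    | zero => simp
    | tmul a b => rfl
    | add a b ha hb => rw [map_add, ha, hb, map_add]

/-- Galois group acting on the right tensor factor. -/
noncomputable def actHom2 (M : Type) [Field M] [Algebra k M] :
    Gal(L/K) →* (M ⊗[k] L ≃+* M ⊗[k] L) where
  toFun σ := (Algebra.TensorProduct.congr (AlgEquiv.refl (R := k) (A₁ := M)) (σ.restrictScalars k)).toRingEquiv
  map_one' := by
    ext x
    induction x with
    | zero => simp
    | tmul a b => rfl
    | add a b ha hb => rw [map_add, ha, hb, map_add]
  map_mul' σ τ := by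
    ext x
    induction x with
    | zero => simp
    | tmul a b => rfl
    | add a b ha hb => rw [map_add, ha, hb, map_add]

lemma actHom1_tmul (M : Type) [Field M] [Algebra k M] (σ : Gal(L/K)) (x : L) (y : M) :
    actHom1 (k := k) M σ (x ⊗ₜ y) = σ x ⊗ₜ y := rfl

lemma actHom2_tmul (M : Type) [Field M] [Algebra k M] (σ : Gal(L/K)) (x : L) (y : M) :
    actHom2 (k := k) M σ (y ⊗ₜ x) = y ⊗ₜ σ x := rfl

lemma actHom2_comm (M : Type) [Field M] [Algebra k M] (σ : Gal(L/K)) (x : L ⊗[k] M) :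
    actHom2 (k := k) M σ (Algebra.TensorProduct.comm k L M x) =
      Algebra.TensorProduct.comm k L M (act1 M (σ.restrictScalars k) x) := by
  induction x with
  | zero => simp
  | tmul a b => rfl
  | add a b ha hb => simp only [map_add, ha, hb]

end

theorem exists_omega (k : Type) [Field k] [IsAlgClosed k]
    (K₁ K₂ L₁ L₂ : Type) [Field K₁] [Field K₂] [Field L₁] [Field L₂]
    [Algebra k K₁] [Algebra k K₂] [Algebra K₁ L₁] [Algebra K₂ L₂]
    [Algebra k L₁] [Algebra k L₂] [IsScalarTower k K₁ L₁] [IsScalarTower k K₂ L₂]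
    [FiniteDimensional K₁ L₁] [FiniteDimensional K₂ L₂] :
    ∃ (Ω : Type) (_ : Field Ω) (_ : Algebra k Ω) (_ : Infinite Ω) (j₁ : L₁ →+* Ω) (j₂ : L₂ →+* Ω)
      (s₁ : Gal(L₁/K₁) →* (Ω ≃+* Ω)) (s₂ : Gal(L₂/K₂) →* (Ω ≃+* Ω)),
      (∀ a : k, j₁ (algebraMap k L₁ a) = algebraMap k Ω a) ∧
      (∀ a : k, j₂ (algebraMap k L₂ a) = algebraMap k Ω a) ∧
      (∀ σ x, s₁ σ (j₁ x) = j₁ (σ x)) ∧ (∀ σ x, s₁ σ (j₂ x) = j₂ x) ∧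
      (∀ σ x, s₂ σ (j₁ x) = j₁ x) ∧ (∀ σ x, s₂ σ (j₂ x) = j₂ (σ x)) ∧
      (∀ (c : Gal(L₁/K₁) → Gal(L₁/K₁) → L₁) t d,
        HasRep s₁ (fun σ τ => j₁ (c σ τ)) t d → HasRep (galS K₁ L₁) c t d) ∧
      (∀ (c : Gal(L₂/K₂) → Gal(L₂/K₂) → L₂) t d,
        HasRep s₂ (fun σ τ => j₂ (c σ τ)) t d → HasRep (galS K₂ L₂) c t d) := by
  have hdom : IsDomain (L₁ ⊗[k] L₂) := tens_domain
  let Ω := FractionRing (L₁ ⊗[k] L₂)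
  let θ : L₁ ⊗[k] L₂ →+* Ω := algebraMap _ _
  have hθ : Function.Injective θ := IsFractionRing.injective _ _
  have hk : ∀ a : k, algebraMap k Ω a = θ (algebraMap k _ a) := fun a => IsScalarTower.algebraMap_apply k (L₁ ⊗[k] L₂) Ω a
  have : Infinite k := IsAlgClosed.instInfinite
  have hinf : Infinite Ω := Infinite.of_injective _ (algebraMap k Ω).injective
  let s₁ : Gal(L₁/K₁) →* (Ω ≃+* Ω) := (IsFractionRing.ringEquivOfRingEquivHom (L₁ ⊗[k] L₂) Ω).comp (actHom1 L₂)
  let s₂ : Gal(L₂/K₂) →* (Ω ≃+* Ω) := (IsFractionRing.ringEquivOfRingEquivHom (L₁ ⊗[k] L₂) Ω).comp (actHom2 L₁)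
  have hs₁ : ∀ σ x, s₁ σ (θ x) = θ (actHom1 L₂ σ x) := fun σ x => IsFractionRing.ringEquivOfRingEquiv_algebraMap _ _
  have hs₂ : ∀ σ x, s₂ σ (θ x) = θ (actHom2 L₁ σ x) := fun σ x => IsFractionRing.ringEquivOfRingEquiv_algebraMap _ _
  have hfrac : ∀ (ι : Type) [Finite ι] (f : ι → Ω), ∃ b ≠ 0, ∃ a : ι → L₁ ⊗[k] L₂, ∀ i, θ b * f i = θ (a i) := by
    intro ι _ f
    obtain ⟨b, hb⟩ := IsLocalization.exist_integer_multiples_of_finite (nonZeroDivisors (L₁ ⊗[k] L₂)) f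
    choose a ha using hb
    exact ⟨b, nonZeroDivisors.ne_zero b.2, a, fun i => by rw [← Algebra.smul_def]; exact (ha i).symm⟩
  refine ⟨Ω, inferInstance, inferInstance, hinf,
    θ.comp (Algebra.TensorProduct.includeLeft (R := k) (S := k) (A := L₁) (B := L₂)).toRingHom,
    θ.comp (Algebra.TensorProduct.includeRight (R := k) (A := L₁) (B := L₂)).toRingHom, s₁, s₂, ?_, ?_, ?_, ?_, ?_, ?_, ?_, ?_⟩
  · intro a
    rw [hk]; rfl
  · intro a
    rw [hk]
    exact congrArg θ ((Algebra.TensorProduct.includeRight (R := k) (A := L₁) (B := L₂)).commutes a)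
  · intro σ x
    exact hs₁ _ _
  · intro σ x
    refine (hs₁ _ _).trans (congrArg θ ?_)
    exact (actHom1_tmul L₂ σ (1 : L₁) x).trans (by rw [map_one]; rfl)
  · intro σ x
    refine (hs₂ _ _).trans (congrArg θ ?_)
    exact (actHom2_tmul L₁ σ (1 : L₂) x).trans (by rw [map_one]; rfl)
  · intro σ x
    exact hs₂ _ _
  · intro c t d h
    have : Finite Gal(L₁/K₁) := inferInstance
    exact HasRep.spec θ hθ hfrac s₁ (galS K₁ L₁) (fun σ => σ.restrictScalars k) (fun _ _ => rfl)
      (fun σ x => hs₁ σ x) c h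
  · intro c t d h
    have : Finite Gal(L₂/K₂) := inferInstance
    let e := Algebra.TensorProduct.comm k L₂ L₁
    refine HasRep.spec (θ.comp (e : L₂ ⊗[k] L₁ →+* L₁ ⊗[k] L₂)) (hθ.comp e.injective) ?_ s₂ (galS K₂ L₂)
      (fun σ => σ.restrictScalars k) (fun _ _ => rfl) ?_ c h
    · intro ι _ f
      obtain ⟨b, hb, a, ha⟩ := hfrac ι f
      refine ⟨e.symm b, by simpa using hb, fun i => e.symm (a i), fun i => ?_⟩
      simpa using ha i
    · intro σ x
      refine (hs₂ _ _).trans (congrArg θ ?_)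
      exact actHom2_comm L₁ σ x

end CE


theorem exists_common_embedding_over_algebraically_closed
    (k : Type) [Field k] [IsAlgClosed k]
    (K₁ K₂ : Type) [Field K₁] [Field K₂] [Algebra k K₁] [Algebra k K₂]
    (hfg₁ : (⊤ : IntermediateField k K₁).FG) (hfg₂ : (⊤ : IntermediateField k K₂).FG)
    (D₁ D₂ : Type) [DivisionRing D₁] [DivisionRing D₂]
    [Algebra K₁ D₁] [Algebra K₂ D₂]
    [FiniteDimensional K₁ D₁] [FiniteDimensional K₂ D₂]
    (hc₁ : Subalgebra.center K₁ D₁ = ⊥) (hc₂ : Subalgebra.center K₂ D₂ = ⊥)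
    [Algebra k D₁] [Algebra k D₂] [IsScalarTower k K₁ D₁] [IsScalarTower k K₂ D₂] :
    ∃ E : FinDimDivisionAlgebraOver k,
      (∃ f₁ : D₁ →ₐ[k] E.carrier, Function.Injective f₁) ∧
      (∃ f₂ : D₂ →ₐ[k] E.carrier, Function.Injective f₂) := by
  obtain ⟨S₁⟩ := CE.exists_splitData hc₁
  obtain ⟨S₂⟩ := CE.exists_splitData hc₂
  let _ : Algebra k S₁.L := ((algebraMap K₁ S₁.L).comp (algebraMap k K₁)).toAlgebra
  let _ : Algebra k S₂.L := ((algebraMap K₂ S₂.L).comp (algebraMap k K₂)).toAlgebra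
  have : IsScalarTower k K₁ S₁.L := IsScalarTower.of_algebraMap_eq (fun _ => rfl)
  have : IsScalarTower k K₂ S₂.L := IsScalarTower.of_algebraMap_eq (fun _ => rfl)
  obtain ⟨Ω, _, _, _, j₁, j₂, s₁, s₂, hj₁, hj₂, h₁₁, h₁₂, h₂₁, h₂₂, hd₁, hd₂⟩ :=
    CE.exists_omega k K₁ K₂ S₁.L S₂.L
  obtain ⟨E, iE, aE, hE, ⟨f₁⟩, ⟨f₂⟩⟩ := CE.final_core k K₁ K₂ D₁ D₂ S₁ S₂ Ω j₁ j₂ hj₁ hj₂ s₁ s₂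
    h₁₁ h₁₂ h₂₁ h₂₂ (hd₁ _) (hd₂ _)
  exact ⟨⟨E⟩, ⟨f₁, f₁.toRingHom.injective⟩, ⟨f₂, f₂.toRingHom.injective⟩⟩
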